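/- For each m ∈ ℕ there is a constant c(m) > 0 such that the following holds. Let d, m, n ∈ ℕ and let G_i ∈ 𝔉_d, i = 1,…,n, be of the form G_i = (1−p_i)·E + p_i·V_i with V_i ∈ 𝔉_d arbitrary and 0 ≤ p_i ≤ p = max_j p_j. Let G = ∏_{i=1}^n G_i and D = ∏_{i=1}^n e(G_i). Then ρ_m(G, D) ≤ c(m) · p. -/

import Mathlib

open MeasureTheory RealInnerProductSpace
open scoped ENNReal

noncomputable section

abbrev Euc (d : ℕ) := EuclideanSpace ℝ (Fin d)

/-- Convolution of two measures on an additive structure. -/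
def mconv {α : Type*} [MeasurableSpace α] [Add α] (μ ν : Measure α) : Measure α :=
  (μ.prod ν).map (fun p => p.1 + p.2)

/-- Convolution power `μ^{*n}`, with `μ^{*0}` the Dirac measure at `0`. -/
def convPow {α : Type*} [MeasurableSpace α] [AddMonoid α] (μ : Measure α) : ℕ → Measure α
  | 0 => Measure.dirac 0
  | n + 1 => mconv (convPow μ n) μ

/-- Convolution product of a finite family of measures. -/
def convProd {α : Type*} [MeasurableSpace α] [AddMonoid α] :
    ∀ {n : ℕ}, (Fin n → Measure α) → Measure α
  | 0, _ => Measure.dirac 0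
  | n + 1, G => mconv (convProd (fun i : Fin n => G i.castSucc)) (G (Fin.last n))

/-- The compound Poisson measure `e(a·μ) = e^{-a} ∑_k a^k μ^{*k}/k!`. -/
def cpois {α : Type*} [MeasurableSpace α] [AddMonoid α] (a : ℝ) (μ : Measure α) : Measure α :=
  Measure.sum fun k : ℕ =>
    (ENNReal.ofReal (Real.exp (-a) * a ^ k / k.factorial)) • convPow μ k

/-- A measure is symmetric if it is invariant under `x ↦ -x`. -/
def IsSymmMeasure {d : ℕ} (μ : Measure (Euc d)) : Prop :=
  μ.map (fun x => -x) = μ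

/-- Characteristic function of a measure on `ℝ^d`. -/
def charFn {d : ℕ} (μ : Measure (Euc d)) (t : Euc d) : ℂ :=
  ∫ x, Complex.exp ((⟪t, x⟫ : ℂ) * Complex.I) ∂μ

/-- Characteristic function of a measure on `ℝ`. -/
def charFn1 (μ : Measure ℝ) (t : ℝ) : ℂ :=
  ∫ x, Complex.exp (((t * x : ℝ) : ℂ) * Complex.I) ∂μ

/-- Convex polyhedra determined by the directions `t 1, …, t m`. -/
def polyhedraOn {d m : ℕ} (t : Fin m → Euc d) : Set (Set (Euc d)) :=
  {X | ∃ a b : Fin m → EReal,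
    X = {x | ∀ j, a j ≤ ((⟪x, t j⟫ : ℝ) : EReal) ∧ ((⟪x, t j⟫ : ℝ) : EReal) ≤ b j}}

/-- The collection `𝔛_m` of convex polyhedra determined by `m` pairs of parallel hyperplanes. -/
def polyhedra (d m : ℕ) : Set (Set (Euc d)) :=
  {X | ∃ t : Fin m → Euc d, X ∈ polyhedraOn t}

/-- The distance `ρ_m(G,H) = sup_{X ∈ 𝔛_m} |G{X} - H{X}|`. -/
def rhoPoly {d : ℕ} (m : ℕ) (G H : Measure (Euc d)) : ℝ :=
  ⨆ X ∈ polyhedra d m, |(G X).toReal - (H X).toReal|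

/-- The Lévy concentration function `Q(μ, b) = sup_x μ[x, x+b]`. -/
def concFn (μ : Measure ℝ) (b : ℝ) : ℝ :=
  ⨆ x : ℝ, (μ (Set.Icc x (x + b))).toReal

/-- `q(H, X) = inf_{‖t‖=1} Q(𝓛(⟨ξ,t⟩), λ{⟨x,t⟩ : x ∈ X})` where `H = 𝓛(ξ)`. -/
def qFn {d : ℕ} (H : Measure (Euc d)) (X : Set (Euc d)) : ℝ :=
  ⨅ t ∈ {t : Euc d | ‖t‖ = 1},
    concFn (H.map fun x => ⟪x, t⟫) (volume ((fun x => ⟪x, t⟫) '' X)).toReal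

/-- The uniform (Kolmogorov) distance on `ℝ^d`. -/
def kolmDist {d : ℕ} (G H : Measure (Euc d)) : ℝ :=
  ⨆ x : Euc d, |(G {y | ∀ i, y i ≤ x i}).toReal - (H {y | ∀ i, y i ≤ x i}).toReal|

/-- The uniform (Kolmogorov) distance on `ℝ`. -/
def kolmDist1 (G H : Measure ℝ) : ℝ :=
  ⨆ x : ℝ, |(G (Set.Iic x)).toReal - (H (Set.Iic x)).toReal|

end


set_option linter.all false

namespace S4

noncomputable section

section framework

variable {E : Type*} [AddCommGroup E] [MeasurableSpace E] [MeasurableAdd₂ E]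

/-- Bounded measurable real functions. -/
structure BM (E : Type*) [MeasurableSpace E] where
  /-- the underlying function -/
  val : E → ℝ
  meas : Measurable val
  bdd : ∃ C, ∀ x, |val x| ≤ C

@[ext]
theorem BM.ext {f g : BM E} (h : ∀ x, f.1 x = g.1 x) : f = g := by
  obtain ⟨f, _, _⟩ := f
  obtain ⟨g, _, _⟩ := g
  have : f = g := funext h
  subst this
  rfl

/-- constants -/
def BM.const (c : ℝ) : BM E := ⟨fun _ => c, measurable_const, |c|, fun _ => le_rfl⟩

instance : Zero (BM E) := ⟨BM.const 0⟩
instance : One (BM E) := ⟨BM.const 1⟩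
instance : Add (BM E) := ⟨fun f g => ⟨fun x => f.1 x + g.1 x, f.meas.add g.meas, by
  obtain ⟨C, hC⟩ := f.bdd
  obtain ⟨D, hD⟩ := g.bdd
  exact ⟨C + D, fun x => (abs_add_le _ _).trans (add_le_add (hC x) (hD x))⟩⟩⟩
instance : Mul (BM E) := ⟨fun f g => ⟨fun x => f.1 x * g.1 x, f.meas.mul g.meas, by
  obtain ⟨C, hC⟩ := f.bdd
  obtain ⟨D, hD⟩ := g.bdd
  refine ⟨C * D, fun x => ?_⟩
  rw [abs_mul]
  exact mul_le_mul (hC x) (hD x) (abs_nonneg _) ((abs_nonneg _).trans (hC x))⟩⟩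
instance : Neg (BM E) := ⟨fun f => ⟨fun x => - f.1 x, f.meas.neg, by
  obtain ⟨C, hC⟩ := f.bdd
  exact ⟨C, fun x => by rw [abs_neg]; exact hC x⟩⟩⟩
instance : SMul ℝ (BM E) := ⟨fun c f => ⟨fun x => c * f.1 x, f.meas.const_mul c, by
  obtain ⟨C, hC⟩ := f.bdd
  exact ⟨|c| * C, fun x => by rw [abs_mul]; exact mul_le_mul_of_nonneg_left (hC x) (abs_nonneg _)⟩⟩⟩

theorem BM.add_apply (f g : BM E) (x : E) : (f + g).1 x = f.1 x + g.1 x := rfl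
theorem BM.neg_apply (f : BM E) (x : E) : (-f).1 x = -f.1 x := rfl
theorem BM.mul_apply (f g : BM E) (x : E) : (f * g).1 x = f.1 x * g.1 x := rfl
theorem BM.smul_apply (c : ℝ) (f : BM E) (x : E) : (c • f).1 x = c * f.1 x := rfl
theorem BM.one_apply (x : E) : (1 : BM E).1 x = 1 := rfl
theorem BM.zero_apply (x : E) : (0 : BM E).1 x = 0 := rfl

instance : CommRing (BM E) where
  add_assoc f g h := BM.ext fun x => add_assoc _ _ _
  zero_add f := BM.ext fun x => zero_add _
  add_zero f := BM.ext fun x => add_zero _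
  add_comm f g := BM.ext fun x => add_comm _ _
  left_distrib f g h := BM.ext fun x => left_distrib _ _ _
  right_distrib f g h := BM.ext fun x => right_distrib _ _ _
  zero_mul f := BM.ext fun x => zero_mul _
  mul_zero f := BM.ext fun x => mul_zero _
  mul_assoc f g h := BM.ext fun x => mul_assoc _ _ _
  one_mul f := BM.ext fun x => one_mul _
  mul_one f := BM.ext fun x => mul_one _
  neg_add_cancel f := BM.ext fun x => neg_add_cancel _
  mul_comm f g := BM.ext fun x => mul_comm _ _
  nsmul := nsmulRec
  zsmul := zsmulRec

instance : Module ℝ (BM E) where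
  one_smul f := BM.ext fun x => one_mul _
  mul_smul c d f := BM.ext fun x => mul_assoc _ _ _
  smul_zero c := BM.ext fun x => mul_zero _
  smul_add c f g := BM.ext fun x => mul_add _ _ _
  add_smul c d f := BM.ext fun x => add_mul _ _ _
  zero_smul f := BM.ext fun x => zero_mul _

theorem BM.sub_apply (f g : BM E) (x : E) : (f - g).1 x = f.1 x - g.1 x := by
  rw [sub_eq_add_neg, sub_eq_add_neg]; rfl
theorem BM.sq_apply (f : BM E) (x : E) : (f ^ 2).1 x = f.1 x ^ 2 := by
  rw [sq, sq]; rfl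
theorem BM.const_apply (c : ℝ) (x : E) : (BM.const c : BM E).1 x = c := rfl

theorem BM.bdd_pos (g : BM E) : ∃ C, 0 < C ∧ ∀ x, |g.1 x| ≤ C := by
  obtain ⟨C, hC⟩ := g.bdd
  exact ⟨max C 1, by positivity, fun x => (hC x).trans (le_max_left _ _)⟩

theorem BM.integrable (g : BM E) (μ : Measure E) [IsFiniteMeasure μ] (x : E) :
    Integrable (fun y => g.1 (x + y)) μ := by
  obtain ⟨C, hC⟩ := g.bdd
  refine Integrable.of_bound (C := C) ?_ ?_
  · exact (g.meas.comp (measurable_const_add x)).aestronglyMeasurable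
  · exact Filter.Eventually.of_forall fun y => hC _

theorem BM.integrable' (g : BM E) (μ : Measure E)
    [IsFiniteMeasure μ] : Integrable g.1 μ := by
  obtain ⟨C, hC⟩ := g.bdd
  refine Integrable.of_bound (C := C) g.meas.aestronglyMeasurable ?_
  exact Filter.Eventually.of_forall fun y => hC _

/-- Convolution operator. -/
def opE (μ : Measure E) [IsFiniteMeasure μ] : Module.End ℝ (BM E) where
  toFun g := ⟨fun x => ∫ y, g.1 (x + y) ∂μ, by
      have : StronglyMeasurable (fun p : E × E => g.1 (p.1 + p.2)) :=
        (g.meas.comp measurable_add).stronglyMeasurable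
      exact this.integral_prod_right.measurable, by
      obtain ⟨C, hC⟩ := g.bdd
      refine ⟨C * μ.real Set.univ, fun x => ?_⟩
      have := norm_integral_le_of_norm_le_const (μ := μ) (f := fun y => g.1 (x + y)) (C := C)
        (Filter.Eventually.of_forall fun y => hC _)
      simpa using this⟩
  map_add' := by
    intro f g
    ext x
    exact integral_add (f.integrable μ x) (g.integrable μ x)
  map_smul' := by
    intro c g
    ext x
    exact integral_const_mul c _

theorem opE_comm (μ ν : Measure E) [IsFiniteMeasure μ] [IsFiniteMeasure ν] :
    opE μ * opE ν = opE ν * opE μ := by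
  ext g x
  show ∫ y, (∫ z, g.1 (x + y + z) ∂ν) ∂μ = ∫ z, (∫ y, g.1 (x + z + y) ∂μ) ∂ν
  rw [integral_integral_swap]
  · refine integral_congr_ae (Filter.Eventually.of_forall fun z => ?_)
    refine integral_congr_ae (Filter.Eventually.of_forall fun y => ?_)
    simp only [add_right_comm]
  · obtain ⟨C, hC⟩ := g.bdd
    refine Integrable.of_bound (C := C) ?_ ?_
    · refine Measurable.aestronglyMeasurable ?_
      exact g.meas.comp ((measurable_const_add x |>.comp measurable_fst).add measurable_snd)
    · exact Filter.Eventually.of_forall fun y => hC _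

/-- The set of convolution operators. -/
def opSet (E : Type*) [AddCommGroup E] [MeasurableSpace E] [MeasurableAdd₂ E] :
    Set (Module.End ℝ (BM E)) :=
  {T | ∃ μ : Measure E, ∃ _ : IsFiniteMeasure μ, T = opE μ}

/-- The commutative algebra generated by convolution operators. -/
def OAs (E : Type*) [AddCommGroup E] [MeasurableSpace E] [MeasurableAdd₂ E] :
    Subalgebra ℝ (Module.End ℝ (BM E)) :=
  Algebra.adjoin ℝ (opSet E)

theorem OAs_comm {a b : Module.End ℝ (BM E)} (ha : a ∈ OAs E) (hb : b ∈ OAs E) :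
    a * b = b * a := by
  have h := Algebra.isMulCommutative_adjoin ℝ (s := opSet E) (by
    rintro a ⟨μ, hμ, rfl⟩ b ⟨ν, hν, rfl⟩
    exact opE_comm μ ν)
  exact congrArg Subtype.val (h.is_comm.comm (⟨a, ha⟩ : OAs E) ⟨b, hb⟩)

/-- The commutative algebra generated by convolution operators, as a type. -/
structure OA (E : Type*) [AddCommGroup E] [MeasurableSpace E] [MeasurableAdd₂ E] where
  /-- the underlying operator -/
  val : Module.End ℝ (BM E)
  mem : val ∈ OAs E

theorem OA.ext {u v : OA E} (h : u.val = v.val) : u = v := by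
  obtain ⟨u, _⟩ := u
  obtain ⟨v, _⟩ := v
  have : u = v := h
  subst this
  rfl

instance : Zero (OA E) := ⟨⟨0, (OAs E).zero_mem⟩⟩
instance : One (OA E) := ⟨⟨1, (OAs E).one_mem⟩⟩
instance : Add (OA E) := ⟨fun u v => ⟨u.1 + v.1, (OAs E).add_mem u.2 v.2⟩⟩
instance : Mul (OA E) := ⟨fun u v => ⟨u.1 * v.1, (OAs E).mul_mem u.2 v.2⟩⟩
instance : SMul ℝ (OA E) := ⟨fun c u => ⟨c • u.1, (OAs E).smul_mem u.2 c⟩⟩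
instance : Neg (OA E) := ⟨fun u => (-1 : ℝ) • u⟩

instance : CommRing (OA E) where
  add_assoc f g h := OA.ext <| add_assoc _ _ _
  zero_add f := OA.ext <| zero_add _
  add_zero f := OA.ext <| add_zero _
  add_comm f g := OA.ext <| add_comm _ _
  left_distrib f g h := OA.ext <| left_distrib _ _ _
  right_distrib f g h := OA.ext <| right_distrib _ _ _
  zero_mul f := OA.ext <| zero_mul _
  mul_zero f := OA.ext <| mul_zero _
  mul_assoc f g h := OA.ext <| mul_assoc _ _ _
  one_mul f := OA.ext <| one_mul _
  mul_one f := OA.ext <| mul_one _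
  neg_add_cancel f := OA.ext <| by
    refine LinearMap.ext fun g => BM.ext fun x => ?_
    show (-1 : ℝ) * (f.1 g).1 x + (f.1 g).1 x = 0
    ring
  mul_comm f g := OA.ext <| OAs_comm f.2 g.2
  nsmul := nsmulRec
  zsmul := zsmulRec

instance : Module ℝ (OA E) where
  one_smul f := OA.ext <| one_smul _ _
  mul_smul c d f := OA.ext <| mul_smul _ _ _
  smul_zero c := OA.ext <| smul_zero _
  smul_add c f g := OA.ext <| smul_add _ _ _
  add_smul c d f := OA.ext <| add_smul _ _ _
  zero_smul f := OA.ext <| zero_smul _ _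

instance : Algebra ℝ (OA E) := Algebra.ofModule
  (fun c u v => OA.ext <| smul_mul_assoc c u.1 v.1)
  (fun c u v => OA.ext <| mul_smul_comm c u.1 v.1)

instance : SMul (OA E) (BM E) := ⟨fun u g => u.val g⟩

instance : Module (OA E) (BM E) where
  one_smul g := rfl
  mul_smul u v g := rfl
  smul_zero u := u.1.map_zero
  smul_add u f g := u.1.map_add f g
  add_smul u v g := rfl
  zero_smul g := rfl

instance : IsScalarTower ℝ (OA E) (BM E) where
  smul_assoc c u g := rfl

instance : SMulCommClass ℝ (OA E) (BM E) where
  smul_comm c u g := (u.1.map_smul c g).symm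

instance : SMulCommClass (OA E) ℝ (BM E) where
  smul_comm u c g := (u.1.map_smul c g)

/-- Convolution operator as an element of the algebra. -/
def op (μ : Measure E) [IsFiniteMeasure μ] : OA E :=
  ⟨opE μ, Algebra.subset_adjoin ⟨μ, inferInstance, rfl⟩⟩

theorem op_apply (μ : Measure E) [IsFiniteMeasure μ] (g : BM E) (x : E) :
    (op μ • g).1 x = ∫ y, g.1 (x + y) ∂μ := rfl

theorem OA.ext' {u v : OA E} (h : ∀ (g : BM E) x, (u • g).1 x = (v • g).1 x) : u = v := by
  apply OA.ext
  ext g x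
  exact h g x

/-- `u` is represented by the measure `μ`. -/
def Rep (u : OA E) (μ : Measure E) : Prop := ∀ (g : BM E) x, (u • g).1 x = ∫ y, g.1 (x + y) ∂μ

/-- `u` is represented by a probability measure. -/
def IsPr (u : OA E) : Prop := ∃ μ : Measure E, IsProbabilityMeasure μ ∧ Rep u μ

/-- positivity -/
def IsPos (u : OA E) : Prop := ∀ (g : BM E), (∀ x, 0 ≤ g.1 x) → ∀ x, 0 ≤ (u • g).1 x

theorem op_mconv (μ ν : Measure E) [IsFiniteMeasure μ] [IsFiniteMeasure ν]
    [IsFiniteMeasure (mconv μ ν)] : op (mconv μ ν) = op μ * op ν := by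
  apply OA.ext'
  intro g x
  rw [mul_smul, op_apply, op_apply]
  simp only [op_apply]
  unfold mconv
  rw [integral_map measurable_add.aemeasurable
    (f := fun y => g.1 (x + y))
    (g.meas.comp (measurable_const_add x)).aestronglyMeasurable, integral_prod]
  · simp only [add_assoc]
  · obtain ⟨C, hC⟩ := g.bdd
    refine Integrable.of_bound (C := C) ?_ ?_
    · refine Measurable.aestronglyMeasurable ?_
      exact g.meas.comp (measurable_const_add x |>.comp measurable_add)
    · exact Filter.Eventually.of_forall fun y => hC _

instance (μ ν : Measure E) [IsFiniteMeasure μ] [IsFiniteMeasure ν] :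
    IsFiniteMeasure (mconv μ ν) := by unfold mconv; infer_instance

instance (μ ν : Measure E) [IsProbabilityMeasure μ] [IsProbabilityMeasure ν] :
    IsProbabilityMeasure (mconv μ ν) := by
  unfold mconv
  exact Measure.isProbabilityMeasure_map measurable_add.aemeasurable

theorem op_dirac : op (Measure.dirac (0 : E)) = 1 := by
  apply OA.ext'
  intro g x
  rw [op_apply, one_smul, integral_dirac' (fun y => g.1 (x + y)) _
    (g.meas.comp (measurable_const_add x)).stronglyMeasurable, add_zero]

theorem op_add (μ ν : Measure E) [IsFiniteMeasure μ] [IsFiniteMeasure ν] :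
    op (μ + ν) = op μ + op ν := by
  apply OA.ext'
  intro g x
  rw [op_apply, add_smul]
  exact integral_add_measure (g.integrable μ x) (g.integrable ν x)

theorem op_smul (μ : Measure E) [IsFiniteMeasure μ] {c : ℝ} (hc : 0 ≤ c)
    [IsFiniteMeasure (ENNReal.ofReal c • μ)] :
    op (ENNReal.ofReal c • μ) = c • op μ := by
  apply OA.ext'
  intro g x
  rw [op_apply, smul_assoc]
  rw [integral_smul_measure, ENNReal.toReal_ofReal hc]
  rfl

theorem Rep.eq_op {u : OA E} {μ : Measure E} [IsFiniteMeasure μ] (h : Rep u μ) : u = op μ :=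
  OA.ext' fun g x => by rw [h, op_apply]

theorem isPr_op (μ : Measure E) [IsProbabilityMeasure μ] : IsPr (op μ) :=
  ⟨μ, inferInstance, fun g x => rfl⟩

theorem isPos_op (μ : Measure E) [IsFiniteMeasure μ] : IsPos (op μ) := fun g hg x => by
  rw [op_apply]; exact integral_nonneg fun y => hg _

theorem IsPr.one : IsPr (1 : OA E) := by
  rw [← op_dirac]; exact isPr_op _

theorem IsPr.mul {u v : OA E} (hu : IsPr u) (hv : IsPr v) : IsPr (u * v) := by
  obtain ⟨μ, hμ, hu⟩ := hu
  obtain ⟨ν, hν, hv⟩ := hv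
  rw [hu.eq_op, hv.eq_op, ← op_mconv]
  exact isPr_op _

theorem IsPr.pow {u : OA E} (hu : IsPr u) (n : ℕ) : IsPr (u ^ n) := by
  induction n with
  | zero => rw [pow_zero]; exact IsPr.one
  | succ n ih => rw [pow_succ]; exact ih.mul hu

theorem IsPr.prod {ι : Type*} (s : Finset ι) (u : ι → OA E) (hu : ∀ i ∈ s, IsPr (u i)) :
    IsPr (∏ i ∈ s, u i) := by
  classical
  induction s using Finset.induction_on with
  | empty => rw [Finset.prod_empty]; exact IsPr.one
  | insert a s ha ih =>
    rw [Finset.prod_insert ha]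
    exact (hu a (Finset.mem_insert_self _ _)).mul
      (ih fun i hi => hu i (Finset.mem_insert_of_mem hi))

theorem IsPr.convex {u v : OA E} (hu : IsPr u) (hv : IsPr v) {a b : ℝ} (ha : 0 ≤ a) (hb : 0 ≤ b)
    (hab : a + b = 1) : IsPr (a • u + b • v) := by
  obtain ⟨μ, hμ, hu⟩ := hu
  obtain ⟨ν, hν, hv⟩ := hv
  have : IsProbabilityMeasure (ENNReal.ofReal a • μ + ENNReal.ofReal b • ν) := by
    constructor
    simp [← ENNReal.ofReal_add ha hb, hab]
  have h1 : IsFiniteMeasure (ENNReal.ofReal a • μ) := by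
    exact Measure.smul_finite _ ENNReal.ofReal_ne_top
  have h2 : IsFiniteMeasure (ENNReal.ofReal b • ν) := by
    exact Measure.smul_finite _ ENNReal.ofReal_ne_top
  rw [hu.eq_op, hv.eq_op, ← op_smul μ ha, ← op_smul ν hb, ← op_add]
  exact isPr_op _

theorem IsPr.isPos {u : OA E} (hu : IsPr u) : IsPos u := by
  obtain ⟨μ, hμ, hu⟩ := hu
  rw [hu.eq_op]; exact isPos_op _

theorem IsPr.const {u : OA E} (hu : IsPr u) (c : ℝ) (x : E) :
    (u • (BM.const c)).1 x = c := by
  obtain ⟨μ, hμ, hu⟩ := hu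
  rw [hu]
  have : ∀ y, (BM.const c : BM E).1 (x + y) = c := fun y => rfl
  simp [this]

theorem IsPr.const' {u : OA E} (hu : IsPr u) (c : ℝ) :
    u • (BM.const c : BM E) = BM.const c := by
  ext x; exact hu.const c x

theorem IsPos.mono {u : OA E} (hu : IsPos u) {f g : BM E} (h : ∀ x, f.1 x ≤ g.1 x) (x : E) :
    (u • f).1 x ≤ (u • g).1 x := by
  have := hu (g - f) (fun y => sub_nonneg.2 (h y)) x
  rw [smul_sub] at this
  exact sub_nonneg.1 this

theorem IsPos.add {u v : OA E} (hu : IsPos u) (hv : IsPos v) : IsPos (u + v) := fun g hg x => by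
  rw [add_smul]; exact add_nonneg (hu g hg x) (hv g hg x)

theorem IsPos.zero : IsPos (0 : OA E) := fun g hg x => by
  rw [zero_smul]; exact le_rfl

theorem IsPos.sum {ι : Type*} (s : Finset ι) (u : ι → OA E) (hu : ∀ i ∈ s, IsPos (u i)) :
    IsPos (∑ i ∈ s, u i) := by
  classical
  induction s using Finset.induction_on with
  | empty => rw [Finset.sum_empty]; exact IsPos.zero
  | insert a s ha ih =>
    rw [Finset.sum_insert ha]
    exact (hu a (Finset.mem_insert_self _ _)).add
      (ih fun i hi => hu i (Finset.mem_insert_of_mem hi))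

theorem IsPos.mul {u v : OA E} (hu : IsPos u) (hv : IsPos v) : IsPos (u * v) := fun g hg x => by
  rw [mul_smul]; exact hu _ (hv g hg) x

theorem IsPos.smul {u : OA E} (hu : IsPos u) {c : ℝ} (hc : 0 ≤ c) : IsPos (c • u) :=
  fun g hg x => by
    rw [smul_assoc]; exact mul_nonneg hc (hu g hg x)

theorem IsPr.le_const {u : OA E} (hu : IsPr u) {g : BM E} {c : ℝ} (h : ∀ x, g.1 x ≤ c) (x : E) :
    (u • g).1 x ≤ c :=
  (hu.isPos.mono (g := BM.const c) h x).trans_eq (hu.const c x)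

theorem IsPr.const_le {u : OA E} (hu : IsPr u) {g : BM E} {c : ℝ} (h : ∀ x, c ≤ g.1 x) (x : E) :
    c ≤ (u • g).1 x :=
  (hu.const c x).symm.trans_le (hu.isPos.mono (f := BM.const c) h x)

theorem IsPr.abs_le {u : OA E} (hu : IsPr u) {g : BM E} {c : ℝ} (h : ∀ x, |g.1 x| ≤ c) (x : E) :
    |(u • g).1 x| ≤ c :=
  _root_.abs_le.2 ⟨hu.const_le (fun y => (_root_.abs_le.1 (h y)).1) x,
    hu.le_const (fun y => (_root_.abs_le.1 (h y)).2) x⟩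

theorem BM.sum_apply {ι : Type*} (s : Finset ι) (f : ι → BM E) (x : E) :
    (∑ i ∈ s, f i).1 x = ∑ i ∈ s, (f i).1 x := by
  classical
  induction s using Finset.induction_on with
  | empty => rfl
  | insert a s ha ih =>
    rw [Finset.sum_insert ha, Finset.sum_insert ha, ← ih]; rfl


open Classical in
/-- Indicator function. -/
def ind (s : Set E) (hs : MeasurableSet s) : BM E :=
  ⟨s.indicator (fun _ => (1 : ℝ)), measurable_const.indicator hs, 1, fun x => by
    by_cases h : x ∈ s <;> simp [h]⟩

theorem ind_of_mem {s : Set E} (hs : MeasurableSet s) {x : E} (h : x ∈ s) : (ind s hs).1 x = 1 :=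
  Set.indicator_of_mem h (fun _ => (1 : ℝ))

theorem ind_of_notMem {s : Set E} (hs : MeasurableSet s) {x : E} (h : x ∉ s) :
    (ind s hs).1 x = 0 :=
  Set.indicator_of_notMem h (fun _ => (1 : ℝ))

theorem ind_nonneg {s : Set E} (hs : MeasurableSet s) (x : E) : 0 ≤ (ind s hs).1 x := by
  by_cases h : x ∈ s
  · rw [ind_of_mem hs h]; exact zero_le_one
  · rw [ind_of_notMem hs h]

theorem ind_le_one {s : Set E} (hs : MeasurableSet s) (x : E) : (ind s hs).1 x ≤ 1 := by
  by_cases h : x ∈ s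
  · rw [ind_of_mem hs h]
  · rw [ind_of_notMem hs h]; exact zero_le_one

theorem ind_sq {s : Set E} (hs : MeasurableSet s) : (ind s hs) ^ 2 = ind s hs := by
  ext x
  show (ind s hs).1 x ^ 2 = (ind s hs).1 x
  by_cases h : x ∈ s
  · rw [ind_of_mem hs h]; norm_num
  · rw [ind_of_notMem hs h]; norm_num

theorem Rep.ind {u : OA E} {μ : Measure E} (h : Rep u μ) {s : Set E} (hs : MeasurableSet s) :
    (u • ind s hs).1 0 = μ.real s := by
  rw [h]
  simp only [zero_add]
  exact integral_indicator_one hs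

/-- Translation of a function. -/
def tr (z : E) (g : BM E) : BM E := ⟨fun x => g.1 (z + x), g.meas.comp (measurable_const_add z), by
  obtain ⟨C, hC⟩ := g.bdd
  exact ⟨C, fun x => hC _⟩⟩

theorem tr_apply (z : E) (g : BM E) (x : E) : (tr z g).1 x = g.1 (z + x) := rfl

theorem tr_eq_op (z : E) (g : BM E) : tr z g = op (Measure.dirac z) • g := by
  ext x
  show g.1 (z + x) = (op (Measure.dirac z) • g).1 x
  rw [op_apply, integral_dirac' (fun y => g.1 (x + y)) _
    (g.meas.comp (measurable_const_add x)).stronglyMeasurable, add_comm]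

theorem tr_smul (z : E) (u : OA E) (g : BM E) : tr z (u • g) = u • tr z g := by
  rw [tr_eq_op, tr_eq_op, ← mul_smul, ← mul_smul, mul_comm]

theorem smul_apply_eq (u : OA E) (g : BM E) (x : E) : (u • g).1 x = (u • tr x g).1 0 := by
  rw [← tr_smul, tr_apply, add_zero]

end framework

end

end S4

namespace S4
noncomputable section
section bessel

variable {E : Type*} [AddCommGroup E] [MeasurableSpace E] [MeasurableAdd₂ E]

/-- represented by a finite measure -/
def IsFM (u : OA E) : Prop := ∃ μ : Measure E, ∃ _ : IsFiniteMeasure μ, u = op μ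

theorem IsFM.isPos {u : OA E} (h : IsFM u) : IsPos u := by
  obtain ⟨μ, hμ, rfl⟩ := h; exact isPos_op μ

theorem IsPr.isFM {u : OA E} (h : IsPr u) : IsFM u := by
  obtain ⟨μ, hμ, h⟩ := h; exact ⟨μ, inferInstance, h.eq_op⟩

theorem IsFM.add {u v : OA E} (hu : IsFM u) (hv : IsFM v) : IsFM (u + v) := by
  obtain ⟨μ, hμ, rfl⟩ := hu
  obtain ⟨ν, hν, rfl⟩ := hv
  exact ⟨μ + ν, inferInstance, (op_add μ ν).symm⟩

theorem IsFM.smul {u : OA E} (hu : IsFM u) {c : ℝ} (hc : 0 ≤ c) : IsFM (c • u) := by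
  obtain ⟨μ, hμ, rfl⟩ := hu
  have h1 : IsFiniteMeasure (ENNReal.ofReal c • μ) := by
    exact Measure.smul_finite _ ENNReal.ofReal_ne_top
  exact ⟨ENNReal.ofReal c • μ, h1, (op_smul μ hc).symm⟩

theorem IsFM.zero : IsFM (0 : OA E) := by
  have := (IsPr.one (E := E)).isFM.smul (le_refl (0:ℝ))
  rwa [zero_smul] at this

theorem IsFM.sum {ι : Type*} (s : Finset ι) (u : ι → OA E) (hu : ∀ i ∈ s, IsFM (u i)) :
    IsFM (∑ i ∈ s, u i) := by
  classical
  induction s using Finset.induction_on with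
  | empty => rw [Finset.sum_empty]; exact IsFM.zero
  | insert a s ha ih =>
    rw [Finset.sum_insert ha]
    exact (hu a (Finset.mem_insert_self _ _)).add
      (ih fun i hi => hu i (Finset.mem_insert_of_mem hi))

theorem IsFM.isPr {u : OA E} (hu : IsFM u) (h1 : (u • (1 : BM E)).1 0 = 1) : IsPr u := by
  obtain ⟨μ, hμ, rfl⟩ := hu
  refine ⟨μ, ⟨?_⟩, fun g x => rfl⟩
  rw [op_apply] at h1
  simp only [BM.one_apply, integral_const, smul_eq_mul, mul_one] at h1
  rwa [Measure.real, ENNReal.toReal_eq_one_iff] at h1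

theorem IsPr.one_apply {u : OA E} (hu : IsPr u) (x : E) : (u • (1 : BM E)).1 x = 1 :=
  hu.const 1 x

theorem cs {P : OA E} (hP : IsPos P) {q : ℝ} {x : E} (hq : (P • (1 : BM E)).1 x = q)
    (f : BM E) : ((P • f).1 x) ^ 2 ≤ q * (P • f ^ 2).1 x := by
  have key : ∀ t : ℝ, 0 ≤ q * (t * t) + (-2 * (P • f).1 x) * t + (P • f ^ 2).1 x := by
    intro t
    have := hP ((f - t • 1) ^ 2) (fun y => by rw [BM.sq_apply]; positivity) x
    have e : (f - t • (1 : BM E)) ^ 2 = f ^ 2 - (2 * t) • f + (t * t) • (1 : BM E) := by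
      ext y
      simp only [BM.sq_apply, BM.sub_apply, BM.add_apply, BM.smul_apply, BM.one_apply]
      ring
    rw [e, smul_add, smul_sub, smul_comm, smul_comm P] at this
    simp only [BM.sub_apply, BM.add_apply, BM.smul_apply, hq] at this
    linarith
  have := discrim_le_zero key
  unfold discrim at this
  nlinarith

theorem jensen {u : OA E} (hu : IsPr u) (g : BM E) (x : E) :
    ((u • g).1 x) ^ 2 ≤ (u • g ^ 2).1 x := by
  simpa using cs hu.isPos (hu.one_apply x) g

theorem bessel_iter {ι : Type*} (s : Finset ι) {u : OA E} (hu : IsPr u) (Θ : ι → OA E) (κ : ι → ℝ)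
    (hκ : ∀ i ∈ s, 0 ≤ κ i)
    (H : ∀ (h : BM E) x, ((u • h).1 x) ^ 2 + ∑ i ∈ s, κ i * ((Θ i • h).1 x) ^ 2 ≤ (u • h ^ 2).1 x)
    (l : ℕ) (g : BM E) (x : E) :
    ((u ^ (l + 1) • g).1 x) ^ 2 + (l + 1) * ∑ i ∈ s, κ i * ((Θ i • u ^ l • g).1 x) ^ 2
      ≤ (u ^ (l + 1) • g ^ 2).1 x := by
  induction l generalizing x with
  | zero => simpa using H g x
  | succ l ih =>
    have e : u ^ (l + 1 + 1) • g ^ 2 = u • (u ^ (l + 1) • g ^ 2) := by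
      rw [← mul_smul, ← pow_succ']
    have e2 : u ^ (l + 1 + 1) • g = u • (u ^ (l + 1) • g) := by
      rw [← mul_smul, ← pow_succ']
    rw [e, e2]
    have h1 := hu.isPos.mono (f := (u ^ (l + 1) • g) ^ 2 +
        ((l : ℝ) + 1) • ∑ i ∈ s, κ i • (Θ i • u ^ l • g) ^ 2) (g := u ^ (l + 1) • g ^ 2) (fun y => by
      have := ih y
      simpa only [BM.add_apply, BM.sq_apply, BM.smul_apply, BM.sum_apply] using this) x
    rw [smul_add, smul_comm, Finset.smul_sum] at h1
    have hsc : ∀ i (f : BM E), u • κ i • f = κ i • u • f := fun i f => smul_comm _ _ _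
    simp only [BM.add_apply, BM.smul_apply, BM.sum_apply, hsc] at h1
    have h2 := H (u ^ (l + 1) • g) x
    have h3 : ∑ i ∈ s, κ i * ((Θ i • u ^ (l + 1) • g).1 x) ^ 2 ≤
        ∑ i ∈ s, κ i * (u • (Θ i • u ^ l • g) ^ 2).1 x := by
      refine Finset.sum_le_sum fun i hi => mul_le_mul_of_nonneg_left ?_ (hκ i hi)
      have := jensen hu (Θ i • u ^ l • g) x
      have e3 : u • Θ i • u ^ l • g = Θ i • u ^ (l + 1) • g := by
        simp only [← mul_smul]; congr 1; ring
      rwa [e3] at this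
    push_cast
    have h4 := mul_le_mul_of_nonneg_left h3 (by positivity : (0:ℝ) ≤ (l : ℝ) + 1)
    linarith

section ub
variable {ι : Type*} [Fintype ι]

/-- `1 + η ∑ (v_i - 1)` -/
def Ub (v : ι → OA E) (η : ℝ) : OA E := 1 + η • ∑ i, (v i - 1)

theorem Ub_eq (v : ι → OA E) (η : ℝ) :
    Ub v η = (1 - Fintype.card ι * η) • (1 : OA E) + η • ∑ i, v i := by
  unfold Ub
  rw [Finset.sum_sub_distrib]
  simp only [Finset.sum_const, Finset.card_univ, smul_sub, sub_smul, one_smul]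
  rw [mul_smul, smul_comm, Nat.cast_smul_eq_nsmul]
  rw [smul_comm (Fintype.card ι) η]
  abel

theorem isPr_Ub {v : ι → OA E} (hv : ∀ i, IsPr (v i)) {η : ℝ} (h0 : 0 ≤ η)
    (h1 : Fintype.card ι * η ≤ 1) : IsPr (Ub v η) := by
  apply IsFM.isPr
  · rw [Ub_eq]
    refine (IsPr.one.isFM.smul (by linarith)).add (IsFM.smul ?_ h0)
    exact IsFM.sum _ _ fun i _ => (hv i).isFM
  · unfold Ub
    rw [add_smul, one_smul, smul_assoc, Finset.sum_smul]
    have hz : ∀ i, (v i - 1) • (1 : BM E) = 0 := fun i => by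
      ext y
      rw [sub_smul, one_smul, BM.sub_apply, (hv i).one_apply, BM.one_apply, BM.zero_apply, sub_self]
    simp [hz, BM.one_apply]

theorem sum_one_apply {v : ι → OA E} (hv : ∀ i, IsPr (v i)) (x : E) :
    ((∑ i, v i) • (1 : BM E)).1 x = Fintype.card ι := by
  rw [Finset.sum_smul, BM.sum_apply]
  simp [(hv _).one_apply]

theorem one_step {v : ι → OA E} (hv : ∀ i, IsPr (v i)) {η : ℝ} (h0 : 0 ≤ η)
    (h1 : Fintype.card ι * η ≤ 1) (h : BM E) (x : E) :
    ((Ub v η • h).1 x) ^ 2 +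
      η * (1 - Fintype.card ι * η) * ((∑ i, v i) • (h - BM.const (h.1 x)) ^ 2).1 x ≤
    (Ub v η • h ^ 2).1 x := by
  set c := h.1 x
  set f := h - BM.const c with hf
  have hfx : f.1 x = 0 := by simp [hf, BM.sub_apply, BM.const_apply, c]
  have hU := isPr_Ub hv h0 h1
  have e1 : h = f + BM.const c := by simp [hf]
  have e2 : h ^ 2 = f ^ 2 + (2 * c) • f + BM.const (c ^ 2) := by
    ext y
    rw [e1]
    simp only [BM.add_apply, BM.sq_apply, BM.smul_apply, BM.const_apply]
    ring
  have e3 : (Ub v η • h).1 x = (Ub v η • f).1 x + c := by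
    rw [e1, smul_add, BM.add_apply, hU.const]
  have e4 : (Ub v η • h ^ 2).1 x = (Ub v η • f ^ 2).1 x + 2 * c * (Ub v η • f).1 x + c ^ 2 := by
    rw [e2, smul_add, smul_add, BM.add_apply, BM.add_apply, hU.const, smul_comm, BM.smul_apply]
  have e5 : ∀ k : BM E, k.1 x = 0 → (Ub v η • k).1 x = η * ((∑ i, v i) • k).1 x := by
    intro k hk
    rw [Ub_eq, add_smul, BM.add_apply, smul_assoc, smul_assoc, one_smul, BM.smul_apply,
      BM.smul_apply, hk]
    ring
  have e6 := e5 f hfx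
  have e7 := e5 (f ^ 2) (by rw [BM.sq_apply, hfx]; norm_num)
  have hN : IsPos (∑ i, v i) := IsPos.sum _ _ fun i _ => (hv i).isPos
  have h2 := cs hN (sum_one_apply hv x) f
  rw [e3, e4, e6, e7]
  nlinarith [mul_nonneg h0 h0]

theorem sub_one_apply {w : OA E} (hw : IsPr w) (h : BM E) (x : E) :
    ((w - 1) • h).1 x = (w • (h - BM.const (h.1 x))).1 x := by
  rw [sub_smul, smul_sub, one_smul, BM.sub_apply, BM.sub_apply, hw.const]

/-- Bessel inequality for the first differences. -/
theorem bessel_diff {v : ι → OA E} (hv : ∀ i, IsPr (v i)) {η : ℝ} (h0 : 0 ≤ η)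
    (h1 : Fintype.card ι * η ≤ 1 / 2) (l : ℕ) (g : BM E) (x : E) :
    ((l + 1) * η / 2) * ∑ i, (((v i - 1) • Ub v η ^ l • g).1 x) ^ 2 ≤
      (Ub v η ^ (l + 1) • g ^ 2).1 x := by
  have hU := isPr_Ub hv h0 (by linarith)
  have := bessel_iter Finset.univ hU (fun i => v i - 1) (fun _ => η / 2) (fun _ _ => by positivity)
    (fun h x => by
      have h2 := one_step hv h0 (by linarith) h x
      have h3 : ∑ i, (((v i - 1) • h).1 x) ^ 2 ≤ ((∑ i, v i) • (h - BM.const (h.1 x)) ^ 2).1 x := by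
        rw [Finset.sum_smul, BM.sum_apply]
        refine Finset.sum_le_sum fun i _ => ?_
        rw [sub_one_apply (hv i)]
        exact jensen (hv i) _ _
      have h4 : 0 ≤ ∑ i, (((v i - 1) • h).1 x) ^ 2 := Finset.sum_nonneg fun i _ => sq_nonneg _
      rw [← Finset.mul_sum]
      have h5 : η / 2 ≤ η * (1 - Fintype.card ι * η) := by nlinarith
      have h6 : 0 ≤ η * (1 - Fintype.card ι * η) := le_trans (by positivity) h5
      have h7 := mul_le_mul h5 h3 h4 h6
      linarith) l g x
  rw [← Finset.mul_sum] at this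
  have h8 := sq_nonneg ((Ub v η ^ (l + 1) • g).1 x)
  calc _ = (↑l + 1) * (η / 2 * ∑ i, (((v i - 1) • Ub v η ^ l • g).1 x) ^ 2) := by ring
    _ ≤ _ := by linarith

/-- Bessel inequality for a restricted operator. -/
theorem bessel_restr {v : ι → OA E} (hv : ∀ i, IsPr (v i)) {η : ℝ} (h0 : 0 ≤ η)
    (h1 : Fintype.card ι * η ≤ 1 / 2) {P : OA E} (hP : IsPos P) (hPN : IsPos (∑ i, v i - P))
    {q : ℝ} (hq : ∀ x, (P • (1 : BM E)).1 x = q) (hq0 : 0 ≤ q) (l : ℕ) (g : BM E) (x : E) :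
    ((l + 1) * η / 2) * (((P - q • 1) • Ub v η ^ l • g).1 x) ^ 2 ≤
      q * (Ub v η ^ (l + 1) • g ^ 2).1 x := by
  have hU := isPr_Ub hv h0 (by linarith)
  rcases hq0.eq_or_lt with hq0 | hq0
  · have := cs hP (hq x) (Ub v η ^ l • g)
    rw [← hq0] at this ⊢
    have h3 : (P • Ub v η ^ l • g).1 x = 0 := by nlinarith
    rw [zero_smul, sub_zero, h3]; simp
  have := bessel_iter {()} hU (fun _ => P - q • 1) (fun _ => η / 2 / q) (fun _ _ => by positivity)
    (fun h x => by
      have h2 := one_step hv h0 (by linarith) h x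
      set f := (h - BM.const (h.1 x)) with hf
      have h3 : ((P - q • 1) • h).1 x = (P • f).1 x := by
        have : (BM.const (h.1 x) : BM E) = h.1 x • (1 : BM E) := by
          ext y; simp [BM.const_apply, BM.smul_apply, BM.one_apply]
        rw [sub_smul, hf, smul_sub, BM.sub_apply, BM.sub_apply, this, smul_comm P, BM.smul_apply, hq,
          smul_assoc, one_smul, BM.smul_apply]
        ring
      have h4 := cs hP (hq x) f
      have h5 := hPN (f ^ 2) (fun y => by rw [BM.sq_apply]; positivity) x
      rw [sub_smul, BM.sub_apply] at h5
      have h6 : η / 2 ≤ η * (1 - Fintype.card ι * η) := by nlinarith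
      have h7 : 0 ≤ (P • f ^ 2).1 x := hP _ (fun y => by rw [BM.sq_apply]; positivity) x
      have h8 : η / 2 * (P • f ^ 2).1 x ≤
          η * (1 - Fintype.card ι * η) * ((∑ i, v i) • f ^ 2).1 x :=
        mul_le_mul h6 (by linarith) h7 (le_trans (by positivity) h6)
      rw [Finset.sum_singleton, h3]
      have h9 : η / 2 / q * ((P • f).1 x) ^ 2 ≤ η / 2 * (P • f ^ 2).1 x := by
        rw [div_mul_eq_mul_div, div_le_iff₀ hq0]
        nlinarith
      linarith) l g x
  rw [Finset.sum_singleton] at this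
  have h8 := sq_nonneg ((Ub v η ^ (l + 1) • g).1 x)
  have h9 : (↑l + 1) * (η / 2 / q * (((P - q • 1) • Ub v η ^ l • g).1 x) ^ 2) ≤
     (Ub v η ^ (l + 1) • g ^ 2).1 x := by linarith
  have h10 := mul_le_mul_of_nonneg_left h9 hq0.le
  refine le_trans (le_of_eq ?_) h10
  field_simp

end ub

/-- `1 - α + α v` -/
def Uc (α : ℝ) (v : OA E) : OA E := (1 - α) • 1 + α • v

theorem isPr_Uc {v : OA E} (hv : IsPr v) {α : ℝ} (h0 : 0 ≤ α) (h1 : α ≤ 1) : IsPr (Uc α v) :=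
  IsPr.convex IsPr.one hv (by linarith) h0 (by ring)

theorem one_step' {v : OA E} (hv : IsPr v) {α : ℝ} (h0 : 0 ≤ α) (h1 : α ≤ 1) (h : BM E) (x : E) :
    ((Uc α v • h).1 x) ^ 2 + α * (1 - α) * (((v - 1) • h).1 x) ^ 2 ≤ (Uc α v • h ^ 2).1 x := by
  have e : ∀ k : BM E, (Uc α v • k).1 x = (1 - α) * k.1 x + α * (v • k).1 x := by
    intro k
    rw [Uc, add_smul, smul_assoc, smul_assoc, one_smul, BM.add_apply, BM.smul_apply, BM.smul_apply]
  have := jensen hv h x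
  rw [e, e, sub_smul, one_smul, BM.sub_apply, BM.sq_apply]
  nlinarith [mul_le_mul_of_nonneg_left this h0]

theorem bessel_prod {ι : Type*} [DecidableEq ι] (s : Finset ι) {v : ι → OA E} (hv : ∀ i, IsPr (v i))
    {α : ℝ} (h0 : 0 ≤ α) (h1 : α ≤ 1) (g : BM E) (x : E) :
    (((∏ i ∈ s, Uc α (v i)) • g).1 x) ^ 2 +
      α * (1 - α) * ∑ i ∈ s, (((v i - 1) • (∏ j ∈ s.erase i, Uc α (v j)) • g).1 x) ^ 2 ≤
      ((∏ i ∈ s, Uc α (v i)) • g ^ 2).1 x := by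
  induction s using Finset.induction_on generalizing x with
  | empty => simp [BM.sq_apply]
  | insert a s ha ih =>
    have hU := isPr_Uc (hv a) h0 h1
    rw [Finset.prod_insert ha, Finset.sum_insert ha, Finset.erase_insert ha, mul_smul, mul_smul]
    have h2 := hU.isPos.mono (f := ((∏ i ∈ s, Uc α (v i)) • g) ^ 2 + (α * (1 - α)) •
        ∑ i ∈ s, ((v i - 1) • (∏ j ∈ s.erase i, Uc α (v j)) • g) ^ 2)
        (g := (∏ i ∈ s, Uc α (v i)) • g ^ 2) (fun y => by
      simpa only [BM.add_apply, BM.sq_apply, BM.smul_apply, BM.sum_apply] using ih y) x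
    rw [smul_add, smul_comm, Finset.smul_sum, BM.add_apply, BM.smul_apply, BM.sum_apply] at h2
    have h3 := one_step' (hv a) h0 h1 ((∏ i ∈ s, Uc α (v i)) • g) x
    have h4 : ∑ i ∈ s, (((v i - 1) • (∏ j ∈ (insert a s).erase i, Uc α (v j)) • g).1 x) ^ 2 ≤
        ∑ i ∈ s, (Uc α (v a) • ((v i - 1) • (∏ j ∈ s.erase i, Uc α (v j)) • g) ^ 2).1 x := by
      refine Finset.sum_le_sum fun i hi => ?_
      have hia : i ≠ a := fun h => ha (h ▸ hi)
      rw [Finset.erase_insert_of_ne hia.symm, Finset.prod_insert (by simp [ha])]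
      have := jensen hU ((v i - 1) • (∏ j ∈ s.erase i, Uc α (v j)) • g) x
      have e : (v i - 1) • (Uc α (v a) * ∏ j ∈ s.erase i, Uc α (v j)) • g =
        Uc α (v a) • (v i - 1) • (∏ j ∈ s.erase i, Uc α (v j)) • g := by
        simp only [← mul_smul]; congr 1; ring
      rw [e]; exact this
    have h5 := mul_le_mul_of_nonneg_left h4 (mul_nonneg h0 (by linarith : 0 ≤ 1 - α))
    linarith

end bessel
end
end S4

namespace S4
noncomputable section
section rogozin

theorem meas_le_of_Icc (ν : Measure ℝ) [IsFiniteMeasure ν] {A : Set ℝ} (hA : MeasurableSet A)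
    {c : ℝ} (hc : 0 ≤ c) (h : ∀ a ∈ A, ∀ b ∈ A, a ≤ b → ν.real (Set.Icc a b) ≤ c) :
    ν.real A ≤ c := by
  refine le_of_forall_pos_le_add fun ε hε => ?_
  obtain ⟨K, hKA, hK, hlt⟩ := hA.exists_isCompact_lt_add (μ := ν) (measure_ne_top _ _)
    (ε := ENNReal.ofReal ε) (by simpa using hε)
  have h1 : ν.real A ≤ ν.real K + ε := by
    have := ENNReal.toReal_mono (by simp) hlt.le
    rwa [ENNReal.toReal_add (by simp) (by simp), ENNReal.toReal_ofReal hε.le] at this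
  rcases K.eq_empty_or_nonempty with rfl | hne
  · simp at h1; linarith
  obtain ⟨a, ha⟩ := hK.exists_isLeast hne
  obtain ⟨b, hb⟩ := hK.exists_isGreatest hne
  have h2 : ν.real K ≤ ν.real (Set.Icc a b) :=
    measureReal_mono (fun x hx => ⟨ha.2 hx, hb.2 hx⟩)
  have h3 := h a (hKA ha.1) b (hKA hb.1) (ha.2 hb.1)
  linarith

variable {E : Type*} [AddCommGroup E] [MeasurableSpace E] [MeasurableAdd₂ E]

theorem op_restrict_add (μ : Measure E) [IsFiniteMeasure μ] {B : Set E} (hB : MeasurableSet B) :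
    op μ = op (μ.restrict B) + op (μ.restrict Bᶜ) := by
  apply OA.ext'
  intro g x
  rw [add_smul, BM.add_apply, op_apply, op_apply, op_apply,
    integral_add_compl hB (g.integrable μ x)]

variable {ι : Type*} [Fintype ι]

theorem rog_aux (V : ι → Measure E) [∀ i, IsProbabilityMeasure (V i)] {η : ℝ} (h0 : 0 < η)
    (h1 : Fintype.card ι * η ≤ 1 / 2) (l : ℕ) (g : BM E) (hg : ∀ x, g.1 x ^ 2 ≤ 1) {s : ℝ}
    (hs : 0 < s) {B : Set E} (hB : MeasurableSet B)
    (H : ∀ z ∈ B, s ≤ (Ub (fun i => op (V i)) η ^ l • g).1 z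
        - (Ub (fun i => op (V i)) η ^ l • g).1 0) :
    ∑ i, (V i).real B ≤ 2 / ((l + 1) * η * s ^ 2) := by
  set v := fun i => op (V i) with hv
  have hvp : ∀ i, IsPr (v i) := fun i => isPr_op _
  set q := ∑ i, (V i).real B with hq
  have hq0 : 0 ≤ q := Finset.sum_nonneg fun i _ => measureReal_nonneg
  set P : OA E := ∑ i, op ((V i).restrict B) with hP
  have hPp : IsPos P := IsPos.sum _ _ fun i _ => isPos_op _
  have hPN : IsPos (∑ i, v i - P) := by
    rw [hP, ← Finset.sum_sub_distrib]
    refine IsPos.sum _ _ fun i _ => ?_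
    rw [hv]
    simp only
    rw [op_restrict_add (V i) hB, add_sub_cancel_left]
    exact isPos_op _
  have hP1 : ∀ x, (P • (1 : BM E)).1 x = q := by
    intro x
    rw [hP, Finset.sum_smul, BM.sum_apply]
    refine Finset.sum_congr rfl fun i _ => ?_
    rw [op_apply]
    simp [BM.one_apply]
  have key := bessel_restr hvp h0.le h1 hPp hPN hP1 hq0 l g 0
  set F := Ub v η ^ l • g with hF
  have h2 : s * q ≤ ((P - q • 1) • F).1 0 := by
    rw [sub_smul, smul_assoc, one_smul, BM.sub_apply, BM.smul_apply, hP, Finset.sum_smul,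
      BM.sum_apply, hq, Finset.mul_sum, Finset.sum_mul, ← Finset.sum_sub_distrib]
    refine Finset.sum_le_sum fun i _ => ?_
    rw [op_apply]
    simp only [zero_add]
    have e : s * (V i).real B + (V i).real B * F.1 0 = ∫ y in B, (s + F.1 0) ∂(V i) := by
      simp; ring
    rw [le_sub_iff_add_le, e]
    refine setIntegral_mono_on (integrable_const _) (F.integrable' _) hB fun z hz => ?_
    linarith [H z hz]
  have h3 : (Ub v η ^ (l + 1) • g ^ 2).1 0 ≤ 1 :=
    ((isPr_Ub hvp h0.le (by linarith)).pow _).le_const (fun x => by rw [BM.sq_apply]; exact hg x) 0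
  have h4 : (s * q) ^ 2 ≤ (((P - q • 1) • F).1 0) ^ 2 := by
    have : 0 ≤ s * q := by positivity
    exact pow_le_pow_left₀ this h2 2
  have h5 : ((l : ℝ) + 1) * η / 2 * (s * q) ^ 2 ≤ q := by
    calc _ ≤ ((l : ℝ) + 1) * η / 2 * (((P - q • 1) • F).1 0) ^ 2 :=
          mul_le_mul_of_nonneg_left h4 (by positivity)
      _ ≤ _ := key
      _ ≤ q * 1 := mul_le_mul_of_nonneg_left h3 hq0
      _ = q := mul_one q
  rw [le_div_iff₀ (by positivity)]
  rcases hq0.eq_or_lt with hq0 | hq0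
  · rw [← hq0]; simp
  · have : q * (q * ((l + 1) * η * s ^ 2)) ≤ q * 2 := by nlinarith
    exact le_of_mul_le_mul_left this hq0

/-- indicator of `y ∈ J` -/
def iy (y : E →+ ℝ) (hy : Measurable y) (J : Set ℝ) (hJ : MeasurableSet J) : BM E :=
  ind (y ⁻¹' J) (hy hJ)

theorem LowerSet_meas (H : LowerSet ℝ) : MeasurableSet (H : Set ℝ) :=
  H.lower.ordConnected.measurableSet

/-- indicator of `y ∈ H` -/
def iyl (y : E →+ ℝ) (hy : Measurable y) (H : LowerSet ℝ) : BM E :=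
  iy y hy H (LowerSet_meas H)

theorem iy_of_mem {y : E →+ ℝ} {hy : Measurable y} {J : Set ℝ} {hJ : MeasurableSet J} {x : E}
    (h : y x ∈ J) : (iy y hy J hJ).1 x = 1 := ind_of_mem _ h

theorem iy_of_notMem {y : E →+ ℝ} {hy : Measurable y} {J : Set ℝ} {hJ : MeasurableSet J} {x : E}
    (h : y x ∉ J) : (iy y hy J hJ).1 x = 0 := ind_of_notMem _ h

theorem iy_nonneg (y : E →+ ℝ) (hy : Measurable y) (J : Set ℝ) (hJ : MeasurableSet J) (x : E) :
    0 ≤ (iy y hy J hJ).1 x := ind_nonneg (hy hJ) x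

theorem iy_le_one (y : E →+ ℝ) (hy : Measurable y) (J : Set ℝ) (hJ : MeasurableSet J) (x : E) :
    (iy y hy J hJ).1 x ≤ 1 := ind_le_one (hy hJ) x

theorem iyl_anti {W : OA E} (hW : IsPr W) (y : E →+ ℝ) (hy : Measurable y) (H : LowerSet ℝ)
    {a b : E} (hab : y a ≤ y b) : (W • iyl y hy H).1 b ≤ (W • iyl y hy H).1 a := by
  rw [smul_apply_eq, smul_apply_eq W _ a]
  refine hW.isPos.mono (fun z => ?_) 0
  rw [tr_apply, tr_apply]
  by_cases h : y (b + z) ∈ (H : Set ℝ)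
  · have h2 : y (a + z) ∈ (H : Set ℝ) := H.lower (by simpa using hab) h
    rw [iyl, iy_of_mem h, iy_of_mem h2]
  · rw [iyl, iy_of_notMem h]; exact ind_nonneg _ _

/-- points with a large shift effect (downwards) -/
def Sp (W : OA E) (y : E →+ ℝ) (hy : Measurable y) (s : ℝ) : Set E :=
  {a | ∃ H : LowerSet ℝ, s < (W • iyl y hy H).1 0 - (W • iyl y hy H).1 a}

/-- points with a large shift effect (upwards) -/
def Sm (W : OA E) (y : E →+ ℝ) (hy : Measurable y) (s : ℝ) : Set E :=
  {a | ∃ H : LowerSet ℝ, s < (W • iyl y hy H).1 a - (W • iyl y hy H).1 0}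

theorem Sp_eq {W : OA E} (hW : IsPr W) (y : E →+ ℝ) (hy : Measurable y) (s : ℝ) :
    ∃ A : Set ℝ, MeasurableSet A ∧ Sp W y hy s = y ⁻¹' A ∧
      ∀ t ∈ A, ∃ a ∈ Sp W y hy s, y a ≤ t := by
  refine ⟨{t | ∃ a ∈ Sp W y hy s, y a ≤ t}, ?_, ?_, fun t ht => ht⟩
  · have : IsUpperSet {t | ∃ a ∈ Sp W y hy s, y a ≤ t} := by
      rintro t t' htt ⟨a, ha, hat⟩
      exact ⟨a, ha, hat.trans htt⟩
    exact this.ordConnected.measurableSet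
  · ext b
    constructor
    · intro hb; exact ⟨b, hb, le_rfl⟩
    · rintro ⟨a, ⟨H, hH⟩, hab⟩
      exact ⟨H, by linarith [iyl_anti hW y hy H hab]⟩

theorem Sm_eq {W : OA E} (hW : IsPr W) (y : E →+ ℝ) (hy : Measurable y) (s : ℝ) :
    ∃ A : Set ℝ, MeasurableSet A ∧ Sm W y hy s = y ⁻¹' A ∧
      ∀ t ∈ A, ∃ a ∈ Sm W y hy s, t ≤ y a := by
  refine ⟨{t | ∃ a ∈ Sm W y hy s, t ≤ y a}, ?_, ?_, fun t ht => ht⟩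
  · have : IsLowerSet {t | ∃ a ∈ Sm W y hy s, t ≤ y a} := by
      rintro t t' htt ⟨a, ha, hat⟩
      exact ⟨a, ha, htt.trans hat⟩
    exact this.ordConnected.measurableSet
  · ext b
    constructor
    · intro hb; exact ⟨b, hb, le_rfl⟩
    · rintro ⟨a, ⟨H, hH⟩, hab⟩
      exact ⟨H, by linarith [iyl_anti hW y hy H hab]⟩

theorem Sp_meas {W : OA E} (hW : IsPr W) (y : E →+ ℝ) (hy : Measurable y) (s : ℝ) :
    MeasurableSet (Sp W y hy s) := by
  obtain ⟨A, hA, h, -⟩ := Sp_eq hW y hy s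
  rw [h]; exact hy hA

theorem Sm_meas {W : OA E} (hW : IsPr W) (y : E →+ ℝ) (hy : Measurable y) (s : ℝ) :
    MeasurableSet (Sm W y hy s) := by
  obtain ⟨A, hA, h, -⟩ := Sm_eq hW y hy s
  rw [h]; exact hy hA

theorem sum_map_real (V : ι → Measure E) [∀ i, IsProbabilityMeasure (V i)] {y : E → ℝ}
    (hy : Measurable y) {A : Set ℝ} (hA : MeasurableSet A) :
    (∑ i, (V i).map y).real A = ∑ i, (V i).real (y ⁻¹' A) := by
  simp only [Measure.real, Measure.finsetSum_apply, Measure.map_apply hy hA]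
  rw [ENNReal.toReal_sum]
  intro i _
  exact measure_ne_top _ _

theorem iyl_sq_le (y : E →+ ℝ) (hy : Measurable y) (H : LowerSet ℝ) (x : E) :
    (iyl y hy H).1 x ^ 2 ≤ 1 := by
  have h1 : 0 ≤ (iyl y hy H).1 x := iy_nonneg _ _ _ _ _
  have h2 : (iyl y hy H).1 x ≤ 1 := iy_le_one _ _ _ _ _
  nlinarith

theorem rog_p (V : ι → Measure E) [∀ i, IsProbabilityMeasure (V i)] {η : ℝ} (h0 : 0 < η)
    (h1 : Fintype.card ι * η ≤ 1 / 2) (l : ℕ) (y : E →+ ℝ) (hy : Measurable y) {s : ℝ}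
    (hs : 0 < s) :
    ∑ i, (V i).real (Sp (Ub (fun i => op (V i)) η ^ l) y hy s) ≤ 2 / ((l + 1) * η * s ^ 2) := by
  have hW : IsPr (Ub (fun i => op (V i)) η ^ l) :=
    (isPr_Ub (fun i => isPr_op (V i)) h0.le (by linarith)).pow l
  obtain ⟨A, hA, hAe, hA2⟩ := Sp_eq hW y hy s
  rw [hAe, ← sum_map_real V hy hA]
  refine meas_le_of_Icc _ hA (by positivity) fun a ha b hb hab => ?_
  rw [sum_map_real V hy measurableSet_Icc]
  obtain ⟨a', ⟨H, hH⟩, ha'⟩ := hA2 a ha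
  refine rog_aux V h0 h1 l (-iyl y hy H) (fun x => ?_) hs (hy measurableSet_Icc) fun z hz => ?_
  · rw [BM.neg_apply, neg_sq]; exact iyl_sq_le _ _ _ _
  · rw [smul_neg, BM.neg_apply, BM.neg_apply]
    have := iyl_anti hW y hy H (ha'.trans hz.1)
    linarith

theorem rog_m (V : ι → Measure E) [∀ i, IsProbabilityMeasure (V i)] {η : ℝ} (h0 : 0 < η)
    (h1 : Fintype.card ι * η ≤ 1 / 2) (l : ℕ) (y : E →+ ℝ) (hy : Measurable y) {s : ℝ}
    (hs : 0 < s) :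
    ∑ i, (V i).real (Sm (Ub (fun i => op (V i)) η ^ l) y hy s) ≤ 2 / ((l + 1) * η * s ^ 2) := by
  have hW : IsPr (Ub (fun i => op (V i)) η ^ l) :=
    (isPr_Ub (fun i => isPr_op (V i)) h0.le (by linarith)).pow l
  obtain ⟨A, hA, hAe, hA2⟩ := Sm_eq hW y hy s
  rw [hAe, ← sum_map_real V hy hA]
  refine meas_le_of_Icc _ hA (by positivity) fun a ha b hb hab => ?_
  rw [sum_map_real V hy measurableSet_Icc]
  obtain ⟨a', ⟨H, hH⟩, ha'⟩ := hA2 b hb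
  refine rog_aux V h0 h1 l (iyl y hy H) (fun x => iyl_sq_le _ _ _ _) hs
    (hy measurableSet_Icc) fun z hz => ?_
  have := iyl_anti hW y hy H (hz.2.trans ha')
  linarith

/-- the set of points with a large shift effect -/
def SS (W : OA E) (y : E →+ ℝ) (hy : Measurable y) (s : ℝ) : Set E :=
  Sp W y hy s ∪ Sm W y hy s

theorem SS_meas {W : OA E} (hW : IsPr W) (y : E →+ ℝ) (hy : Measurable y) (s : ℝ) :
    MeasurableSet (SS W y hy s) := (Sp_meas hW y hy s).union (Sm_meas hW y hy s)

theorem rogozin (V : ι → Measure E) [∀ i, IsProbabilityMeasure (V i)] {η : ℝ} (h0 : 0 < η)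
    (h1 : Fintype.card ι * η ≤ 1 / 2) (l : ℕ) (y : E →+ ℝ) (hy : Measurable y) {s : ℝ}
    (hs : 0 < s) :
    ∑ i, (V i).real (SS (Ub (fun i => op (V i)) η ^ l) y hy s) ≤ 4 / ((l + 1) * η * s ^ 2) := by
  have e : 4 / ((l + 1) * η * s ^ 2) = 2 / ((l + 1) * η * s ^ 2) + 2 / ((l + 1) * η * s ^ 2) := by
    ring
  rw [e]
  refine le_trans ?_ (add_le_add (rog_p V h0 h1 l y hy hs) (rog_m V h0 h1 l y hy hs))
  rw [← Finset.sum_add_distrib]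
  exact Finset.sum_le_sum fun i _ => measureReal_union_le _ _

theorem abs_le_of_notMem_SS {W : OA E} {y : E →+ ℝ} {hy : Measurable y} {s : ℝ} {a : E}
    (h : a ∉ SS W y hy s) (H : LowerSet ℝ) :
    |(W • iyl y hy H).1 a - (W • iyl y hy H).1 0| ≤ s := by
  by_contra hc
  apply h
  rcases lt_abs.1 (not_le.1 hc) with h1 | h1
  · exact Or.inr ⟨H, h1⟩
  · exact Or.inl ⟨H, by linarith⟩

/-- the effect of one shift is bounded by `s` plus indicator. -/
theorem abs_le_SS {W : OA E} (hW : IsPr W) {y : E →+ ℝ} {hy : Measurable y} {s : ℝ} (hs : 0 ≤ s)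
    (H : LowerSet ℝ) (a : E) :
    |(W • iyl y hy H).1 a - (W • iyl y hy H).1 0| ≤
      s + (ind _ (SS_meas hW y hy s)).1 a := by
  by_cases h : a ∈ SS W y hy s
  · rw [ind_of_mem _ h]
    have h1 : ∀ x, 0 ≤ (W • iyl y hy H).1 x := hW.const_le fun x => iy_nonneg _ _ _ _ _
    have h2 : ∀ x, (W • iyl y hy H).1 x ≤ 1 := hW.le_const fun x => iy_le_one _ _ _ _ _
    rw [abs_le]
    constructor <;> linarith [h1 a, h1 0, h2 a, h2 0]
  · rw [ind_of_notMem _ h, add_zero]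
    exact abs_le_of_notMem_SS h H

theorem abs_op_sub_le {W : OA E} (hW : IsPr W) {y : E →+ ℝ} {hy : Measurable y} {s : ℝ}
    (hs : 0 ≤ s) (H : LowerSet ℝ) (V : Measure E) [IsProbabilityMeasure V]
    (hV : V.real (SS W y hy s) ≤ s) :
    |(op V • W • iyl y hy H).1 0 - (W • iyl y hy H).1 0| ≤ 2 * s := by
  have hI : (op V • ind _ (SS_meas hW y hy s)).1 0 ≤ s := by
    rw [Rep.ind (μ := V) (fun _ _ => rfl)]; exact hV
  have hp := isPr_op V
  have h1 := hp.isPos.mono (f := W • iyl y hy H - BM.const ((W • iyl y hy H).1 0))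
    (g := BM.const s + ind _ (SS_meas hW y hy s)) (fun a => by
      have := (abs_le.1 (abs_le_SS hW (y := y) (hy := hy) hs H a)).2
      simpa only [BM.sub_apply, BM.add_apply, BM.const_apply] using this) 0
  have h2 := hp.isPos.mono (g := W • iyl y hy H - BM.const ((W • iyl y hy H).1 0))
    (f := -(BM.const s + ind _ (SS_meas hW y hy s))) (fun a => by
      have := (abs_le.1 (abs_le_SS hW (y := y) (hy := hy) hs H a)).1
      simpa only [BM.sub_apply, BM.add_apply, BM.const_apply, BM.neg_apply] using this) 0
  rw [smul_sub, smul_add, BM.sub_apply, BM.add_apply, hp.const, hp.const] at h1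
  rw [smul_sub, smul_neg, smul_add, BM.sub_apply, BM.neg_apply, BM.add_apply, hp.const,
    hp.const] at h2
  rw [abs_le]
  constructor <;> linarith

theorem op_iy_le {W : OA E} (hW : IsPr W) {y : E →+ ℝ} {hy : Measurable y} {s : ℝ}
    (hs : 0 ≤ s) {J : Set ℝ} (hJ : MeasurableSet J) (hJc : J.OrdConnected)
    (V : Measure E) [IsProbabilityMeasure V] (hV : V.real (SS W y hy s) ≤ s) :
    (op V • W • iy y hy J hJ).1 0 ≤ (W • iy y hy J hJ).1 0 + 4 * s := by
  let H1 : LowerSet ℝ := lowerClosure J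
  have hl : IsLowerSet ((H1 : Set ℝ) \ J) := by
    rintro t t' htt ⟨ht1, ht2⟩
    refine ⟨H1.lower htt ht1, fun hJ' => ht2 ?_⟩
    obtain ⟨w, hw, htw⟩ := ht1
    exact hJc.out hJ' hw ⟨htt, htw⟩
  let H2 : LowerSet ℝ := ⟨(H1 : Set ℝ) \ J, hl⟩
  have e : iy y hy J hJ = iyl y hy H1 - iyl y hy H2 := by
    ext x
    rw [BM.sub_apply]
    by_cases h : y x ∈ J
    · have h1 : y x ∈ (H1 : Set ℝ) := subset_lowerClosure h
      have h2 : y x ∉ (H2 : Set ℝ) := fun h' => h'.2 h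
      rw [iyl, iyl, iy_of_mem h, iy_of_mem h1, iy_of_notMem h2, sub_zero]
    · by_cases h1 : y x ∈ (H1 : Set ℝ)
      · have h2 : y x ∈ (H2 : Set ℝ) := ⟨h1, h⟩
        rw [iyl, iyl, iy_of_notMem h, iy_of_mem h1, iy_of_mem h2, sub_self]
      · have h2 : y x ∉ (H2 : Set ℝ) := fun h' => h1 h'.1
        rw [iyl, iyl, iy_of_notMem h, iy_of_notMem h1, iy_of_notMem h2, sub_self]
  have h1 := abs_le.1 (abs_op_sub_le hW hs H1 V hV)
  have h2 := abs_le.1 (abs_op_sub_le hW hs H2 V hV)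
  rw [e, smul_sub, smul_sub, BM.sub_apply, BM.sub_apply]
  linarith [h1.1, h1.2, h2.1, h2.2]

variable {κ : Type*} [Fintype κ]

/-- polyhedron -/
def XX (y : κ → E →+ ℝ) (c : κ → ℝ) : Set E := {x | ∀ k, y k x ≤ c k}

theorem XX_meas {y : κ → E →+ ℝ} (hy : ∀ k, Measurable (y k)) (c : κ → ℝ) :
    MeasurableSet (XX y c) := by
  have : XX y c = ⋂ k, (y k) ⁻¹' (Set.Iic (c k)) := by ext; simp [XX]
  rw [this]
  exact MeasurableSet.iInter fun k => hy k measurableSet_Iic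

theorem abs_XX_sub_le {W : OA E} (hW : IsPr W) {y : κ → E →+ ℝ} (hy : ∀ k, Measurable (y k))
    (c : κ → ℝ) (a : E) :
    |(W • ind _ (XX_meas hy c)).1 a - (W • ind _ (XX_meas hy c)).1 0| ≤
      ∑ k, |(W • iyl (y k) (hy k) (LowerSet.Iic (c k))).1 a -
        (W • iyl (y k) (hy k) (LowerSet.Iic (c k))).1 0| := by
  classical
  set f : κ → BM E := fun k => if 0 ≤ y k a then
    iyl (y k) (hy k) (LowerSet.Iic (c k)) - tr a (iyl (y k) (hy k) (LowerSet.Iic (c k))) else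
    tr a (iyl (y k) (hy k) (LowerSet.Iic (c k))) - iyl (y k) (hy k) (LowerSet.Iic (c k)) with hf
  have hfn : ∀ k, (W • f k).1 0 ≤ |(W • iyl (y k) (hy k) (LowerSet.Iic (c k))).1 a -
        (W • iyl (y k) (hy k) (LowerSet.Iic (c k))).1 0| := by
    intro k
    rw [smul_apply_eq W _ a]
    simp only [hf]
    split_ifs
    · rw [smul_sub, BM.sub_apply, abs_sub_comm]; exact le_abs_self _
    · rw [smul_sub, BM.sub_apply]; exact le_abs_self _
  have hval : ∀ k z, (iyl (y k) (hy k) (LowerSet.Iic (c k))).1 z = if y k z ≤ c k then 1 else 0 := by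
    intro k z
    split_ifs with h
    · exact iy_of_mem h
    · exact iy_of_notMem h
  have hf0 : ∀ k z, 0 ≤ (f k).1 z := by
    intro k z
    simp only [hf]
    split_ifs with h <;> rw [BM.sub_apply, tr_apply, hval, hval, map_add] <;>
      split_ifs <;> first | (exfalso; linarith) | norm_num
  have hpt : ∀ z, |(ind _ (XX_meas hy c)).1 (a + z) - (ind _ (XX_meas hy c)).1 z| ≤
      ∑ k, (f k).1 z := by
    intro z
    have hs : ∀ k, (f k).1 z ≤ ∑ k, (f k).1 z := fun k =>
      Finset.single_le_sum (fun k _ => hf0 k z) (Finset.mem_univ k)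
    have hs0 : 0 ≤ ∑ k, (f k).1 z := Finset.sum_nonneg fun k _ => hf0 k z
    by_cases h1 : a + z ∈ XX y c <;> by_cases h2 : z ∈ XX y c
    · rw [ind_of_mem _ h1, ind_of_mem _ h2]; simpa using hs0
    · rw [ind_of_mem _ h1, ind_of_notMem _ h2]
      simp only [XX, Set.mem_setOf_eq, not_forall, not_le] at h2
      obtain ⟨k, hk⟩ := h2
      refine le_trans ?_ (hs k)
      have h3 := h1 k
      rw [map_add] at h3
      simp only [hf]
      rw [if_neg (by linarith), BM.sub_apply, tr_apply, hval, hval, map_add, if_pos h3,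
        if_neg (by linarith)]
      norm_num
    · rw [ind_of_notMem _ h1, ind_of_mem _ h2]
      simp only [XX, Set.mem_setOf_eq, not_forall, not_le] at h1
      obtain ⟨k, hk⟩ := h1
      refine le_trans ?_ (hs k)
      have h3 := h2 k
      rw [map_add] at hk
      simp only [hf]
      rw [if_pos (by linarith), BM.sub_apply, tr_apply, hval, hval, map_add, if_pos h3,
        if_neg (by linarith)]
      norm_num
    · rw [ind_of_notMem _ h1, ind_of_notMem _ h2]; simpa using hs0
  refine le_trans ?_ (Finset.sum_le_sum fun k _ => hfn k)
  rw [← BM.sum_apply, ← Finset.smul_sum, smul_apply_eq W _ a, ← BM.sub_apply, ← smul_sub, abs_le]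
  constructor
  · rw [neg_le, ← BM.neg_apply, ← smul_neg]
    refine hW.isPos.mono (fun z => ?_) 0
    have := (abs_le.1 (hpt z)).1
    rw [BM.sum_apply, BM.neg_apply, BM.sub_apply, tr_apply]
    linarith
  · refine hW.isPos.mono (fun z => ?_) 0
    have := (abs_le.1 (hpt z)).2
    rw [BM.sum_apply, BM.sub_apply, tr_apply]
    linarith

theorem tr_XX {y : κ → E →+ ℝ} (hy : ∀ k, Measurable (y k)) (c : κ → ℝ) (x : E) :
    tr x (ind _ (XX_meas hy c)) = ind _ (XX_meas hy (fun k => c k - y k x)) := by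
  ext z
  rw [tr_apply]
  by_cases h : x + z ∈ XX y c
  · have h2 : z ∈ XX y (fun k => c k - y k x) := fun k => by
      have := h k; rw [map_add] at this; linarith
    rw [ind_of_mem _ h, ind_of_mem _ h2]
  · have h2 : z ∉ XX y (fun k => c k - y k x) := fun h' => h fun k => by
      have := h' k; rw [map_add]; linarith
    rw [ind_of_notMem _ h, ind_of_notMem _ h2]

theorem abs_b_le {W : OA E} (hW : IsPr W) {y : κ → E →+ ℝ} (hy : ∀ k, Measurable (y k))
    (c : κ → ℝ) {s : ℝ} (hs : 0 ≤ s) (V : Measure E) [IsProbabilityMeasure V]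
    (hV : ∀ k, V.real (SS W (y k) (hy k) s) ≤ s) (x : E) :
    |((op V - 1) • W • ind _ (XX_meas hy c)).1 x| ≤ 2 * Fintype.card κ * s := by
  rw [smul_apply_eq, tr_smul, tr_XX hy]
  generalize (fun k => c k - y k x) = c
  rw [sub_one_apply (isPr_op V)]
  set F := W • ind _ (XX_meas hy c) with hF
  set I : κ → BM E := fun k => ind _ (SS_meas hW (y k) (hy k) s) with hI
  have hp := isPr_op V
  have hb : ∀ a, |F.1 a - F.1 0| ≤ (∑ k, (BM.const s + I k)).1 a := by
    intro a
    refine (abs_XX_sub_le hW hy c a).trans ?_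
    rw [BM.sum_apply]
    exact Finset.sum_le_sum fun k _ => abs_le_SS hW hs _ a
  have hsum : (op V • ∑ k, (BM.const s + I k)).1 0 ≤ 2 * Fintype.card κ * s := by
    rw [Finset.smul_sum, BM.sum_apply]
    have : ∀ k, (op V • (BM.const s + I k)).1 0 ≤ 2 * s := by
      intro k
      rw [smul_add, BM.add_apply, hp.const, hI, Rep.ind (μ := V) (fun _ _ => rfl)]
      linarith [hV k]
    refine (Finset.sum_le_sum fun k _ => this k).trans (le_of_eq ?_)
    simp; ring
  have h1 := hp.isPos.mono (f := F - BM.const (F.1 0)) (g := ∑ k, (BM.const s + I k)) (fun a => by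
    have := (abs_le.1 (hb a)).2
    rw [BM.sub_apply, BM.const_apply]; exact this) 0
  have h2 := hp.isPos.mono (f := - (F - BM.const (F.1 0))) (g := ∑ k, (BM.const s + I k)) (fun a => by
    have := (abs_le.1 (hb a)).1
    rw [BM.neg_apply, BM.sub_apply, BM.const_apply]; linarith) 0
  rw [smul_neg, BM.neg_apply] at h2
  rw [abs_le]
  constructor <;> linarith

end rogozin
end
end S4

namespace S4
noncomputable section
section gibbs
variable {E : Type*} [AddCommGroup E] [MeasurableSpace E] [MeasurableAdd₂ E]
variable {ι : Type*} [Fintype ι] [DecidableEq ι]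

/-- Bernoulli weights -/
def wt (α : ℝ) (B : Finset ι) : ℝ := ∏ j, if j ∈ B then α else 1 - α

theorem wt_nonneg {α : ℝ} (h0 : 0 ≤ α) (h1 : α ≤ 1) (B : Finset ι) : 0 ≤ wt α B :=
  Finset.prod_nonneg fun j _ => by split_ifs <;> linarith

theorem gen_expand {R : Type*} [CommRing R] [Algebra ℝ R] (β γ : ι → ℝ) (v : ι → R) :
    ∑ B : Finset ι, (∏ j, if j ∈ B then β j else γ j) • ∏ j ∈ B, v j =
      ∏ j, (β j • v j + γ j • (1 : R)) := by
  rw [Finset.prod_add, Finset.powerset_univ]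
  refine Finset.sum_congr rfl fun B _ => ?_
  rw [Finset.prod_ite]
  have e1 : Finset.univ.filter (fun j => j ∈ B) = B := by ext; simp
  have e2 : Finset.univ.filter (fun j => j ∉ B) = Finset.univ \ B := by ext; simp
  rw [e1, e2]
  simp only [Algebra.smul_def, mul_one, Finset.prod_mul_distrib, map_mul, map_prod]
  ring

theorem wt_sum (α : ℝ) : ∑ B : Finset ι, wt α B = 1 := by
  have := gen_expand (R := ℝ) (fun _ : ι => α) (fun _ => 1 - α) (fun _ => 1)
  simpa [wt] using this

theorem wt_prod (α : ℝ) (f g : ι → ℝ) :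
    ∑ B : Finset ι, wt α B * ∏ j, (if j ∈ B then f j else g j) =
      ∏ j, (α * f j + (1 - α) * g j) := by
  have := gen_expand (R := ℝ) (fun j : ι => α * f j) (fun j => (1 - α) * g j) (fun _ => 1)
  simp only [smul_eq_mul, Finset.prod_const_one, mul_one] at this
  rw [← this]
  refine Finset.sum_congr rfl fun B _ => ?_
  rw [wt, ← Finset.prod_mul_distrib]
  refine Finset.prod_congr rfl fun j _ => ?_
  split_ifs <;> rfl

theorem wt_expand (α : ℝ) (v : ι → OA E) :
    ∑ B : Finset ι, wt α B • ∏ j ∈ B, v j = ∏ j, Uc α (v j) := by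
  have := gen_expand (R := OA E) (fun _ : ι => α) (fun _ => 1 - α) v
  simp only [wt, this]
  refine Finset.prod_congr rfl fun j _ => ?_
  rw [Uc, add_comm]

theorem wt_expand_i (α : ℝ) (v : ι → OA E) (i : ι) :
    ∑ B : Finset ι, (wt α B * ((if i ∈ B then 1 else 0) - α)) • ∏ j ∈ B, v j =
      (α * (1 - α)) • ((v i - 1) * ∏ j ∈ Finset.univ.erase i, Uc α (v j)) := by
  have := gen_expand (R := OA E) (fun j : ι => if j = i then α * (1 - α) else α)
    (fun j => if j = i then -(α * (1 - α)) else 1 - α) v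
  rw [← Finset.mul_prod_erase _ _ (Finset.mem_univ i)] at this
  have e : ∀ B : Finset ι, wt α B * ((if i ∈ B then 1 else 0) - α) =
      ∏ j, if j ∈ B then (if j = i then α * (1 - α) else α) else
        (if j = i then -(α * (1 - α)) else 1 - α) := by
    intro B
    rw [wt, ← Finset.mul_prod_erase _ _ (Finset.mem_univ i),
      ← Finset.mul_prod_erase _ _ (Finset.mem_univ i)]
    have : ∏ x ∈ Finset.univ.erase i, (if x ∈ B then (if x = i then α * (1 - α) else α) else
        (if x = i then -(α * (1 - α)) else 1 - α)) =
        ∏ x ∈ Finset.univ.erase i, (if x ∈ B then α else 1 - α) := by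
      refine Finset.prod_congr rfl fun j hj => ?_
      rw [if_neg (Finset.ne_of_mem_erase hj), if_neg (Finset.ne_of_mem_erase hj)]
    rw [this]
    by_cases hi : i ∈ B <;> simp [hi] <;> ring
  simp only [e, this]
  have : ∏ x ∈ Finset.univ.erase i, ((if x = i then α * (1 - α) else α) • v x +
        (if x = i then -(α * (1 - α)) else 1 - α) • (1 : OA E)) =
        ∏ x ∈ Finset.univ.erase i, Uc α (v x) := by
    refine Finset.prod_congr rfl fun j hj => ?_
    rw [if_neg (Finset.ne_of_mem_erase hj), if_neg (Finset.ne_of_mem_erase hj), Uc, add_comm]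
  rw [this]
  simp only [if_true, neg_smul, ← sub_eq_add_neg, ← smul_sub, smul_mul_assoc]

theorem wt_expand_mem (α : ℝ) (v : ι → OA E) (i : ι) :
    ∑ B : Finset ι, (wt α B * (if i ∈ B then 1 else 0)) • ∏ j ∈ B, v j =
      α • (v i * ∏ j ∈ Finset.univ.erase i, Uc α (v j)) := by
  have h1 := wt_expand_i α v i
  have h2 := wt_expand α v
  simp only [mul_sub, sub_smul, Finset.sum_sub_distrib] at h1
  have h3 : ∑ B : Finset ι, (wt α B * α) • ∏ j ∈ B, v j = α • ∏ j, Uc α (v j) := by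
    rw [← h2, Finset.smul_sum]
    refine Finset.sum_congr rfl fun B _ => ?_
    rw [smul_smul, mul_comm]
  rw [h3, sub_eq_iff_eq_add] at h1
  rw [h1, ← Finset.mul_prod_erase _ _ (Finset.mem_univ i)]
  generalize ∏ x ∈ Finset.univ.erase i, Uc α (v x) = P
  rw [Uc]
  simp only [Algebra.smul_def, map_mul, map_sub, map_one]
  ring

/-- the functional to estimate -/
def TT (α : ℝ) (v : ι → OA E) (b : ι → BM E) : ℝ :=
  ∑ i, (((v i - 1) * ∏ j ∈ Finset.univ.erase i, Uc α (v j)) • b i).1 0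

theorem TT_add (α : ℝ) (v : ι → OA E) (b c : ι → BM E) :
    TT α v (b + c) = TT α v b + TT α v c := by
  simp only [TT, Pi.add_apply, smul_add, BM.add_apply, Finset.sum_add_distrib]

theorem TT_neg (α : ℝ) (v : ι → OA E) (b : ι → BM E) :
    TT α v (-b) = - TT α v b := by
  simp only [TT, Pi.neg_apply, smul_neg, BM.neg_apply, Finset.sum_neg_distrib]

theorem TT_zero (α : ℝ) (v : ι → OA E) : TT α v (0 : ι → BM E) = 0 := by
  simp only [TT, Pi.zero_apply, smul_zero, BM.zero_apply, Finset.sum_const_zero]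

theorem TT_sum {J : Type*} (s : Finset J) (α : ℝ) (v : ι → OA E) (b : J → ι → BM E) :
    TT α v (∑ j ∈ s, b j) = ∑ j ∈ s, TT α v (b j) := by
  classical
  induction s using Finset.induction_on with
  | empty => simp [TT_zero]
  | insert a s ha ih => rw [Finset.sum_insert ha, Finset.sum_insert ha, TT_add, ih]

theorem apply_sum_smul {J : Type*} (s : Finset J) (a : J → ℝ) (u : J → OA E) (g : BM E) (x : E) :
    ((∑ j ∈ s, a j • u j) • g).1 x = ∑ j ∈ s, a j * (u j • g).1 x := by
  rw [Finset.sum_smul, BM.sum_apply]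
  refine Finset.sum_congr rfl fun j _ => ?_
  rw [smul_assoc, BM.smul_apply]

theorem TT_eq (α : ℝ) (v : ι → OA E) (b : ι → BM E) :
    α * (1 - α) * TT α v b = ∑ B : Finset ι, wt α B *
      ((∏ j ∈ B, v j) • ∑ i, (((if i ∈ B then 1 else 0) - α : ℝ)) • b i).1 0 := by
  rw [TT, Finset.mul_sum]
  have : ∀ i, α * (1 - α) * (((v i - 1) * ∏ j ∈ Finset.univ.erase i, Uc α (v j)) • b i).1 0 =
      ∑ B : Finset ι, (wt α B * ((if i ∈ B then 1 else 0) - α)) * ((∏ j ∈ B, v j) • b i).1 0 := by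
    intro i
    rw [← apply_sum_smul, wt_expand_i, smul_assoc, BM.smul_apply]
  simp only [this]
  rw [Finset.sum_comm]
  refine Finset.sum_congr rfl fun B _ => ?_
  rw [Finset.smul_sum, BM.sum_apply, Finset.mul_sum]
  refine Finset.sum_congr rfl fun i _ => ?_
  rw [smul_comm, BM.smul_apply]; ring

theorem mgf_le {α s : ℝ} (h0 : 0 ≤ α) (h1 : α ≤ 1) (hs : |s| ≤ 1) :
    α * Real.exp ((1 - α) * s) + (1 - α) * Real.exp (-α * s) ≤ Real.exp (α * s ^ 2) := by
  have h2 : Real.exp s ≤ 1 + s + s ^ 2 := by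
    have := Real.abs_exp_sub_one_sub_id_le hs
    linarith [(abs_le.1 this).2]
  have e : α * Real.exp ((1 - α) * s) + (1 - α) * Real.exp (-α * s) =
      Real.exp (-α * s) * (α * Real.exp s + (1 - α)) := by
    have : (1 - α) * s = -α * s + s := by ring
    rw [this, Real.exp_add]; ring
  rw [e]
  have h3 : α * Real.exp s + (1 - α) ≤ Real.exp (α * s + α * s ^ 2) := by
    have := Real.add_one_le_exp (α * s + α * s ^ 2)
    nlinarith
  calc _ ≤ Real.exp (-α * s) * Real.exp (α * s + α * s ^ 2) := by gcongr
    _ = _ := by rw [← Real.exp_add]; ring_nf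

theorem gibbs_aux {α : ℝ} (h0 : 0 ≤ α) (h1 : α ≤ 1) {v : ι → OA E} (hv : ∀ i, IsPr (v i))
    {C : Type*} [Fintype C] [Nonempty C] (Δ : C → ι → ℝ) {h A : ℝ} (hh : 0 < h)
    (hΔ : ∀ c i, |Δ c i| ≤ h) (hA : ∀ c, α * ∑ i, Δ c i ^ 2 ≤ A * h ^ 2)
    (b : ι → BM E) (hb : ∀ x, ∃ c, ∀ i, (b i).1 x = Δ c i) :
    α * (1 - α) * TT α v b ≤ h * (Real.log (Fintype.card C) + Real.exp A) := by
  set M : ℝ := (Fintype.card C : ℝ) with hM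
  have hMpos : 0 < M := by rw [hM]; exact_mod_cast Fintype.card_pos
  set Z : C → Finset ι → ℝ := fun c B => ∑ i, ((if i ∈ B then 1 else 0) - α) * Δ c i with hZ
  have hmgf : ∀ c, ∑ B : Finset ι, wt α B * Real.exp (Z c B / h) ≤ Real.exp A := by
    intro c
    have e : ∀ B : Finset ι, Real.exp (Z c B / h) = ∏ j, (if j ∈ B then
        Real.exp ((1 - α) * (Δ c j / h)) else Real.exp (-α * (Δ c j / h))) := by
      intro B
      rw [hZ, Finset.sum_div, Real.exp_sum]
      refine Finset.prod_congr rfl fun j _ => ?_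
      split_ifs <;> congr 1 <;> ring
    simp only [e]
    rw [wt_prod]
    calc _ ≤ ∏ j, Real.exp (α * (Δ c j / h) ^ 2) := by
          refine Finset.prod_le_prod (fun j _ => ?_) fun j _ => ?_
          · have : 0 ≤ 1 - α := by linarith
            positivity
          · refine mgf_le h0 h1 ?_
            rw [abs_div, abs_of_pos hh, div_le_one hh]; exact hΔ c j
      _ = Real.exp (α * (∑ j, Δ c j ^ 2) / h ^ 2) := by
          rw [← Real.exp_sum]; congr 1
          rw [Finset.mul_sum, Finset.sum_div]
          refine Finset.sum_congr rfl fun j _ => by rw [div_pow, mul_div_assoc]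
      _ ≤ _ := by
          gcongr
          rw [div_le_iff₀ (by positivity)]; exact hA c
  rw [TT_eq]
  have hZb : ∀ c B, Z c B ≤ h * (Real.log M + 1 / M * ∑ c', Real.exp (Z c' B / h)) := by
    intro c B
    have h3 : Z c B / h - Real.log M + 1 ≤ Real.exp (Z c B / h) / M := by
      have := Real.add_one_le_exp (Z c B / h - Real.log M)
      rwa [Real.exp_sub, Real.exp_log hMpos] at this
    have h4 : Real.exp (Z c B / h) ≤ ∑ c', Real.exp (Z c' B / h) :=
      Finset.single_le_sum (f := fun c' => Real.exp (Z c' B / h)) (fun _ _ => (Real.exp_pos _).le) (Finset.mem_univ c)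
    have h5 : Z c B / h ≤ Real.log M + 1 / M * ∑ c', Real.exp (Z c' B / h) := by
      have : Real.exp (Z c B / h) / M ≤ 1 / M * ∑ c', Real.exp (Z c' B / h) := by
        rw [div_eq_inv_mul, one_div]; gcongr
      linarith
    rw [div_le_iff₀ hh] at h5; linarith
  calc _ ≤ ∑ B : Finset ι, wt α B * (h * (Real.log M + 1 / M * ∑ c', Real.exp (Z c' B / h))) := by
        refine Finset.sum_le_sum fun B _ => mul_le_mul_of_nonneg_left ?_ (wt_nonneg h0 h1 B)
        refine (IsPr.prod B v fun i _ => hv i).le_const (fun x => ?_) 0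
        obtain ⟨c, hc⟩ := hb x
        refine le_trans (le_of_eq ?_) (hZb c B)
        rw [BM.sum_apply]
        refine Finset.sum_congr rfl fun i _ => ?_
        rw [BM.smul_apply, hc i]
    _ = h * (Real.log M * ∑ B : Finset ι, wt α B) +
        h * (1 / M * ∑ c', ∑ B : Finset ι, wt α B * Real.exp (Z c' B / h)) := by
        rw [Finset.sum_comm]
        simp only [Finset.mul_sum]
        rw [← Finset.sum_add_distrib]
        refine Finset.sum_congr rfl fun B _ => ?_
        rw [mul_add, mul_add, Finset.mul_sum, Finset.mul_sum]
        congr 1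
        · ring
        · refine Finset.sum_congr rfl fun c _ => by ring
    _ ≤ h * Real.log M + h * (1 / M * ∑ c' : C, Real.exp A) := by
        rw [wt_sum, mul_one]
        gcongr with c _
        exact hmgf c
    _ = _ := by
        rw [Finset.sum_const, Finset.card_univ, nsmul_eq_mul, ← hM]
        field_simp

theorem gibbs {α : ℝ} (h0 : 0 ≤ α) (h1 : α ≤ 1) {v : ι → OA E} (hv : ∀ i, IsPr (v i))
    {C : Type*} [Fintype C] (code : E → C) {h A : ℝ} (hh : 0 < h) (hA0 : 0 ≤ A)
    (b : ι → BM E) (hc : ∀ x x', code x = code x' → ∀ i, (b i).1 x = (b i).1 x')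
    (hb : ∀ i x, |(b i).1 x| ≤ h) (hA : ∀ x, α * ∑ i, (b i).1 x ^ 2 ≤ A * h ^ 2) :
    α * (1 - α) * |TT α v b| ≤ h * (Real.log (Fintype.card C) + Real.exp A) := by
  classical
  haveI : Nonempty C := ⟨code 0⟩
  set Δ : C → ι → ℝ := fun c i => if h : ∃ x, code x = c then (b i).1 h.choose else 0 with hΔ
  have key : ∀ x, ∃ c, ∀ i, (b i).1 x = Δ c i := by
    intro x
    refine ⟨code x, fun i => ?_⟩
    have hx : ∃ x', code x' = code x := ⟨x, rfl⟩
    simp only [hΔ, dif_pos hx]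
    exact hc _ _ hx.choose_spec.symm i
  have k1 : ∀ c i, |Δ c i| ≤ h := by
    intro c i; simp only [hΔ]; split_ifs
    · exact hb _ _
    · simpa using hh.le
  have k2 : ∀ c, α * ∑ i, Δ c i ^ 2 ≤ A * h ^ 2 := by
    intro c; simp only [hΔ]; split_ifs
    · exact hA _
    · simp; positivity
  have r1 := gibbs_aux h0 h1 hv Δ hh k1 k2 b key
  have r2 := gibbs_aux h0 h1 hv (-Δ) hh (fun c i => by simpa using k1 c i)
    (fun c => by simpa using k2 c) (-b) (fun x => by
      obtain ⟨c, hc⟩ := key x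
      exact ⟨c, fun i => by simp [BM.neg_apply, hc i]⟩)
  rw [TT_neg] at r2
  have : 0 ≤ α * (1 - α) := mul_nonneg h0 (by linarith)
  rcases abs_cases (TT α v b) with ⟨e, _⟩ | ⟨e, _⟩ <;> rw [e] <;> assumption

end gibbs
end
end S4

namespace S4
noncomputable section
section codes
variable {E : Type*} [AddCommGroup E] [MeasurableSpace E] [MeasurableAdd₂ E]

/-- number of code values -/
def Nn (δ : ℝ) : ℕ := ⌊2 / δ⌋₊ + 1

structure Coding (W' Wp : OA E) (y : E →+ ℝ) (hy : Measurable y) (c δ : ℝ) where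
  /-- the code -/
  cd : ℝ → Fin (Nn δ) × Fin (Nn δ)
  meas : Measurable cd
  ord : ∀ e, {t | cd t = (e, e)}.OrdConnected
  m1 : ∀ e, (W' • iy y hy {t | cd t = (e, e)} (meas (measurableSet_singleton (e, e)))).1 0 ≤ δ
  m2 : ∀ e, (Wp • iy y hy {t | cd (c - t) = (e, e)}
    ((meas.comp (measurable_const.sub measurable_id)) (measurableSet_singleton (e, e)))).1 0 ≤ δ
  sep : ∀ t t', cd t = cd t' → t = t' ∨ ∃ e, cd t = (e, e)

theorem exists_coding {W' Wp : OA E} (h' : IsPr W') (hp : IsPr Wp) (y : E →+ ℝ)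
    (hy : Measurable y) (c : ℝ) {δ : ℝ} (hδ : 0 < δ) : Nonempty (Coding W' Wp y hy c δ) := by
  obtain ⟨μ, hμ, rμ⟩ := h'
  obtain ⟨ν, hν, rν⟩ := hp
  have hcy : Measurable (fun x => c - y x) := measurable_const.sub hy
  haveI : IsProbabilityMeasure (μ.map y) := Measure.isProbabilityMeasure_map hy.aemeasurable
  haveI : IsProbabilityMeasure (ν.map (fun x => c - y x)) :=
    Measure.isProbabilityMeasure_map hcy.aemeasurable
  set ρ : Measure ℝ := μ.map y + ν.map (fun x => c - y x) with hρ
  have hreal : ∀ s, ρ.real s = (μ.map y).real s + (ν.map (fun x => c - y x)).real s := fun s => by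
    rw [hρ, measureReal_add_apply]
  have hle2 : ∀ s, ρ.real s ≤ 2 := fun s => by
    rw [hreal]
    have := measureReal_le_one (μ := μ.map y) (s := s)
    have := measureReal_le_one (μ := ν.map (fun x => c - y x)) (s := s)
    linarith
  have hlt : ∀ s, ⌊ρ.real s / δ⌋₊ < Nn δ := fun s => by
    rw [Nn, Nat.lt_succ_iff]
    exact Nat.floor_le_floor (by gcongr; exact hle2 s)
  have hmono : ∀ {s t : Set ℝ}, s ⊆ t → ⌊ρ.real s / δ⌋₊ ≤ ⌊ρ.real t / δ⌋₊ := fun h =>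
    Nat.floor_le_floor (div_le_div_of_nonneg_right (measureReal_mono h) hδ.le)
  set cd : ℝ → Fin (Nn δ) × Fin (Nn δ) := fun t =>
    (⟨⌊ρ.real (Set.Iio t) / δ⌋₊, hlt _⟩, ⟨⌊ρ.real (Set.Iic t) / δ⌋₊, hlt _⟩) with hcd
  have m1 : Monotone fun t => (cd t).1 := fun a b hab =>
    hmono (Set.Iio_subset_Iio hab)
  have m2 : Monotone fun t => (cd t).2 := fun a b hab =>
    hmono (Set.Iic_subset_Iic.2 hab)
  have meas : Measurable cd := m1.measurable.prodMk m2.measurable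
  have ord : ∀ e, {t | cd t = (e, e)}.OrdConnected := by
    intro e
    refine ⟨fun a ha b hb t ht => ?_⟩
    simp only [Set.mem_setOf_eq] at ha hb ⊢
    refine Prod.ext (le_antisymm ?_ ?_) (le_antisymm ?_ ?_)
    · have := m1 ht.2; simp only [hb] at this; exact this
    · have := m1 ht.1; simp only [ha] at this; exact this
    · have := m2 ht.2; simp only [hb] at this; exact this
    · have := m2 ht.1; simp only [ha] at this; exact this
  have mass : ∀ e, ρ.real {t | cd t = (e, e)} ≤ δ := by
    intro e
    refine meas_le_of_Icc ρ (meas (measurableSet_singleton (e, e))) hδ.le fun a ha b hb hab => ?_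
    have ha : cd a = (e, e) := ha
    have hb : cd b = (e, e) := hb
    have ha1 : ⌊ρ.real (Set.Iio a) / δ⌋₊ = e := by
      have := congrArg (fun p => (p.1 : ℕ)) ha; exact this
    have hb1 : ⌊ρ.real (Set.Iic b) / δ⌋₊ = e := by
      have := congrArg (fun p => (p.2 : ℕ)) hb; exact this
    have e1 : Set.Icc a b = Set.Iic b \ Set.Iio a := by
      ext t; simp [and_comm]
    rw [e1, measureReal_diff (show Set.Iio a ⊆ Set.Iic b from fun t ht => le_trans (le_of_lt (Set.mem_Iio.1 ht)) hab) measurableSet_Iio]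
    have h1 := Nat.floor_le (a := ρ.real (Set.Iio a) / δ) (by positivity)
    have h2 := Nat.lt_floor_add_one (ρ.real (Set.Iic b) / δ)
    rw [ha1, le_div_iff₀ hδ] at h1
    rw [hb1, div_lt_iff₀ hδ] at h2
    linarith
  refine ⟨⟨cd, meas, ord, ?_, ?_, ?_⟩⟩
  · intro e
    have hm : MeasurableSet {t | cd t = (e, e)} := meas (measurableSet_singleton (e, e))
    refine le_trans ?_ (mass e)
    unfold iy
    rw [Rep.ind rμ, hreal, map_measureReal_apply hy hm]
    have : 0 ≤ (ν.map (fun x => c - y x)).real {t | cd t = (e, e)} := measureReal_nonneg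
    linarith
  · intro e
    have hm : MeasurableSet {t | cd t = (e, e)} := meas (measurableSet_singleton (e, e))
    refine le_trans ?_ (mass e)
    unfold iy
    rw [Rep.ind rν, hreal, map_measureReal_apply hcy hm]
    have : 0 ≤ (μ.map y).real {t | cd t = (e, e)} := measureReal_nonneg
    have e1 : y ⁻¹' {t | cd (c - t) = (e, e)} = (fun x => c - y x) ⁻¹' {t | cd t = (e, e)} := rfl
    rw [e1]
    linarith
  · have main : ∀ t t', t < t' → cd t = cd t' → ∃ e, cd t = (e, e) := by
      intro t t' hlt' h
      refine ⟨(cd t).1, Prod.ext rfl (le_antisymm ?_ ?_)⟩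
      · have h1 : (cd t).2 ≤ (cd t').1 := hmono (fun s hs => lt_of_le_of_lt hs hlt')
        rwa [← h] at h1
      · exact hmono Set.Iio_subset_Iic_self
    intro t t' h
    rcases lt_trichotomy t t' with h1 | h1 | h1
    · exact Or.inr (main _ _ h1 h)
    · exact Or.inl h1
    · obtain ⟨e, he⟩ := main _ _ h1 h.symm
      exact Or.inr ⟨e, h.trans he⟩

section rep
variable {C : Type*} (full : E → C)

open Classical in
/-- representative point of a cell -/
def pick (c : C) : E := if h : ∃ x, full x = c then h.choose else 0

/-- representative of the cell of `x` -/
def rp (x : E) : E := pick full (full x)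

theorem full_rp (x : E) : full (rp full x) = full x := by
  have h : ∃ x', full x' = full x := ⟨x, rfl⟩
  rw [rp, pick, dif_pos h]
  exact h.choose_spec

theorem rp_congr {x x' : E} (h : full x = full x') : rp full x = rp full x' := by
  rw [rp, rp, h]

/-- composition with the representative map -/
def BM.cr [Finite C] [MeasurableSpace C] [MeasurableSingletonClass C] (hf : Measurable full)
    (g : BM E) : BM E :=
  ⟨fun x => g.1 (rp full x), (measurable_of_finite (fun c => g.1 (pick full c))).comp hf, by
    obtain ⟨C, hC⟩ := g.bdd
    exact ⟨C, fun x => hC _⟩⟩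

theorem BM.cr_apply [Finite C] [MeasurableSpace C] [MeasurableSingletonClass C]
    (hf : Measurable full) (g : BM E) (x : E) : (BM.cr full hf g).1 x = g.1 (rp full x) := rfl
end rep

section full
variable {κ : Type*} [Fintype κ] {W' Wp : OA E} {y : κ → E →+ ℝ} {hy : ∀ k, Measurable (y k)}
  {c : κ → ℝ} {δ : ℝ}

/-- cell indicator -/
def Coding.cA {y : E →+ ℝ} {hy : Measurable y} {c : ℝ} (Cd : Coding W' Wp y hy c δ)
    (e : Fin (Nn δ)) : BM E :=
  iy y hy {t | Cd.cd t = (e, e)} (Cd.meas (measurableSet_singleton (e, e)))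

/-- shifted cell indicator -/
def Coding.cD {y : E →+ ℝ} {hy : Measurable y} {c : ℝ} (Cd : Coding W' Wp y hy c δ)
    (e : Fin (Nn δ)) : BM E :=
  iy y hy {t | Cd.cd (c - t) = (e, e)}
    ((Cd.meas.comp (measurable_const.sub measurable_id)) (measurableSet_singleton (e, e)))

theorem Coding.cA_nonneg {y : E →+ ℝ} {hy : Measurable y} {c : ℝ} (Cd : Coding W' Wp y hy c δ)
    (e : Fin (Nn δ)) (x : E) : 0 ≤ (Cd.cA e).1 x := iy_nonneg _ _ _ _ _

theorem Coding.cD_nonneg {y : E →+ ℝ} {hy : Measurable y} {c : ℝ} (Cd : Coding W' Wp y hy c δ)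
    (e : Fin (Nn δ)) (x : E) : 0 ≤ (Cd.cD e).1 x := iy_nonneg _ _ _ _ _

theorem Coding.cA_sum {y : E →+ ℝ} {hy : Measurable y} {c : ℝ} (Cd : Coding W' Wp y hy c δ)
    (x : E) : (∑ e, Cd.cA e).1 x ≤ 1 := by
  classical
  rw [BM.sum_apply]
  have : ∀ e, (Cd.cA e).1 x ≤ if e = (Cd.cd (y x)).1 then 1 else 0 := by
    intro e
    split_ifs with h
    · exact iy_le_one _ _ _ _ _
    · refine le_of_eq (iy_of_notMem fun h' => h ?_)
      simp only [Set.mem_setOf_eq] at h'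
      rw [h']
  refine (Finset.sum_le_sum fun e _ => this e).trans ?_
  simp

theorem Coding.cD_sum {y : E →+ ℝ} {hy : Measurable y} {c : ℝ} (Cd : Coding W' Wp y hy c δ)
    (x : E) : (∑ e, Cd.cD e).1 x ≤ 1 := by
  classical
  rw [BM.sum_apply]
  have : ∀ e, (Cd.cD e).1 x ≤ if e = (Cd.cd (c - y x)).1 then 1 else 0 := by
    intro e
    split_ifs with h
    · exact iy_le_one _ _ _ _ _
    · refine le_of_eq (iy_of_notMem fun h' => h ?_)
      simp only [Set.mem_setOf_eq] at h'
      rw [h']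
  refine (Finset.sum_le_sum fun e _ => this e).trans ?_
  simp

/-- the total code -/
def full (Cd : ∀ k, Coding W' Wp (y k) (hy k) (c k) δ) (x : E) : κ → Fin (Nn δ) × Fin (Nn δ) :=
  fun k => (Cd k).cd (y k x)

theorem full_meas (Cd : ∀ k, Coding W' Wp (y k) (hy k) (c k) δ) : Measurable (full Cd) :=
  measurable_pi_lambda _ fun k => (Cd k).meas.comp (hy k)

theorem full_diff (Cd : ∀ k, Coding W' Wp (y k) (hy k) (c k) δ) {x x' : E}
    (h : full Cd x = full Cd x') (z : E) :
    |(ind _ (XX_meas hy c)).1 (x + z) - (ind _ (XX_meas hy c)).1 (x' + z)| ≤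
      ∑ k, ∑ e, ((Cd k).cA e).1 x * ((Cd k).cD e).1 z := by
  have hnn : ∀ k, 0 ≤ ∑ e, ((Cd k).cA e).1 x * ((Cd k).cD e).1 z := fun k =>
    Finset.sum_nonneg fun e _ => mul_nonneg ((Cd k).cA_nonneg e x) ((Cd k).cD_nonneg e z)
  have key : ∀ {a b : E} (k : κ), y k (a + z) ≤ c k → c k < y k (b + z) →
      (Cd k).cd (y k a) = (Cd k).cd (y k b) → (Cd k).cd (y k a) = (Cd k).cd (y k x) →
      1 ≤ ∑ k, ∑ e, ((Cd k).cA e).1 x * ((Cd k).cD e).1 z := by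
    intro a b k h1 h2 h3 h4
    rw [map_add] at h1 h2
    obtain ⟨e, he⟩ : ∃ e, (Cd k).cd (y k a) = (e, e) := by
      rcases (Cd k).sep _ _ h3 with h | h
      · exact absurd h (by intro h; linarith)
      · exact h
    have hm : (Cd k).cd (c k - y k z) = (e, e) :=
      ((Cd k).ord e).out (show (Cd k).cd (y k a) = (e, e) from he)
        (show (Cd k).cd (y k b) = (e, e) from h3 ▸ he) ⟨by linarith, by linarith⟩
    have e1 : ((Cd k).cA e).1 x = 1 := iy_of_mem (show (Cd k).cd (y k x) = (e, e) from h4 ▸ he)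
    have e2 : ((Cd k).cD e).1 z = 1 := iy_of_mem (show (Cd k).cd (c k - y k z) = (e, e) from hm)
    calc (1 : ℝ) = ((Cd k).cA e).1 x * ((Cd k).cD e).1 z := by rw [e1, e2, one_mul]
      _ ≤ ∑ e, ((Cd k).cA e).1 x * ((Cd k).cD e).1 z :=
        Finset.single_le_sum (f := fun e => ((Cd k).cA e).1 x * ((Cd k).cD e).1 z)
          (fun e _ => mul_nonneg ((Cd k).cA_nonneg e x) ((Cd k).cD_nonneg e z))
          (Finset.mem_univ e)
      _ ≤ _ := Finset.single_le_sum (f := fun k => ∑ e, ((Cd k).cA e).1 x * ((Cd k).cD e).1 z)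
          (fun k _ => hnn k) (Finset.mem_univ k)
  have hk : ∀ k, (Cd k).cd (y k x) = (Cd k).cd (y k x') := fun k => congrFun h k
  by_cases hx : x + z ∈ XX y c <;> by_cases hx' : x' + z ∈ XX y c
  · rw [ind_of_mem _ hx, ind_of_mem _ hx']; simpa using Finset.sum_nonneg fun k _ => hnn k
  · rw [ind_of_mem _ hx, ind_of_notMem _ hx']
    simp only [XX, Set.mem_setOf_eq, not_forall, not_le] at hx'
    obtain ⟨k, hk'⟩ := hx'
    simpa using key k (hx k) hk' (hk k) rfl
  · rw [ind_of_notMem _ hx, ind_of_mem _ hx']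
    simp only [XX, Set.mem_setOf_eq, not_forall, not_le] at hx
    obtain ⟨k, hk'⟩ := hx
    simpa using key k (hx' k) hk' (hk k).symm (hk k).symm
  · rw [ind_of_notMem _ hx, ind_of_notMem _ hx']; simpa using Finset.sum_nonneg fun k _ => hnn k

theorem full_diff_op (Cd : ∀ k, Coding W' Wp (y k) (hy k) (c k) δ) {x x' : E}
    (h : full Cd x = full Cd x') {P : OA E} (hP : IsPos P) :
    |(P • ind _ (XX_meas hy c)).1 x - (P • ind _ (XX_meas hy c)).1 x'| ≤
      ∑ k, ∑ e, ((Cd k).cA e).1 x * (P • (Cd k).cD e).1 0 := by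
  set g := ind _ (XX_meas hy c)
  set G : BM E := ∑ k, ∑ e, (((Cd k).cA e).1 x) • (Cd k).cD e with hG
  have hGz : ∀ z, G.1 z = ∑ k, ∑ e, ((Cd k).cA e).1 x * ((Cd k).cD e).1 z := by
    intro z; simp only [hG, BM.sum_apply, BM.smul_apply]
  have e1 : ∑ k, ∑ e, ((Cd k).cA e).1 x * (P • (Cd k).cD e).1 0 = (P • G).1 0 := by
    simp only [hG, Finset.smul_sum, BM.sum_apply]
    refine Finset.sum_congr rfl fun k _ => Finset.sum_congr rfl fun e _ => ?_
    rw [smul_comm, BM.smul_apply]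
  rw [e1, smul_apply_eq P g x, smul_apply_eq P g x', ← BM.sub_apply, ← smul_sub, abs_le]
  constructor
  · rw [← BM.neg_apply, ← smul_neg]
    refine hP.mono (fun z => ?_) 0
    have := (abs_le.1 (full_diff Cd h z)).1
    rw [BM.neg_apply, hGz, BM.sub_apply]; exact this
  · refine hP.mono (fun z => ?_) 0
    have := (abs_le.1 (full_diff Cd h z)).2
    rw [hGz, BM.sub_apply]; exact this

theorem full_diff_sq (Cd : ∀ k, Coding W' Wp (y k) (hy k) (c k) δ) (hδ : 0 ≤ δ) {x x' : E}
    (h : full Cd x = full Cd x') (hP : IsPr Wp) :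
    (Wp • (tr x (ind _ (XX_meas hy c)) - tr x' (ind _ (XX_meas hy c))) ^ 2).1 0 ≤
      Fintype.card κ * δ := by
  set g := ind _ (XX_meas hy c)
  set G : BM E := ∑ k, ∑ e, (((Cd k).cA e).1 x) • (Cd k).cD e with hG
  have hGz : ∀ z, G.1 z = ∑ k, ∑ e, ((Cd k).cA e).1 x * ((Cd k).cD e).1 z := by
    intro z; simp only [hG, BM.sum_apply, BM.smul_apply]
  have e1 : (Wp • G).1 0 = ∑ k, ∑ e, ((Cd k).cA e).1 x * (Wp • (Cd k).cD e).1 0 := by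
    simp only [hG, Finset.smul_sum, BM.sum_apply]
    refine Finset.sum_congr rfl fun k _ => Finset.sum_congr rfl fun e _ => ?_
    rw [smul_comm, BM.smul_apply]
  have h1 : (Wp • (tr x g - tr x' g) ^ 2).1 0 ≤ (Wp • G).1 0 := by
    refine hP.isPos.mono (fun z => ?_) 0
    have h2 := full_diff Cd h z
    rw [BM.sq_apply, BM.sub_apply, hGz, tr_apply, tr_apply]
    refine le_trans ?_ h2
    rw [← sq_abs]
    have h3 : |g.1 (x + z) - g.1 (x' + z)| ≤ 1 := by
      have a1 := ind_nonneg (XX_meas hy c) (x + z)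
      have a2 := ind_nonneg (XX_meas hy c) (x' + z)
      have a3 := ind_le_one (XX_meas hy c) (x + z)
      have a4 := ind_le_one (XX_meas hy c) (x' + z)
      rw [abs_le]; constructor <;> linarith
    have h4 := abs_nonneg (g.1 (x + z) - g.1 (x' + z))
    nlinarith
  refine h1.trans ?_
  rw [e1]
  have : ∀ k, ∑ e, ((Cd k).cA e).1 x * (Wp • (Cd k).cD e).1 0 ≤ δ := by
    intro k
    calc _ ≤ ∑ e, ((Cd k).cA e).1 x * δ := by
          refine Finset.sum_le_sum fun e _ => mul_le_mul_of_nonneg_left ((Cd k).m2 e)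
            ((Cd k).cA_nonneg e x)
      _ = (∑ e, (Cd k).cA e).1 x * δ := by rw [BM.sum_apply, Finset.sum_mul]
      _ ≤ 1 * δ := mul_le_mul_of_nonneg_right ((Cd k).cA_sum x) hδ
      _ = δ := one_mul _
  refine (Finset.sum_le_sum fun k _ => this k).trans ?_
  simp

end full
end codes
end
end S4

namespace S4
noncomputable section
section core
/-- setup for the core estimate -/
structure St (E : Type*) [AddCommGroup E] [MeasurableSpace E] [MeasurableAdd₂ E]
    (ι : Type*) [Fintype ι] [DecidableEq ι] (κ : Type*) [Fintype κ] where
  /-- measures -/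
  V : ι → Measure E
  hV : ∀ i, IsProbabilityMeasure (V i)
  /-- step -/
  η : ℝ
  hη : 0 < η
  hη' : Fintype.card ι * η ≤ 1 / 2
  /-- power -/
  l : ℕ
  /-- parameter -/
  α : ℝ
  hα0 : 0 ≤ α
  hα1 : α ≤ 1 / 2
  /-- `θ = τ^(-4)` -/
  τ : ℝ
  hτ : 1 ≤ τ
  hατ : α ≤ (l + 1) * η * τ ^ 4
  /-- functionals -/
  y : κ → E →+ ℝ
  hy : ∀ k, Measurable (y k)
  /-- thresholds -/
  c : κ → ℝ
  hκ : 1 ≤ Fintype.card κ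

variable {E : Type*} [AddCommGroup E] [MeasurableSpace E] [MeasurableAdd₂ E]
variable {ι : Type*} [Fintype ι] [DecidableEq ι] {κ : Type*} [Fintype κ]
namespace St
variable (S : St E ι κ)

instance (i : ι) : IsProbabilityMeasure (S.V i) := S.hV i

/-- operators -/
def v (i : ι) : OA E := op (S.V i)
/-- `W` -/
def W : OA E := Ub S.v S.η ^ S.l
/-- `W⁺` -/
def Wp : OA E := Ub S.v S.η ^ (S.l + 1)
/-- `W'` -/
def W' : OA E := ∏ i, Uc S.α (S.v i)
/-- `λ` -/
def lam : ℝ := (S.l + 1) * S.η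
/-- indicator of the polyhedron -/
def g : BM E := ind _ (XX_meas S.hy S.c)
/-- `b` -/
def b (i : ι) : BM E := (S.v i - 1) • S.W • S.g
/-- `K` -/
def K (_ : St E ι κ) : ℝ := Fintype.card κ

theorem K1 : 1 ≤ S.K := by unfold K; exact_mod_cast S.hκ
theorem lam_pos : 0 < S.lam := by have := S.hη; unfold lam; positivity
theorem hαl : S.α ≤ S.lam * S.τ ^ 4 := S.hατ
theorem prv (i : ι) : IsPr (S.v i) := isPr_op _
theorem prU : IsPr (Ub S.v S.η) := isPr_Ub S.prv S.hη.le (by linarith [S.hη'])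
theorem prW : IsPr S.W := S.prU.pow _
theorem prWp : IsPr S.Wp := S.prU.pow _
theorem prW' : IsPr S.W' := IsPr.prod _ _ fun i _ =>
  isPr_Uc (S.prv i) S.hα0 (by linarith [S.hα1])

theorem W_le {f : BM E} (hf : ∀ x, 0 ≤ f.1 x) (x : E) : (S.W • f).1 x ≤ 2 * (S.Wp • f).1 x := by
  have e : S.Wp = Ub S.v S.η * S.W := by rw [Wp, W, pow_succ, mul_comm]
  rw [e, mul_smul, Ub_eq, add_smul, BM.add_apply, smul_assoc, BM.smul_apply, one_smul, smul_assoc,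
    BM.smul_apply]
  have h1 : 0 ≤ (S.W • f).1 x := S.prW.isPos f hf x
  have h2 : 0 ≤ ((∑ i, S.v i) • S.W • f).1 x :=
    (IsPos.sum _ _ fun i _ => (S.prv i).isPos) _ (fun x => S.prW.isPos f hf x) x
  have h3 := S.hη
  have h4 := S.hη'
  have h5 : 0 ≤ S.η * ((∑ i, S.v i) • S.W • f).1 x := by positivity
  nlinarith

theorem g_nonneg (x : E) : 0 ≤ S.g.1 x := ind_nonneg _ x
theorem g_le (x : E) : S.g.1 x ≤ 1 := ind_le_one _ x

theorem b_apply (i : ι) (x : E) :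
    (S.b i).1 x = (S.v i • S.W • S.g).1 x - (S.W • S.g).1 x := by
  rw [b, sub_smul, one_smul, BM.sub_apply]

theorem b_le_one (i : ι) (x : E) : |(S.b i).1 x| ≤ 1 := by
  rw [b_apply]
  have a : ∀ x, 0 ≤ (S.W • S.g).1 x := S.prW.isPos _ S.g_nonneg
  have a' : ∀ x, (S.W • S.g).1 x ≤ 1 := S.prW.le_const S.g_le
  have c1 := (S.prv i).isPos _ a x
  have c2 := (S.prv i).le_const a' x
  have := a x
  have := a' x
  rw [abs_le]; constructor <;> linarith

theorem b_sq (x : E) : S.lam / 2 * ∑ i, (S.b i).1 x ^ 2 ≤ 1 := by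
  have h := bessel_diff S.prv S.hη.le S.hη' S.l S.g x
  refine h.trans (S.prWp.le_const (fun x => ?_) x)
  rw [BM.sq_apply]
  have := S.g_nonneg x
  have := S.g_le x
  nlinarith

theorem b_sq_diff {δ : ℝ} (hδ : 0 ≤ δ)
    (Cd : ∀ k, Coding S.W' S.Wp (S.y k) (S.hy k) (S.c k) δ) {x x' : E}
    (h : full Cd x = full Cd x') :
    S.lam / 2 * ∑ i, ((S.b i).1 x - (S.b i).1 x') ^ 2 ≤ S.K * δ := by
  have h1 := bessel_diff S.prv S.hη.le S.hη' S.l (tr x S.g - tr x' S.g) 0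
  have h2 := full_diff_sq Cd hδ h S.prWp
  have e : ∀ i, (((S.v i - 1) • Ub S.v S.η ^ S.l • (tr x S.g - tr x' S.g)).1 0) =
      (S.b i).1 x - (S.b i).1 x' := by
    intro i
    rw [b, smul_sub, smul_sub, BM.sub_apply, smul_apply_eq _ _ x, smul_apply_eq _ _ x', tr_smul,
      tr_smul]; rfl
  simp only [e] at h1
  exact h1.trans h2

/-- level-`u` goodness -/
def good (i : ι) (u : ℕ) : Prop :=
  ∀ k, (S.V i).real (SS S.W (S.y k) (S.hy k) (1 / 2 ^ u)) ≤ 1 / 2 ^ u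

open Classical in
/-- level of `i` -/
def lev (U : ℕ) (i : ι) : ℕ := Nat.findGreatest (S.good i) U

theorem good_zero (i : ι) : S.good i 0 := fun k => by
  simpa using measureReal_le_one

theorem lev_good (U : ℕ) (i : ι) : S.good i (S.lev U i) := by
  classical
  exact Nat.findGreatest_spec (Nat.zero_le U) (S.good_zero i)

theorem lev_le (U : ℕ) (i : ι) : S.lev U i ≤ U := by
  classical
  exact Nat.findGreatest_le _

theorem lev_not {U u : ℕ} {i : ι} (h : S.lev U i = u) (hu : u < U) : ¬ S.good i (u + 1) := by
  classical
  exact Nat.findGreatest_is_greatest (by rw [← h]; exact Nat.lt_succ_self _) hu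

theorem b_le (U : ℕ) (i : ι) (x : E) : |(S.b i).1 x| ≤ 2 * S.K * (1 / 2 ^ S.lev U i) :=
  abs_b_le S.prW S.hy S.c (by positivity) (S.V i) (S.lev_good U i) x

open Classical in
theorem count {U u : ℕ} (hu : u < U) :
    S.α * (Finset.univ.filter fun i => S.lev U i = u).card ≤ 32 * S.K * S.τ ^ 4 * 8 ^ u := by
  set s : ℝ := 1 / 2 ^ (u + 1) with hs
  have hs0 : 0 < s := by positivity
  have hl := S.lam_pos
  have h1 : ∀ k, ∑ i, (S.V i).real (SS S.W (S.y k) (S.hy k) s) ≤ 4 / (S.lam * s ^ 2) := fun k =>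
    rogozin S.V S.hη S.hη' S.l (S.y k) (S.hy k) hs0
  set F := Finset.univ.filter fun i => S.lev U i = u with hF
  have h2 : ∀ i ∈ F, s ≤ ∑ k, (S.V i).real (SS S.W (S.y k) (S.hy k) s) := by
    intro i hi
    rw [hF, Finset.mem_filter] at hi
    have := S.lev_not hi.2 hu
    simp only [good, not_forall, not_le] at this
    obtain ⟨k, hk⟩ := this
    exact hk.le.trans (Finset.single_le_sum
      (f := fun k => (S.V i).real (SS S.W (S.y k) (S.hy k) s))
      (fun k _ => measureReal_nonneg) (Finset.mem_univ k))
  have h3 : F.card * s ≤ S.K * (4 / (S.lam * s ^ 2)) := by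
    calc (F.card * s : ℝ) = ∑ i ∈ F, s := by rw [Finset.sum_const, nsmul_eq_mul]
      _ ≤ ∑ i ∈ F, ∑ k, (S.V i).real (SS S.W (S.y k) (S.hy k) s) := Finset.sum_le_sum h2
      _ ≤ ∑ i, ∑ k, (S.V i).real (SS S.W (S.y k) (S.hy k) s) :=
          Finset.sum_le_sum_of_subset_of_nonneg (Finset.subset_univ _)
            fun i _ _ => Finset.sum_nonneg fun k _ => measureReal_nonneg
      _ = ∑ k, ∑ i, (S.V i).real (SS S.W (S.y k) (S.hy k) s) := Finset.sum_comm
      _ ≤ ∑ k : κ, 4 / (S.lam * s ^ 2) := Finset.sum_le_sum fun k _ => h1 k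
      _ = _ := by simp [K]
  have h4 : (F.card : ℝ) ≤ 4 * S.K / (S.lam * s ^ 3) := by
    rw [le_div_iff₀ (by positivity)]
    have : S.K * (4 / (S.lam * s ^ 2)) * (S.lam * s ^ 2) = 4 * S.K := by field_simp
    calc (F.card : ℝ) * (S.lam * s ^ 3) = (F.card * s) * (S.lam * s ^ 2) := by ring
      _ ≤ S.K * (4 / (S.lam * s ^ 2)) * (S.lam * s ^ 2) := by gcongr
      _ = _ := this
  have hK := S.K1
  calc S.α * (F.card : ℝ) ≤ (S.lam * S.τ ^ 4) * (4 * S.K / (S.lam * s ^ 3)) := by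
        have := S.hτ
        have h5 := S.hαl
        gcongr
    _ = 32 * S.K * S.τ ^ 4 * 8 ^ u := by
        rw [hs, show (8 : ℝ) = 2 ^ 3 by norm_num, ← pow_mul]
        field_simp
        ring

end St
end core
end
end S4

namespace S4
noncomputable section
section core2
variable {E : Type*} [AddCommGroup E] [MeasurableSpace E] [MeasurableAdd₂ E]
variable {ι : Type*} [Fintype ι] [DecidableEq ι] {κ : Type*} [Fintype κ] [DecidableEq κ]
namespace St
variable (S : St E ι κ)

/-- `d_u` -/
def dd (u : ℕ) : ℝ := 1 / (4 * (S.τ ^ 16 * 2 ^ (4 * u)))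
/-- `δ_u` -/
def dl (u : ℕ) : ℝ := S.dd u ^ 4

theorem τ0 : 0 < S.τ := by linarith [S.hτ]
theorem dd_pos (u : ℕ) : 0 < S.dd u := by have := S.τ0; unfold dd; positivity
theorem dl_pos (u : ℕ) : 0 < S.dl u := pow_pos (S.dd_pos u) 4
theorem dl_eq (u : ℕ) : S.dl u = 1 / (256 * (S.τ ^ 64 * 2 ^ (16 * u))) := by
  have := S.τ0
  rw [dl, dd, div_pow, one_pow, mul_pow, mul_pow, ← pow_mul, ← pow_mul]
  rw [show 4 * u * 4 = 16 * u by ring]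
  norm_num

theorem dl_succ_le (u : ℕ) : S.dl (u + 1) ≤ S.dl u := by
  have := S.τ0
  rw [dl_eq, dl_eq]
  gcongr
  · norm_num
  · omega

/-- codings -/
def Cd (u : ℕ) (k : κ) : Coding S.W' S.Wp (S.y k) (S.hy k) (S.c k) (S.dl u) :=
  (exists_coding S.prW' S.prWp (S.y k) (S.hy k) (S.c k) (S.dl_pos u)).some

/-- `b_i ∘ rep_u` -/
def R (u : ℕ) (i : ι) : BM E := BM.cr (full (S.Cd u)) (full_meas _) (S.b i)

theorem log_Nn (u : ℕ) : Real.log (Nn (S.dl u)) ≤ (832 + 16 * u) * S.τ := by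
  have ht := S.hτ
  have ht0 := S.τ0
  have hd := S.dl_pos u
  have h1 : (Nn (S.dl u) : ℝ) ≤ 768 * (S.τ ^ 64 * 2 ^ (16 * u)) := by
    have : (Nn (S.dl u) : ℝ) ≤ 2 / S.dl u + 1 := by
      rw [Nn]; push_cast
      have := Nat.floor_le (a := 2 / S.dl u) (by positivity)
      linarith
    refine this.trans ?_
    rw [dl_eq]
    have h2 : (1 : ℝ) ≤ S.τ ^ 64 * 2 ^ (16 * u) := by
      have a1 : (1 : ℝ) ≤ S.τ ^ 64 := one_le_pow₀ ht
      have a2 : (1 : ℝ) ≤ 2 ^ (16 * u) := one_le_pow₀ (by norm_num)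
      nlinarith
    rw [div_div_eq_mul_div]
    linarith
  have hpos : (0 : ℝ) < Nn (S.dl u) := by rw [Nn]; positivity
  calc Real.log (Nn (S.dl u)) ≤ Real.log (768 * (S.τ ^ 64 * 2 ^ (16 * u))) :=
        Real.log_le_log hpos h1
    _ = Real.log 768 + (64 * Real.log S.τ + (16 * u) * Real.log 2) := by
        rw [Real.log_mul (by norm_num) (by positivity), Real.log_mul (by positivity) (by positivity),
          Real.log_pow, Real.log_pow]; push_cast; ring
    _ ≤ 768 + (64 * S.τ + (16 * u) * 1) := by
        have a1 := Real.log_le_sub_one_of_pos (show (0:ℝ) < 768 by norm_num)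
        have a2 := Real.log_le_sub_one_of_pos ht0
        have a3 := Real.log_le_sub_one_of_pos (show (0:ℝ) < 2 by norm_num)
        gcongr <;> linarith
    _ ≤ _ := by nlinarith [(Nat.cast_nonneg u : (0:ℝ) ≤ u)]

theorem log_card (u : ℕ) :
    Real.log (Fintype.card (κ → Fin (Nn (S.dl u)) × Fin (Nn (S.dl u)))) ≤
      2 * S.K * ((832 + 16 * u) * S.τ) := by
  have h := S.log_Nn u
  rw [Fintype.card_fun, Fintype.card_prod, Fintype.card_fin]
  push_cast
  rw [Real.log_pow, ← pow_two, Real.log_pow]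
  have := S.K1
  have e : (Fintype.card κ : ℝ) = S.K := rfl
  rw [e]
  push_cast
  nlinarith

theorem base_part : S.α * (1 - S.α) * |TT S.α S.v (S.R 0)| ≤ 1672 * S.K ^ 2 * S.τ ^ 3 := by
  have ht := S.hτ
  have ht0 := S.τ0
  have hK := S.K1
  have hl := S.lam_pos
  have h := gibbs S.hα0 (by linarith [S.hα1]) S.prv (full (S.Cd 0)) (h := S.τ ^ 2) (A := 2)
    (by positivity) (by norm_num) (S.R 0)
    (fun x x' hx i => by rw [R, BM.cr_apply, BM.cr_apply, rp_congr _ hx])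
    (fun i x => (S.b_le_one i _).trans (one_le_pow₀ ht))
    (fun x => by
      have h1 := S.b_sq (rp (full (S.Cd 0)) x)
      have h2 : (∑ i, (S.R 0 i).1 x ^ 2) = ∑ i, (S.b i).1 (rp (full (S.Cd 0)) x) ^ 2 := rfl
      rw [h2]
      set Q := ∑ i, (S.b i).1 (rp (full (S.Cd 0)) x) ^ 2
      have hQ : 0 ≤ Q := Finset.sum_nonneg fun i _ => sq_nonneg _
      have h3 := mul_le_mul_of_nonneg_right S.hαl hQ
      have h4 : S.τ ^ 4 * (S.lam / 2 * Q) ≤ S.τ ^ 4 * 1 := by gcongr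
      nlinarith)
  refine h.trans ?_
  have h1 := S.log_card 0
  have h2 : Real.exp 2 ≤ 8 := by
    have := Real.exp_one_lt_d9
    have e : Real.exp 2 = Real.exp 1 ^ 2 := by rw [← Real.exp_nat_mul]; norm_num
    rw [e]; nlinarith [Real.exp_pos 1]
  push_cast at h1
  calc _ ≤ S.τ ^ 2 * (2 * S.K * ((832 + 16 * 0) * S.τ) + 8) := by gcongr
    _ ≤ S.τ ^ 2 * (1672 * S.K ^ 2 * S.τ) := by
        have a1 : S.K ≤ S.K ^ 2 := by nlinarith
        have a2 : 1 ≤ S.K * S.τ := by nlinarith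
        gcongr
        nlinarith
    _ = _ := by ring

/-- level differences -/
def L (U u : ℕ) (i : ι) : BM E := if u + 1 ≤ S.lev U i then S.R (u + 1) i - S.R u i else 0

theorem L_apply_le (U u : ℕ) (i : ι) (x : E) :
    (S.L U u i).1 x ^ 2 ≤ ((S.R (u + 1) i).1 x - (S.R u i).1 x) ^ 2 := by
  unfold L
  split_ifs
  · rw [BM.sub_apply]
  · rw [BM.zero_apply]; nlinarith [sq_nonneg ((S.R (u + 1) i).1 x - (S.R u i).1 x)]

theorem level_part (U u : ℕ) : S.α * (1 - S.α) * |TT S.α S.v (S.L U u)| ≤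
    6726 * S.K ^ 2 * S.τ * ((u + 1) / 2 ^ u) := by
  have ht := S.hτ
  have ht0 := S.τ0
  have hK := S.K1
  have hl := S.lam_pos
  have hK0 : 0 < S.K := by linarith
  have h := gibbs S.hα0 (by linarith [S.hα1]) S.prv (fun x => (full (S.Cd u) x, full (S.Cd (u + 1)) x))
    (h := 2 * S.K / 2 ^ u) (A := 1)
    (by positivity) (by norm_num) (S.L U u)
    (fun x x' hx i => by
      have h1 := congrArg Prod.fst hx
      have h2 := congrArg Prod.snd hx
      simp only at h1 h2
      unfold L
      split_ifs
      · rw [BM.sub_apply, BM.sub_apply, R, R, BM.cr_apply, BM.cr_apply, BM.cr_apply, BM.cr_apply,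
          rp_congr _ h1, rp_congr _ h2]
      · rfl)
    (fun i x => by
      unfold L
      split_ifs with hi
      · rw [BM.sub_apply, R, R, BM.cr_apply, BM.cr_apply]
        have h1 := S.b_le U i (rp (full (S.Cd (u+1))) x)
        have h2 := S.b_le U i (rp (full (S.Cd u)) x)
        have h3 : (1 : ℝ) / 2 ^ S.lev U i ≤ 1 / 2 ^ (u + 1) := by
          gcongr; norm_num
        have h4 : 2 * S.K * (1 / 2 ^ S.lev U i) ≤ S.K / 2 ^ u := by
          calc _ ≤ 2 * S.K * (1 / 2 ^ (u + 1)) := by gcongr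
            _ = _ := by rw [pow_succ]; field_simp
        have e : 2 * S.K / 2 ^ u = S.K / 2 ^ u + S.K / 2 ^ u := by ring
        rw [e]
        exact (abs_sub _ _).trans (add_le_add (h1.trans h4) (h2.trans h4))
      · rw [BM.zero_apply, abs_zero]; positivity)
    (fun x => by
      have a1 := S.b_sq_diff (S.dl_pos u).le (S.Cd u) (full_rp (full (S.Cd u)) x)
      have a2 := S.b_sq_diff (S.dl_pos (u+1)).le (S.Cd (u+1)) (full_rp (full (S.Cd (u+1))) x)
      set Q1 := ∑ i, ((S.b i).1 (rp (full (S.Cd u)) x) - (S.b i).1 x) ^ 2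
      set Q2 := ∑ i, ((S.b i).1 (rp (full (S.Cd (u+1))) x) - (S.b i).1 x) ^ 2
      have a3 : ∑ i, (S.L U u i).1 x ^ 2 ≤ 2 * Q1 + 2 * Q2 := by
        rw [Finset.mul_sum, Finset.mul_sum, ← Finset.sum_add_distrib]
        refine Finset.sum_le_sum fun i _ => (S.L_apply_le U u i x).trans ?_
        rw [R, R, BM.cr_apply, BM.cr_apply]
        set p := (S.b i).1 (rp (full (S.Cd u)) x)
        set q := (S.b i).1 (rp (full (S.Cd (u + 1))) x)
        nlinarith [sq_nonneg (p + q - 2 * (S.b i).1 x)]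
      have hQ : 0 ≤ ∑ i, (S.L U u i).1 x ^ 2 := Finset.sum_nonneg fun i _ => sq_nonneg _
      have a4 := S.dl_succ_le u
      have a5 : S.lam / 2 * ∑ i, (S.L U u i).1 x ^ 2 ≤ 4 * S.K * S.dl u := by
        calc _ ≤ S.lam / 2 * (2 * Q1 + 2 * Q2) := by gcongr
          _ = 2 * (S.lam / 2 * Q1) + 2 * (S.lam / 2 * Q2) := by ring
          _ ≤ 2 * (S.K * S.dl u) + 2 * (S.K * S.dl (u + 1)) := by gcongr
          _ ≤ 2 * (S.K * S.dl u) + 2 * (S.K * S.dl u) := by gcongr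
          _ = _ := by ring
      calc S.α * ∑ i, (S.L U u i).1 x ^ 2 ≤ S.lam * S.τ ^ 4 * ∑ i, (S.L U u i).1 x ^ 2 := by
            gcongr; exact S.hαl
        _ = 2 * S.τ ^ 4 * (S.lam / 2 * ∑ i, (S.L U u i).1 x ^ 2) := by ring
        _ ≤ 2 * S.τ ^ 4 * (4 * S.K * S.dl u) := by gcongr
        _ = S.K / 32 * (1 / (S.τ ^ 60 * 2 ^ (16 * u))) := by
            rw [dl_eq]
            field_simp
            norm_num
        _ ≤ S.K / 32 * (1 / (1 * 2 ^ (2 * u))) := by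
            gcongr
            · exact one_le_pow₀ ht
            · norm_num
            · omega
        _ ≤ 4 * S.K ^ 2 * (1 / (1 * 2 ^ (2 * u))) := by gcongr; nlinarith
        _ = 1 * (2 * S.K / 2 ^ u) ^ 2 := by
            rw [div_pow, ← pow_mul, mul_comm u 2]; ring)
  refine h.trans ?_
  have h1 := S.log_card u
  have h2 := S.log_card (u + 1)
  have h3 : Real.exp 1 ≤ 3 := by linarith [Real.exp_one_lt_d9]
  rw [Fintype.card_prod]
  push_cast at h2 ⊢
  have hn : ∀ u : ℕ, (Fintype.card (κ → Fin (Nn (S.dl u)) × Fin (Nn (S.dl u))) : ℝ) ≠ 0 := fun u => by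
    rw [Nat.cast_ne_zero]
    haveI : Nonempty (κ → Fin (Nn (S.dl u)) × Fin (Nn (S.dl u))) := ⟨full (S.Cd u) 0⟩
    exact Fintype.card_ne_zero
  rw [Real.log_mul (hn _) (hn _)]
  calc _ ≤ 2 * S.K / 2 ^ u * ((2 * S.K * ((832 + 16 * u) * S.τ) +
        2 * S.K * ((832 + 16 * (u + 1)) * S.τ)) + 3) := by gcongr
    _ ≤ 2 * S.K / 2 ^ u * (3363 * S.K * S.τ * (u + 1)) := by
        have hu : (0 : ℝ) ≤ u := Nat.cast_nonneg u
        have a2 : 1 ≤ S.K * S.τ := by nlinarith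
        gcongr
        nlinarith [mul_nonneg hu (mul_nonneg hK0.le ht0.le)]
    _ = _ := by ring

theorem sum_geo (U : ℕ) : ∑ u ∈ Finset.range U, (((u : ℝ) + 1) / 2 ^ u) ≤ 4 := by
  have : ∑ u ∈ Finset.range U, (((u : ℝ) + 1) / 2 ^ u) = 4 - (2 * U + 4) / 2 ^ U := by
    induction U with
    | zero => norm_num
    | succ n ih =>
      rw [Finset.sum_range_succ, ih, pow_succ]
      push_cast
      field_simp
      ring
  rw [this]
  have : (0 : ℝ) ≤ (2 * U + 4) / 2 ^ U := by positivity
  linarith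

theorem R_lev (U : ℕ) : (fun i => S.R (S.lev U i) i) = S.R 0 + ∑ u ∈ Finset.range U, S.L U u := by
  funext i
  rw [Pi.add_apply, Finset.sum_apply]
  unfold L
  rw [← Finset.sum_filter]
  have e : (Finset.range U).filter (fun u => u + 1 ≤ S.lev U i) = Finset.range (S.lev U i) := by
    ext u; have := S.lev_le U i; simp; omega
  rw [e, Finset.sum_range_sub (fun u => S.R u i)]
  abel

theorem good_part (U : ℕ) : S.α * (1 - S.α) * |TT S.α S.v (fun i => S.R (S.lev U i) i)| ≤
    28576 * S.K ^ 2 * S.τ ^ 3 := by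
  have ht := S.hτ
  have hK := S.K1
  have hα : 0 ≤ S.α * (1 - S.α) := mul_nonneg S.hα0 (by linarith [S.hα1])
  rw [R_lev, TT_add, TT_sum]
  calc _ ≤ S.α * (1 - S.α) * (|TT S.α S.v (S.R 0)| +
        ∑ u ∈ Finset.range U, |TT S.α S.v (S.L U u)|) := by
        gcongr
        refine (abs_add_le _ _).trans ?_
        gcongr
        exact Finset.abs_sum_le_sum_abs _ _
    _ = S.α * (1 - S.α) * |TT S.α S.v (S.R 0)| +
        ∑ u ∈ Finset.range U, S.α * (1 - S.α) * |TT S.α S.v (S.L U u)| := by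
        rw [mul_add, Finset.mul_sum]
    _ ≤ 1672 * S.K ^ 2 * S.τ ^ 3 +
        ∑ u ∈ Finset.range U, 6726 * S.K ^ 2 * S.τ * (((u : ℝ) + 1) / 2 ^ u) :=
        add_le_add S.base_part (Finset.sum_le_sum fun u _ => S.level_part U u)
    _ ≤ 1672 * S.K ^ 2 * S.τ ^ 3 + 6726 * S.K ^ 2 * S.τ * 4 := by
        rw [← Finset.mul_sum]
        gcongr
        exact sum_geo U
    _ ≤ _ := by
        have : S.K ^ 2 * S.τ ≤ S.K ^ 2 * S.τ ^ 3 := by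
          gcongr
          exact le_self_pow₀ ht (by norm_num)
        nlinarith

end St
end core2
end
end S4

namespace S4
noncomputable section
section core3
variable {E : Type*} [AddCommGroup E] [MeasurableSpace E] [MeasurableAdd₂ E]
variable {ι : Type*} [Fintype ι] [DecidableEq ι] {κ : Type*} [Fintype κ] [DecidableEq κ]
namespace St
variable (S : St E ι κ)

/-- `∏_{j≠i} U_j` -/
def Q (i : ι) : OA E := ∏ j ∈ Finset.univ.erase i, Uc S.α (S.v j)

theorem prQ (i : ι) : IsPr (S.Q i) := IsPr.prod _ _ fun j _ =>
  isPr_Uc (S.prv j) S.hα0 (by linarith [S.hα1])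

theorem W'_eq (i : ι) : S.W' = Uc S.α (S.v i) * S.Q i :=
  (Finset.mul_prod_erase _ _ (Finset.mem_univ i)).symm

theorem Q_le (i : ι) {f : BM E} (hf : ∀ x, 0 ≤ f.1 x) (x : E) :
    (1 - S.α) * (S.Q i • f).1 x ≤ (S.W' • f).1 x := by
  rw [S.W'_eq i, mul_smul, Uc, add_smul, BM.add_apply, smul_assoc, smul_assoc, BM.smul_apply,
    BM.smul_apply, one_smul]
  have : 0 ≤ (S.v i • S.Q i • f).1 x := (S.prv i).isPos _ (fun x => (S.prQ i).isPos f hf x) x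
  have := mul_nonneg S.hα0 this
  linarith

theorem EN {f : BM E} (hf : ∀ x, 0 ≤ f.1 x) (hf1 : ∀ x, f.1 x ≤ 1) (Bs : Finset ι) {K1 : ℝ}
    (hK1 : 1 ≤ K1) (hB : S.α * K1 * Bs.card ≤ 1) :
    ∑ i ∈ Bs, S.α * ((S.v i * S.Q i) • f).1 0 ≤
      2 * (S.W' • f).1 0 + 8 * Real.exp 1 / (1 + K1) ^ 3 := by
  have hw := fun B => wt_nonneg (ι := ι) S.hα0 (by linarith [S.hα1]) B
  have prB : ∀ B : Finset ι, IsPr (∏ j ∈ B, S.v j) := fun B => IsPr.prod _ _ fun j _ => S.prv j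
  have h1 : ∀ i, S.α * ((S.v i * S.Q i) • f).1 0 =
      ∑ B : Finset ι, (wt S.α B * (if i ∈ B then 1 else 0)) * ((∏ j ∈ B, S.v j) • f).1 0 := by
    intro i
    rw [← apply_sum_smul, wt_expand_mem, smul_assoc, BM.smul_apply]; rfl
  have h2 : (S.W' • f).1 0 = ∑ B : Finset ι, wt S.α B * ((∏ j ∈ B, S.v j) • f).1 0 := by
    rw [← apply_sum_smul, wt_expand]; rfl
  have h3 : ∑ B : Finset ι, wt S.α B * (1 + K1) ^ (Bs ∩ B).card ≤ Real.exp 1 := by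
    have e : ∀ B : Finset ι, (1 + K1) ^ (Bs ∩ B).card =
        ∏ j, (if j ∈ B then (if j ∈ Bs then 1 + K1 else 1) else 1) := by
      intro B
      rw [← Finset.prod_const, Finset.prod_ite_mem, Finset.univ_inter, Finset.prod_ite_mem,
        Finset.inter_comm]
    simp only [e]
    rw [wt_prod S.α (fun j => if j ∈ Bs then 1 + K1 else 1) (fun _ => 1)]
    have e2 : ∏ j, (S.α * (if j ∈ Bs then 1 + K1 else 1) + (1 - S.α) * 1) =
        ∏ j, (if j ∈ Bs then 1 + S.α * K1 else 1) := by
      refine Finset.prod_congr rfl fun j _ => ?_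
      split_ifs <;> ring
    rw [e2, Finset.prod_ite_mem, Finset.univ_inter, Finset.prod_const]
    have hk : 0 ≤ S.α * K1 := mul_nonneg S.hα0 (by linarith)
    calc (1 + S.α * K1) ^ Bs.card ≤ Real.exp (S.α * K1) ^ Bs.card := by
          gcongr
          linarith [Real.add_one_le_exp (S.α * K1)]
      _ = Real.exp (Bs.card * (S.α * K1)) := by rw [Real.exp_nat_mul]
      _ ≤ _ := by gcongr; linarith
  have hN : ∀ N : ℕ, (N : ℝ) ≤ 2 + 8 * (1 + K1) ^ N / (1 + K1) ^ 3 := by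
    intro N
    rcases Nat.lt_or_ge N 3 with h | h
    · have a1 : (N : ℝ) ≤ 2 := by exact_mod_cast Nat.lt_succ_iff.1 h
      have a2 : 0 ≤ 8 * (1 + K1) ^ N / (1 + K1) ^ 3 := by positivity
      linarith
    · obtain ⟨M, rfl⟩ := Nat.exists_eq_add_of_le h
      have e : 8 * (1 + K1) ^ (3 + M) / (1 + K1) ^ 3 = 8 * (1 + K1) ^ M := by
        rw [pow_add]; field_simp
      rw [e]
      have a1 : (2 : ℝ) ^ M ≤ (1 + K1) ^ M := by gcongr; linarith
      have a2 : ((3 + M : ℕ) : ℝ) ≤ 8 * 2 ^ M := by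
        have : 3 + M < 2 ^ (3 + M) := Nat.lt_two_pow_self
        rw [pow_add] at this
        exact_mod_cast this.le
      linarith
  calc _ = ∑ B : Finset ι, wt S.α B * ((Bs ∩ B).card * ((∏ j ∈ B, S.v j) • f).1 0) := by
        simp only [h1]
        rw [Finset.sum_comm]
        refine Finset.sum_congr rfl fun B _ => ?_
        have : ((Bs ∩ B).card : ℝ) = ∑ i ∈ Bs, if i ∈ B then 1 else 0 := by
          rw [Finset.sum_boole, Finset.filter_mem_eq_inter]
        rw [this, Finset.sum_mul, Finset.mul_sum]
        refine Finset.sum_congr rfl fun i _ => by ring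
    _ ≤ ∑ B : Finset ι, wt S.α B * (2 * ((∏ j ∈ B, S.v j) • f).1 0 +
          8 * (1 + K1) ^ (Bs ∩ B).card / (1 + K1) ^ 3) := by
        refine Finset.sum_le_sum fun B _ => mul_le_mul_of_nonneg_left ?_ (hw B)
        have a0 := (prB B).isPos f hf 0
        have a1 := (prB B).le_const hf1 0
        have a2 := hN (Bs ∩ B).card
        have a3 : 0 ≤ 8 * (1 + K1) ^ (Bs ∩ B).card / (1 + K1) ^ 3 := by positivity
        nlinarith
    _ = 2 * (S.W' • f).1 0 + 8 * (∑ B : Finset ι, wt S.α B * (1 + K1) ^ (Bs ∩ B).card) /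
          (1 + K1) ^ 3 := by
        rw [h2, Finset.mul_sum, Finset.mul_sum, Finset.sum_div, ← Finset.sum_add_distrib]
        refine Finset.sum_congr rfl fun B _ => by ring
    _ ≤ _ := by gcongr

/-- `ω_e` -/
def om (u : ℕ) (k : κ) (e : Fin (Nn (S.dl u))) : ℝ := (S.W • (S.Cd u k).cD e).1 0
/-- `ω_{i,e}` -/
def omi (u : ℕ) (k : κ) (i : ι) (e : Fin (Nn (S.dl u))) : ℝ :=
  ((S.v i * S.W) • (S.Cd u k).cD e).1 0
/-- `P'` -/
def pp (u : ℕ) (k : κ) (e : Fin (Nn (S.dl u))) : ℝ := (S.W' • (S.Cd u k).cA e).1 0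
/-- `q` -/
def qq (u : ℕ) (k : κ) (i : ι) (e : Fin (Nn (S.dl u))) : ℝ :=
  ((S.v i * S.Q i) • (S.Cd u k).cA e).1 0

theorem dd_le (u : ℕ) : S.dd u ≤ 1 / 4 / 16 ^ u := by
  have := S.hτ
  have h1 : (1 : ℝ) ≤ S.τ ^ 16 := one_le_pow₀ this
  rw [dd, pow_mul, div_div]
  norm_num only
  gcongr
  nlinarith [pow_pos (show (0:ℝ) < 16 by norm_num) u]

theorem dd_le' (u : ℕ) : S.dd u ≤ 1 / 4 := by
  refine (S.dd_le u).trans (div_le_self (by norm_num) (one_le_pow₀ (by norm_num)))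

theorem dl_le (u : ℕ) : S.dl u ≤ S.dd u / 64 := by
  have h1 := S.dd_le' u
  have h2 := S.dd_pos u
  rw [dl]
  calc S.dd u ^ 4 = S.dd u * S.dd u ^ 3 := by ring
    _ ≤ S.dd u * (1 / 4) ^ 3 := by gcongr
    _ = _ := by ring

theorem om_nonneg (u : ℕ) (k : κ) (e) : 0 ≤ S.om u k e :=
  S.prW.isPos _ ((S.Cd u k).cD_nonneg e) 0
theorem omi_nonneg (u : ℕ) (k : κ) (i : ι) (e) : 0 ≤ S.omi u k i e :=
  ((S.prv i).mul S.prW).isPos _ ((S.Cd u k).cD_nonneg e) 0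
theorem pp_nonneg (u : ℕ) (k : κ) (e) : 0 ≤ S.pp u k e :=
  S.prW'.isPos _ ((S.Cd u k).cA_nonneg e) 0
theorem qq_nonneg (u : ℕ) (k : κ) (i : ι) (e) : 0 ≤ S.qq u k i e :=
  ((S.prv i).mul (S.prQ i)).isPos _ ((S.Cd u k).cA_nonneg e) 0

theorem om_sum (u : ℕ) (k : κ) : ∑ e, S.om u k e ≤ 1 := by
  unfold om
  rw [← BM.sum_apply, ← Finset.smul_sum]
  exact S.prW.le_const ((S.Cd u k).cD_sum) 0
theorem omi_sum (u : ℕ) (k : κ) (i : ι) : ∑ e, S.omi u k i e ≤ 1 := by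
  unfold omi
  rw [← BM.sum_apply, ← Finset.smul_sum]
  exact ((S.prv i).mul S.prW).le_const ((S.Cd u k).cD_sum) 0
theorem pp_sum (u : ℕ) (k : κ) : ∑ e, S.pp u k e ≤ 1 := by
  unfold pp
  rw [← BM.sum_apply, ← Finset.smul_sum]
  exact S.prW'.le_const ((S.Cd u k).cA_sum) 0
theorem qq_sum (u : ℕ) (k : κ) (i : ι) : ∑ e, S.qq u k i e ≤ 1 := by
  unfold qq
  rw [← BM.sum_apply, ← Finset.smul_sum]
  exact ((S.prv i).mul (S.prQ i)).le_const ((S.Cd u k).cA_sum) 0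

theorem pp_le (u : ℕ) (k : κ) (e) : S.pp u k e ≤ S.dl u := (S.Cd u k).m1 e
theorem om_le (u : ℕ) (k : κ) (e) : S.om u k e ≤ 2 * S.dl u := by
  have h1 := S.W_le ((S.Cd u k).cD_nonneg e) 0
  have h2 := (S.Cd u k).m2 e
  exact h1.trans (mul_le_mul_of_nonneg_left h2 (by norm_num))

theorem dl_le_two (u : ℕ) : S.dl u ≤ 1 / 2 ^ u := by
  have h1 := S.dl_le u
  have h2 := S.dd_le u
  have h3 := S.dd_pos u
  have h4 : (1 : ℝ) / 4 / 16 ^ u ≤ 1 / 2 ^ u := by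
    rw [div_div]
    gcongr
    calc (2 : ℝ) ^ u ≤ 16 ^ u := by gcongr; norm_num
      _ ≤ 4 * 16 ^ u := by linarith [pow_pos (show (0:ℝ) < 16 by norm_num) u]
  linarith

theorem omi_le {u : ℕ} {i : ι} (hi : S.good i u) (k : κ) (e) : S.omi u k i e ≤ 6 / 2 ^ u := by
  have ho : {t | (S.Cd u k).cd (S.c k - t) = (e, e)}.OrdConnected := by
    refine ⟨fun a ha b hb t ht => ?_⟩
    exact ((S.Cd u k).ord e).out (show (S.Cd u k).cd (S.c k - b) = (e, e) from hb)
      (show (S.Cd u k).cd (S.c k - a) = (e, e) from ha) ⟨by linarith [ht.2], by linarith [ht.1]⟩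
  have h := op_iy_le S.prW (y := S.y k) (hy := S.hy k) (s := 1 / 2 ^ u) (by positivity)
    (show MeasurableSet {t | (S.Cd u k).cd (S.c k - t) = (e, e)} from
      ((S.Cd u k).meas.comp (measurable_const.sub measurable_id)) (measurableSet_singleton (e, e))) ho
    (S.V i) (hi k)
  have h1 : S.omi u k i e ≤ S.om u k e + 4 * (1 / 2 ^ u) := by
    rw [omi, mul_smul]; exact h
  have h2 := S.om_le u k e
  have h3 := S.dl_le_two u
  have h4 : (6 : ℝ) / 2 ^ u = 6 * (1 / 2 ^ u) := by ring
  linarith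

theorem Nn_le (u : ℕ) : (Nn (S.dl u) : ℝ) ≤ 3 / S.dl u := by
  have hd := S.dl_pos u
  have h1 : S.dl u ≤ 1 := by linarith [S.dl_le u, S.dd_le' u]
  have := Nat.floor_le (a := 2 / S.dl u) (by positivity)
  rw [Nn]; push_cast
  have h2 : 1 ≤ 1 / S.dl u := by rw [le_div_iff₀ hd]; linarith
  have : 3 / S.dl u = 2 / S.dl u + 1 / S.dl u := by ring
  linarith

theorem bad_e (u : ℕ) (k : κ) (e) :
    ∑ i ∈ Finset.univ.filter (fun i => S.dd u ≤ S.qq u k i e), S.α * S.qq u k i e ≤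
      2 * S.pp u k e + 12288 * S.dd u ^ 6 := by
  classical
  set Bs := Finset.univ.filter (fun i => S.dd u ≤ S.qq u k i e) with hBs
  have hd0 := S.dd_pos u
  have hd1 := S.dd_le' u
  have hdl := S.dl_le u
  have hα0 := S.hα0
  have hα1 := S.hα1
  set f := (S.Cd u k).cA e with hf
  have fnn : ∀ x, 0 ≤ f.1 x := (S.Cd u k).cA_nonneg e
  have hb := bessel_prod Finset.univ S.prv S.hα0 (by linarith) f 0
  have hf2 : f ^ 2 = f := ind_sq (S.hy k ((S.Cd u k).meas (measurableSet_singleton (e, e))))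
  rw [hf2] at hb
  have hb2 : S.α * (1 - S.α) * ∑ i ∈ Bs, (((S.v i - 1) • S.Q i • f).1 0) ^ 2 ≤ S.dl u := by
    calc _ ≤ S.α * (1 - S.α) * ∑ i, (((S.v i - 1) • S.Q i • f).1 0) ^ 2 := by
          have : 0 ≤ S.α * (1 - S.α) := mul_nonneg hα0 (by linarith)
          refine mul_le_mul_of_nonneg_left ?_ this
          exact Finset.sum_le_sum_of_subset_of_nonneg (Finset.subset_univ _)
            fun i _ _ => sq_nonneg _
      _ ≤ S.pp u k e := le_trans (le_add_of_nonneg_left (sq_nonneg _)) hb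
      _ ≤ _ := S.pp_le u k e
  have hb3 : (S.dd u / 2) ^ 2 * Bs.card ≤ ∑ i ∈ Bs, (((S.v i - 1) • S.Q i • f).1 0) ^ 2 := by
    rw [mul_comm, ← nsmul_eq_mul, ← Finset.sum_const]
    refine Finset.sum_le_sum fun i hi => ?_
    rw [hBs, Finset.mem_filter] at hi
    have a1 : (((S.v i - 1) • S.Q i • f).1 0) = S.qq u k i e - (S.Q i • f).1 0 := by
      rw [sub_smul, one_smul, BM.sub_apply, ← mul_smul]; rfl
    have a2 := S.Q_le i fnn 0
    have a3 : (S.W' • f).1 0 ≤ S.dl u := S.pp_le u k e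
    have a4 := (S.prQ i).isPos f fnn 0
    have a5 : (S.Q i • f).1 0 ≤ 2 * S.dl u := by nlinarith
    rw [a1]
    gcongr
    linarith [hi.2]
  have hB : S.α * (1 / (8 * S.dd u ^ 2)) * Bs.card ≤ 1 := by
    have h1 : S.α * (1 - S.α) * ((S.dd u / 2) ^ 2 * Bs.card) ≤ S.dd u ^ 4 :=
      le_trans (mul_le_mul_of_nonneg_left hb3 (mul_nonneg hα0 (by linarith))) hb2
    have h2 : S.α * (1 / 2) * ((S.dd u / 2) ^ 2 * Bs.card) ≤ S.dd u ^ 4 := by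
      refine le_trans ?_ h1
      gcongr
      linarith
    have e1 : S.α * (1 / (8 * S.dd u ^ 2)) * Bs.card =
        (S.α * (1 / 2) * ((S.dd u / 2) ^ 2 * Bs.card)) / S.dd u ^ 4 := by
      field_simp; ring
    rw [e1, div_le_one (by positivity)]
    exact h2
  have hK1 : 1 ≤ 1 / (8 * S.dd u ^ 2) := by
    rw [le_div_iff₀ (by positivity)]; nlinarith
  have h := S.EN fnn (fun x => iy_le_one _ _ _ _ x) Bs hK1 hB
  refine h.trans (add_le_add le_rfl ?_)
  have hexp : Real.exp 1 ≤ 3 := by linarith [Real.exp_one_lt_d9]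
  calc 8 * Real.exp 1 / (1 + 1 / (8 * S.dd u ^ 2)) ^ 3 ≤ 8 * 3 / (1 / (8 * S.dd u ^ 2)) ^ 3 := by
        gcongr
        linarith
    _ = 12288 * S.dd u ^ 6 := by field_simp; ring

theorem bad_class (u : ℕ) (k : κ) (cls : Finset ι) (hc : ∀ i ∈ cls, S.good i u) :
    ∑ i ∈ cls, ∑ e, S.α * ((S.qq u k i e + S.pp u k e) * (S.om u k e + S.omi u k i e)) ≤
      5 * S.α * S.dd u * cls.card + 13836 / 2 ^ u := by
  classical
  have hd0 := S.dd_pos u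
  have hd1 := S.dd_le' u
  have hdl := S.dl_le u
  have hl0 := S.dl_pos u
  have hα0 := S.hα0
  have h1 : ∀ i ∈ cls, ∀ e, S.α * ((S.qq u k i e + S.pp u k e) * (S.om u k e + S.omi u k i e)) ≤
      S.α * (S.dl u * (S.om u k e + S.omi u k i e) + 2 * S.dl u * S.qq u k i e +
        S.dd u * S.omi u k i e) +
      6 / 2 ^ u * (if S.dd u ≤ S.qq u k i e then S.α * S.qq u k i e else 0) := by
    intro i hi e
    have a1 := S.om_nonneg u k e
    have a2 := S.omi_nonneg u k i e
    have a3 := S.qq_nonneg u k i e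
    have a5 := S.pp_le u k e
    have a6 := S.om_le u k e
    have a7 := S.omi_le (hc i hi) k e
    have b1 : S.pp u k e * (S.om u k e + S.omi u k i e) ≤
        S.dl u * (S.om u k e + S.omi u k i e) := by gcongr
    have b2 : S.qq u k i e * S.om u k e ≤ 2 * S.dl u * S.qq u k i e := by
      rw [mul_comm]; gcongr
    split_ifs with h
    · have b3 : S.qq u k i e * S.omi u k i e ≤ 6 / 2 ^ u * S.qq u k i e := by
        rw [mul_comm]; gcongr
      have b4 : 0 ≤ S.dd u * S.omi u k i e := by positivity
      have : (S.qq u k i e + S.pp u k e) * (S.om u k e + S.omi u k i e) ≤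
        (S.dl u * (S.om u k e + S.omi u k i e) + 2 * S.dl u * S.qq u k i e +
        S.dd u * S.omi u k i e) + 6 / 2 ^ u * S.qq u k i e := by nlinarith
      calc _ ≤ S.α * _ := mul_le_mul_of_nonneg_left this hα0
        _ = _ := by ring
    · have b3 : S.qq u k i e * S.omi u k i e ≤ S.dd u * S.omi u k i e := by
        gcongr; exact (not_le.1 h).le
      rw [mul_zero, add_zero]
      refine mul_le_mul_of_nonneg_left ?_ hα0
      nlinarith
  have h2 : ∀ i ∈ cls, ∑ e, S.α * ((S.qq u k i e + S.pp u k e) * (S.om u k e + S.omi u k i e)) ≤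
      5 * S.α * S.dd u + 6 / 2 ^ u *
        ∑ e, (if S.dd u ≤ S.qq u k i e then S.α * S.qq u k i e else 0) := by
    intro i hi
    refine (Finset.sum_le_sum fun e _ => h1 i hi e).trans ?_
    rw [Finset.sum_add_distrib, ← Finset.mul_sum, ← Finset.mul_sum]
    refine add_le_add ?_ le_rfl
    rw [Finset.sum_add_distrib, Finset.sum_add_distrib, ← Finset.mul_sum, ← Finset.mul_sum,
      ← Finset.mul_sum, Finset.sum_add_distrib]
    have c1 := S.om_sum u k
    have c2 := S.omi_sum u k i
    have c3 := S.qq_sum u k i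
    have : S.dl u * (∑ e, S.om u k e + ∑ e, S.omi u k i e) + 2 * S.dl u * ∑ e, S.qq u k i e +
        S.dd u * ∑ e, S.omi u k i e ≤ 5 * S.dd u := by nlinarith
    calc _ ≤ S.α * (5 * S.dd u) := mul_le_mul_of_nonneg_left this hα0
      _ = _ := by ring
  refine (Finset.sum_le_sum h2).trans ?_
  rw [Finset.sum_add_distrib, Finset.sum_const, nsmul_eq_mul, ← Finset.mul_sum]
  refine add_le_add (le_of_eq (by ring)) ?_
  have h3 : ∑ i ∈ cls, ∑ e, (if S.dd u ≤ S.qq u k i e then S.α * S.qq u k i e else 0) ≤ 2306 := by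
    calc _ ≤ ∑ i, ∑ e, (if S.dd u ≤ S.qq u k i e then S.α * S.qq u k i e else 0) :=
          Finset.sum_le_sum_of_subset_of_nonneg (Finset.subset_univ _)
            fun i _ _ => Finset.sum_nonneg fun e _ => by
              split_ifs
              · exact mul_nonneg hα0 (S.qq_nonneg u k i e)
              · exact le_rfl
      _ = ∑ e, ∑ i ∈ Finset.univ.filter (fun i => S.dd u ≤ S.qq u k i e), S.α * S.qq u k i e := by
          rw [Finset.sum_comm]
          refine Finset.sum_congr rfl fun e _ => (Finset.sum_filter _ _).symm
      _ ≤ ∑ e, (2 * S.pp u k e + 12288 * S.dd u ^ 6) := Finset.sum_le_sum fun e _ => S.bad_e u k e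
      _ = 2 * ∑ e, S.pp u k e + Nn (S.dl u) * (12288 * S.dd u ^ 6) := by
          rw [Finset.sum_add_distrib, ← Finset.mul_sum, Finset.sum_const, Finset.card_univ,
            Fintype.card_fin, nsmul_eq_mul]
      _ ≤ 2 * 1 + 3 / S.dl u * (12288 * S.dd u ^ 6) := by
          have := S.pp_sum u k
          have := S.Nn_le u
          gcongr
      _ = 2 + 36864 * S.dd u ^ 2 := by
          rw [dl]; field_simp; ring
      _ ≤ _ := by nlinarith
  refine (mul_le_mul_of_nonneg_left h3 (by positivity)).trans (le_of_eq ?_)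
  ring

end St
end core3
end
end S4

namespace S4
noncomputable section
section core4
variable {E : Type*} [AddCommGroup E] [MeasurableSpace E] [MeasurableAdd₂ E]
variable {ι : Type*} [Fintype ι] [DecidableEq ι] {κ : Type*} [Fintype κ] [DecidableEq κ]
namespace St
variable (S : St E ι κ)

/-- pointwise majorant of the remainder -/
def rho (u : ℕ) (i : ι) : BM E :=
  ∑ k, ∑ e, (S.om u k e + S.omi u k i e) • (S.Cd u k).cA e

theorem rho_nonneg (u : ℕ) (i : ι) (x : E) : 0 ≤ (S.rho u i).1 x := by
  rw [rho, BM.sum_apply]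
  refine Finset.sum_nonneg fun k _ => ?_
  rw [BM.sum_apply]
  refine Finset.sum_nonneg fun e _ => ?_
  rw [BM.smul_apply]
  exact mul_nonneg (add_nonneg (S.om_nonneg u k e) (S.omi_nonneg u k i e))
    ((S.Cd u k).cA_nonneg e x)

theorem op_rho (u : ℕ) (i : ι) (P : OA E) : (P • S.rho u i).1 0 =
    ∑ k, ∑ e, (S.om u k e + S.omi u k i e) * (P • (S.Cd u k).cA e).1 0 := by
  rw [rho, Finset.smul_sum, BM.sum_apply]
  refine Finset.sum_congr rfl fun k _ => ?_
  rw [Finset.smul_sum, BM.sum_apply]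
  refine Finset.sum_congr rfl fun e _ => ?_
  rw [smul_comm, BM.smul_apply]

theorem rem_le (u : ℕ) (i : ι) (x : E) : |(S.b i - S.R u i).1 x| ≤ (S.rho u i).1 x := by
  have hfull := full_rp (full (S.Cd u)) x
  have h1 := full_diff_op (S.Cd u) hfull.symm S.prW.isPos
  have h2 := full_diff_op (S.Cd u) hfull.symm ((S.prv i).mul S.prW).isPos
  have e1 : (S.b i - S.R u i).1 x = (S.b i).1 x - (S.b i).1 (rp (full (S.Cd u)) x) := rfl
  rw [e1, b_apply, b_apply]
  have e2 : (S.rho u i).1 x =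
      (∑ k, ∑ e, ((S.Cd u k).cA e).1 x * (S.W • (S.Cd u k).cD e).1 0) +
      ∑ k, ∑ e, ((S.Cd u k).cA e).1 x * ((S.v i * S.W) • (S.Cd u k).cD e).1 0 := by
    rw [rho, BM.sum_apply, ← Finset.sum_add_distrib]
    refine Finset.sum_congr rfl fun k _ => ?_
    rw [BM.sum_apply, ← Finset.sum_add_distrib]
    refine Finset.sum_congr rfl fun e _ => ?_
    rw [BM.smul_apply, om, omi]
    ring
  rw [e2]
  rw [mul_smul] at h2
  rw [abs_le] at *
  simp only [g]
  constructor <;> linarith [h1.1, h1.2, h2.1, h2.2]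

theorem rem_term (u : ℕ) (i : ι) :
    S.α * (1 - S.α) * |(((S.v i - 1) * ∏ j ∈ Finset.univ.erase i, Uc S.α (S.v j)) •
      (S.b i - S.R u i)).1 0| ≤
    ∑ k, ∑ e, S.α * ((S.qq u k i e + S.pp u k e) * (S.om u k e + S.omi u k i e)) := by
  have hα0 := S.hα0
  have hα1 := S.hα1
  set r := S.b i - S.R u i with hr
  have hab : ∀ {P : OA E}, IsPos P → |(P • r).1 0| ≤ (P • S.rho u i).1 0 := by
    intro P hP
    have a1 := hP.mono (f := r) (g := S.rho u i) (fun x => (abs_le.1 (S.rem_le u i x)).2) 0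
    have a2 := hP.mono (f := - S.rho u i) (g := r)
      (fun x => by rw [BM.neg_apply]; exact (abs_le.1 (S.rem_le u i x)).1) 0
    rw [smul_neg, BM.neg_apply] at a2
    exact abs_le.2 ⟨a2, a1⟩
  have h1 := hab ((S.prv i).mul (S.prQ i)).isPos
  have h2 := hab (S.prQ i).isPos
  have h3 := S.Q_le i (S.rho_nonneg u i) 0
  have h4 : 0 ≤ ((S.v i * S.Q i) • S.rho u i).1 0 :=
    ((S.prv i).mul (S.prQ i)).isPos _ (S.rho_nonneg u i) 0
  have e1 : (((S.v i - 1) * ∏ j ∈ Finset.univ.erase i, Uc S.α (S.v j)) • r).1 0 =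
      ((S.v i * S.Q i) • r).1 0 - (S.Q i • r).1 0 := by
    rw [sub_mul, one_mul, sub_smul, BM.sub_apply]; rfl
  rw [e1]
  have h5 : |((S.v i * S.Q i) • r).1 0 - (S.Q i • r).1 0| ≤
      ((S.v i * S.Q i) • S.rho u i).1 0 + (S.Q i • S.rho u i).1 0 :=
    (abs_sub _ _).trans (add_le_add h1 h2)
  have h6 : (1 - S.α) * |((S.v i * S.Q i) • r).1 0 - (S.Q i • r).1 0| ≤
      ((S.v i * S.Q i) • S.rho u i).1 0 + (S.W' • S.rho u i).1 0 := by
    calc _ ≤ (1 - S.α) * (((S.v i * S.Q i) • S.rho u i).1 0 + (S.Q i • S.rho u i).1 0) :=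
          mul_le_mul_of_nonneg_left h5 (by linarith)
      _ ≤ _ := by nlinarith
  rw [mul_assoc]
  refine (mul_le_mul_of_nonneg_left h6 hα0).trans (le_of_eq ?_)
  rw [op_rho, op_rho, ← Finset.sum_add_distrib, Finset.mul_sum]
  refine Finset.sum_congr rfl fun k _ => ?_
  rw [← Finset.sum_add_distrib, Finset.mul_sum]
  refine Finset.sum_congr rfl fun e _ => ?_
  rw [qq, pp]
  ring

theorem bad_part :
    S.α * (1 - S.α) * |TT S.α S.v (fun i => S.b i - S.R (S.lev (5 * Fintype.card ι) i) i)| ≤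
      27753 * S.K ^ 2 := by
  classical
  set U := 5 * Fintype.card ι with hU
  have hα0 := S.hα0
  have hα1 := S.hα1
  have hK := S.K1
  have ht := S.hτ
  have ht0 := S.τ0
  set F : ι → ℕ → ℝ := fun i u =>
    ∑ k, ∑ e, S.α * ((S.qq u k i e + S.pp u k e) * (S.om u k e + S.omi u k i e)) with hF
  have h1 : S.α * (1 - S.α) * |TT S.α S.v (fun i => S.b i - S.R (S.lev U i) i)| ≤
      ∑ i, F i (S.lev U i) := by
    have h0 : 0 ≤ S.α * (1 - S.α) := mul_nonneg hα0 (by linarith)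
    rw [TT]
    refine (mul_le_mul_of_nonneg_left (Finset.abs_sum_le_sum_abs _ _) h0).trans ?_
    rw [Finset.mul_sum]
    exact Finset.sum_le_sum fun i _ => S.rem_term _ i
  have h2 : ∑ i, F i (S.lev U i) =
      ∑ u ∈ Finset.range (U + 1), ∑ i ∈ Finset.univ.filter (fun i => S.lev U i = u), F i u := by
    rw [← Finset.sum_fiberwise_of_maps_to (s := Finset.univ) (t := Finset.range (U + 1))
      (g := fun i => S.lev U i)
      (fun i _ => Finset.mem_range.2 (Nat.lt_succ_of_le (S.lev_le U i)))]
    refine Finset.sum_congr rfl fun u _ => Finset.sum_congr rfl fun i hi => ?_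
    rw [(Finset.mem_filter.1 hi).2]
  have h3 : ∀ u, ∑ i ∈ Finset.univ.filter (fun i => S.lev U i = u), F i u ≤
      S.K * (5 * S.α * S.dd u * (Finset.univ.filter (fun i => S.lev U i = u)).card
        + 13836 / 2 ^ u) := by
    intro u
    simp only [hF]
    rw [Finset.sum_comm, K, ← nsmul_eq_mul, ← Finset.card_univ, ← Finset.sum_const]
    refine Finset.sum_le_sum fun k _ => S.bad_class u k _ fun i hi => ?_
    have := S.lev_good U i
    rwa [(Finset.mem_filter.1 hi).2] at this
  have h4 : ∀ u < U, 5 * S.α * S.dd u * (Finset.univ.filter (fun i => S.lev U i = u)).card ≤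
      40 * S.K * (1 / 2 ^ u) := by
    intro u hu
    have a1 := S.count hu
    have a2 := S.dd_pos u
    have a3 : S.dd u * (S.τ ^ 4 * 8 ^ u) ≤ 1 / 4 * (1 / 2 ^ u) := by
      have e : S.τ ^ 4 * 8 ^ u ≤ S.τ ^ 16 * 8 ^ u := by
        gcongr
        norm_num
      refine (mul_le_mul_of_nonneg_left e a2.le).trans (le_of_eq ?_)
      have e2 : (2 : ℝ) ^ (4 * u) = 2 ^ u * 8 ^ u := by
        rw [pow_mul, ← mul_pow]; norm_num
      rw [dd, e2]
      field_simp
    calc _ = 5 * S.dd u * (S.α * (Finset.univ.filter (fun i => S.lev U i = u)).card) := by ring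
      _ ≤ 5 * S.dd u * (32 * S.K * S.τ ^ 4 * 8 ^ u) := by
          refine mul_le_mul_of_nonneg_left a1 (by positivity)
      _ = 160 * S.K * (S.dd u * (S.τ ^ 4 * 8 ^ u)) := by ring
      _ ≤ 160 * S.K * (1 / 4 * (1 / 2 ^ u)) := by gcongr
      _ = _ := by ring
  have h5 : 5 * S.α * S.dd U * (Finset.univ.filter (fun i => S.lev U i = U)).card ≤ 1 := by
    have a1 : ((Finset.univ.filter (fun i => S.lev U i = U)).card : ℝ) ≤ Fintype.card ι := by
      exact_mod_cast Finset.card_le_univ _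
    have a2 := S.dd_pos U
    have a3 : S.dd U * Fintype.card ι ≤ 1 / 4 := by
      have b1 := S.dd_le U
      have b2 : (Fintype.card ι : ℝ) ≤ 16 ^ U := by
        have : Fintype.card ι < 16 ^ Fintype.card ι := Nat.lt_pow_self (by norm_num)
        have b3 : (16 : ℕ) ^ Fintype.card ι ≤ 16 ^ U := Nat.pow_le_pow_right (by norm_num) (by omega)
        exact_mod_cast (this.le.trans b3)
      have b4 : (0 : ℝ) < 16 ^ U := by positivity
      calc S.dd U * Fintype.card ι ≤ (1 / 4 / (16 : ℝ) ^ U) * (16 : ℝ) ^ U := by gcongr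
        _ = 1 / 4 := div_mul_cancel₀ _ b4.ne'
    calc _ ≤ 5 * (1 / 2) * S.dd U * Fintype.card ι := by gcongr
      _ = 5 / 2 * (S.dd U * Fintype.card ι) := by ring
      _ ≤ 1 := by linarith
  have hg : ∀ M : ℕ, ∑ u ∈ Finset.range M, (1 : ℝ) / 2 ^ u ≤ 2 := by
    intro M
    have := sum_geometric_two_le M
    simpa [one_div, inv_pow] using this
  rw [h2] at h1
  refine h1.trans ((Finset.sum_le_sum fun u _ => h3 u).trans ?_)
  rw [← Finset.mul_sum, Finset.sum_add_distrib]
  have h6 : ∑ u ∈ Finset.range (U + 1),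
      5 * S.α * S.dd u * (Finset.univ.filter (fun i => S.lev U i = u)).card ≤ 80 * S.K + 1 := by
    rw [Finset.sum_range_succ]
    refine add_le_add ?_ h5
    calc _ ≤ ∑ u ∈ Finset.range U, 40 * S.K * ((1 : ℝ) / 2 ^ u) :=
          Finset.sum_le_sum fun u hu => h4 u (Finset.mem_range.1 hu)
      _ = 40 * S.K * ∑ u ∈ Finset.range U, ((1 : ℝ) / 2 ^ u) := by rw [Finset.mul_sum]
      _ ≤ 40 * S.K * 2 := by
          have := hg U
          gcongr
      _ = _ := by ring
  have h7 : ∑ u ∈ Finset.range (U + 1), (13836 : ℝ) / 2 ^ u ≤ 27672 := by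
    have e : ∀ u : ℕ, (13836 : ℝ) / 2 ^ u = 13836 * (1 / 2 ^ u) := fun u => by ring
    simp only [e]
    rw [← Finset.mul_sum]
    linarith [hg (U + 1)]
  nlinarith [mul_le_mul_of_nonneg_left (add_le_add h6 h7) (show 0 ≤ S.K by linarith)]

/-- core bound -/
theorem core : S.α * |TT S.α S.v S.b| ≤ 112658 * S.K ^ 2 * S.τ ^ 3 := by
  have h1 := S.good_part (5 * Fintype.card ι)
  have h2 := S.bad_part
  have hα0 := S.hα0
  have hα1 := S.hα1
  have hK := S.K1
  have ht : 1 ≤ S.τ ^ 3 := one_le_pow₀ S.hτ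
  have e : S.b = (fun i => S.R (S.lev (5 * Fintype.card ι) i) i) +
      (fun i => S.b i - S.R (S.lev (5 * Fintype.card ι) i) i) := by
    funext i; simp
  have h3 : |TT S.α S.v S.b| ≤ |TT S.α S.v (fun i => S.R (S.lev (5 * Fintype.card ι) i) i)| +
      |TT S.α S.v (fun i => S.b i - S.R (S.lev (5 * Fintype.card ι) i) i)| := by
    conv_lhs => rw [e, TT_add]
    exact abs_add_le _ _
  have h4 : S.α * (1 - S.α) * |TT S.α S.v S.b| ≤ 56329 * S.K ^ 2 * S.τ ^ 3 := by
    have h0 : 0 ≤ S.α * (1 - S.α) := mul_nonneg hα0 (by linarith)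
    have a1 := mul_le_mul_of_nonneg_left h3 h0
    have a2 : 27753 * S.K ^ 2 ≤ 27753 * S.K ^ 2 * S.τ ^ 3 := by
      refine le_mul_of_one_le_right (by positivity) ht
    nlinarith
  have h5 : S.α * (1 / 2) * |TT S.α S.v S.b| ≤ S.α * (1 - S.α) * |TT S.α S.v S.b| := by
    gcongr; linarith
  nlinarith

end St
end core4
end
end S4

namespace S4
noncomputable section
section path
variable {E : Type*} [AddCommGroup E] [MeasurableSpace E] [MeasurableAdd₂ E]
variable {ι : Type*} [Fintype ι] [DecidableEq ι] {κ : Type*} [Fintype κ] [DecidableEq κ]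

/-- operator norm at most `c` -/
def NB (u : OA E) (c : ℝ) : Prop :=
  ∀ (g : BM E) (M : ℝ), (∀ x, |g.1 x| ≤ M) → ∀ x, |(u • g).1 x| ≤ c * M

theorem IsPr.nb {u : OA E} (hu : IsPr u) : NB u 1 := fun g M h x => by
  rw [one_mul]; exact hu.abs_le h x

theorem NB.add {u v : OA E} {a b : ℝ} (hu : NB u a) (hv : NB v b) : NB (u + v) (a + b) :=
  fun g M h x => by
    rw [add_smul, BM.add_apply, add_mul]
    exact (abs_add_le _ _).trans (add_le_add (hu g M h x) (hv g M h x))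

theorem NB.neg {u : OA E} {a : ℝ} (hu : NB u a) : NB (-u) a :=
  fun g M h x => by
    rw [neg_smul, BM.neg_apply, abs_neg]
    exact hu g M h x

theorem NB.sub {u v : OA E} {a b : ℝ} (hu : NB u a) (hv : NB v b) : NB (u - v) (a + b) := by
  rw [sub_eq_add_neg]; exact hu.add hv.neg

theorem NB.mul {u v : OA E} {a b : ℝ} (hu : NB u a) (hv : NB v b) : NB (u * v) (a * b) :=
  fun g M h x => by
    rw [mul_smul, mul_assoc]
    exact hu _ _ (fun x => hv g M h x) x

theorem NB.smul {u : OA E} {a c : ℝ} (hu : NB u a) (hc : 0 ≤ c) : NB (c • u) (c * a) :=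
  fun g M h x => by
    rw [smul_assoc, BM.smul_apply, abs_mul, abs_of_nonneg hc, mul_assoc]
    exact mul_le_mul_of_nonneg_left (hu g M h x) hc

theorem NB.zero : NB (0 : OA E) 0 := fun g M h x => by
  rw [zero_smul, BM.zero_apply]; simp

theorem NB.sum {J : Type*} (s : Finset J) (u : J → OA E) (a : J → ℝ) (h : ∀ j ∈ s, NB (u j) (a j)) :
    NB (∑ j ∈ s, u j) (∑ j ∈ s, a j) := by
  classical
  induction s using Finset.induction_on with
  | empty => simpa using NB.zero
  | insert j s hj ih =>
    rw [Finset.sum_insert hj, Finset.sum_insert hj]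
    exact (h j (Finset.mem_insert_self _ _)).add
      (ih fun i hi => h i (Finset.mem_insert_of_mem hi))

theorem NB.prod_sub {J : Type*} (s : Finset J) (u v : J → OA E) (a : ℝ)
    (hu : ∀ j ∈ s, IsPr (u j)) (hv : ∀ j ∈ s, IsPr (v j)) (h : ∀ j ∈ s, NB (u j - v j) a) :
    NB (∏ j ∈ s, u j - ∏ j ∈ s, v j) (s.card * a) := by
  classical
  induction s using Finset.induction_on with
  | empty => simpa using NB.zero
  | insert j s hj ih =>
    rw [Finset.prod_insert hj, Finset.prod_insert hj, Finset.card_insert_of_notMem hj]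
    have h1 := ih (fun i hi => hu i (Finset.mem_insert_of_mem hi))
      (fun i hi => hv i (Finset.mem_insert_of_mem hi))
      (fun i hi => h i (Finset.mem_insert_of_mem hi))
    have h2 := (hu j (Finset.mem_insert_self _ _)).nb.mul h1
    have h3 := (h j (Finset.mem_insert_self _ _)).mul
      (IsPr.prod s v fun i hi => hv i (Finset.mem_insert_of_mem hi)).nb
    have h4 := h2.add h3
    have e : u j * (∏ j ∈ s, u j - ∏ j ∈ s, v j) + (u j - v j) * ∏ j ∈ s, v j =
        u j * ∏ j ∈ s, u j - v j * ∏ j ∈ s, v j := by ring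
    rw [e] at h4
    have e2 : 1 * (s.card * a) + a * 1 = ((s.card + 1 : ℕ) : ℝ) * a := by push_cast; ring
    rwa [e2] at h4

theorem NB.pow_sub {u v : OA E} {a : ℝ} (hu : IsPr u) (hv : IsPr v) (h : NB (u - v) a) (L : ℕ) :
    NB (u ^ L - v ^ L) (L * a) := by
  have := NB.prod_sub (Finset.range L) (fun _ => u) (fun _ => v) a (fun _ _ => hu)
    (fun _ _ => hv) (fun _ _ => h)
  simpa using this

theorem Uc_eq (α : ℝ) (v : OA E) : Uc α v = 1 + α • (v - 1) := by
  rw [Uc, sub_smul, smul_sub, one_smul]; abel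

theorem nb_d {v : OA E} (hv : IsPr v) : NB (v - 1) 2 := by
  have := hv.nb.sub IsPr.one.nb
  norm_num at this
  exact this

theorem err_nb (s : Finset ι) (v : ι → OA E) (hv : ∀ i, IsPr (v i)) {α η : ℝ} (hα : 0 ≤ α)
    (hη : 0 ≤ η) (h1 : α + η ≤ 1) :
    NB (∏ i ∈ s, Uc (α + η) (v i) - ∏ i ∈ s, Uc α (v i) -
      η • ∑ i ∈ s, (v i - 1) * ∏ j ∈ s.erase i, Uc α (v j)) (2 * (s.card : ℝ) ^ 2 * η ^ 2) := by
  induction s using Finset.induction_on with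
  | empty => simpa using NB.zero
  | insert a s ha ih =>
    rw [Finset.prod_insert ha, Finset.prod_insert ha, Finset.sum_insert ha,
      Finset.erase_insert ha, Finset.card_insert_of_notMem ha]
    have e1 : ∑ i ∈ s, (v i - 1) * ∏ j ∈ (insert a s).erase i, Uc α (v j) =
        Uc α (v a) * ∑ i ∈ s, (v i - 1) * ∏ j ∈ s.erase i, Uc α (v j) := by
      rw [Finset.mul_sum]
      refine Finset.sum_congr rfl fun i hi => ?_
      have hia : a ≠ i := fun h => ha (h ▸ hi)
      rw [Finset.erase_insert_of_ne hia, Finset.prod_insert (fun h => ha (Finset.mem_of_mem_erase h))]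
      ring
    rw [e1]
    set A := ∏ i ∈ s, Uc α (v i)
    set B := ∑ i ∈ s, (v i - 1) * ∏ j ∈ s.erase i, Uc α (v j) with hB
    set P := ∏ i ∈ s, Uc (α + η) (v i)
    have e2 : Uc (α + η) (v a) = Uc α (v a) + η • (v a - 1) := by
      rw [Uc_eq, Uc_eq, add_smul]; abel
    have nB : NB B (s.card * 2) := by
      have := NB.sum s (fun i => (v i - 1) * ∏ j ∈ s.erase i, Uc α (v j)) (fun _ => 2 * 1)
        (fun i _ => (nb_d (hv i)).mul (IsPr.prod _ _ fun j _ =>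
          isPr_Uc (hv j) hα (by linarith)).nb)
      simpa [mul_comm] using this
    have h2 := (isPr_Uc (hv a) (show 0 ≤ α + η by linarith) h1).nb.mul ih
    have h3 := ((nb_d (hv a)).mul nB).smul (show 0 ≤ η ^ 2 by positivity)
    have h4 := h2.add h3
    have e3 : Uc (α + η) (v a) * (P - A - η • B) + η ^ 2 • ((v a - 1) * B) =
        Uc (α + η) (v a) * P - Uc α (v a) * A - η • ((v a - 1) * A + Uc α (v a) * B) := by
      have : Uc α (v a) = Uc (α + η) (v a) - η • (v a - 1) := by rw [e2]; abel
      rw [this]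
      simp only [Algebra.smul_def, map_pow]
      ring
    rw [e3] at h4
    intro g M hM x
    refine (h4 g M hM x).trans ?_
    have hM0 : 0 ≤ M := (abs_nonneg _).trans (hM x)
    refine mul_le_mul_of_nonneg_right ?_ hM0
    push_cast
    nlinarith [sq_nonneg η]

theorem step (v : ι → OA E) (hv : ∀ i, IsPr (v i)) {α η : ℝ} (hα : 0 ≤ α)
    (hη : 0 ≤ η) (h1 : α + η ≤ 1) {W : OA E} (hW : IsPr W) (g : BM E) (hg : ∀ x, |g.1 x| ≤ 1) :
    |((W * Ub v η * ∏ i, Uc α (v i)) • g).1 0 - ((W * ∏ i, Uc (α + η) (v i)) • g).1 0| ≤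
      η * (α * |TT α v (fun i => (v i - 1) • W • g)|) + 2 * (Fintype.card ι : ℝ) ^ 2 * η ^ 2 := by
  set Er := ∏ i, Uc (α + η) (v i) - ∏ i, Uc α (v i) -
      η • ∑ i, (v i - 1) * ∏ j ∈ Finset.univ.erase i, Uc α (v j) with hEr
  have nE : NB Er (2 * (Fintype.card ι : ℝ) ^ 2 * η ^ 2) := err_nb Finset.univ v hv hα hη h1
  set A := ∏ i, Uc α (v i) with hA
  set P := ∏ i, Uc (α + η) (v i)
  set S2 := ∑ i, (v i - 1) * ((v i - 1) * ∏ j ∈ Finset.univ.erase i, Uc α (v j)) with hS2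
  have e0 : (∑ i, (v i - 1)) * A =
      ∑ i, (v i - 1) * ∏ j ∈ Finset.univ.erase i, Uc α (v j) + α • S2 := by
    rw [hS2, Finset.sum_mul, Finset.smul_sum, ← Finset.sum_add_distrib]
    refine Finset.sum_congr rfl fun i _ => ?_
    rw [hA, ← Finset.mul_prod_erase _ _ (Finset.mem_univ i), Uc_eq]
    simp only [Algebra.smul_def]
    ring
  have e1 : W * Ub v η * A = W * P + (η * α) • (S2 * W) - W * Er := by
    have : Ub v η * A = A + η • ((∑ i, (v i - 1)) * A) := by
      rw [Ub, add_mul, one_mul, smul_mul_assoc]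
    rw [mul_assoc, this, e0, hEr]
    simp only [Algebra.smul_def, map_mul]
    ring
  have e2 : TT α v (fun i => (v i - 1) • W • g) = ((S2 * W) • g).1 0 := by
    rw [TT, hS2, Finset.sum_mul, Finset.sum_smul, BM.sum_apply]
    refine Finset.sum_congr rfl fun i _ => ?_
    rw [← mul_smul, ← mul_smul]
    congr 2
    ring
  rw [e1, sub_smul, add_smul, BM.sub_apply, BM.add_apply, smul_assoc, BM.smul_apply, ← e2]
  have h2 := (hW.nb.mul nE) g 1 hg 0
  rw [one_mul, mul_one] at h2
  have h3 : |(η * α) * TT α v (fun i => (v i - 1) • W • g)| =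
      η * (α * |TT α v (fun i => (v i - 1) • W • g)|) := by
    rw [abs_mul, abs_of_nonneg (mul_nonneg hη hα), mul_assoc]
  have h4 := abs_sub ((η * α) * TT α v (fun i => (v i - 1) • W • g)) (((W * Er) • g).1 0)
  calc _ = |(η * α) * TT α v (fun i => (v i - 1) • W • g) - ((W * Er) • g).1 0| := by
        congr 1; ring
    _ ≤ _ := by linarith

/-- fourth root -/
def s4 (k : ℕ) : ℝ := Real.sqrt (Real.sqrt k)
theorem s4_pow (k : ℕ) : s4 k ^ 4 = k := by
  rw [s4, show (4 : ℕ) = 2 * 2 by norm_num, pow_mul, Real.sq_sqrt (Real.sqrt_nonneg _),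
    Real.sq_sqrt (Nat.cast_nonneg _)]
theorem s4_nonneg (k : ℕ) : 0 ≤ s4 k := Real.sqrt_nonneg _
theorem s4_pos (k : ℕ) : 0 < s4 (k + 1) := by unfold s4; positivity
theorem s4_mono {k k' : ℕ} (h : k ≤ k') : s4 k ≤ s4 k' := by
  unfold s4
  exact Real.sqrt_le_sqrt (Real.sqrt_le_sqrt (by exact_mod_cast h))

theorem s4_sum (L : ℕ) : ∑ l ∈ Finset.range L, 1 / s4 (l + 1) ^ 3 ≤ 4 * s4 L := by
  induction L with
  | zero => simp [s4_nonneg]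
  | succ L ih =>
    rw [Finset.sum_range_succ]
    have h1 := s4_pos L
    have h2 := s4_nonneg L
    have h3 := s4_mono (Nat.le_succ L)
    have h4 := s4_pow L
    have h5 := s4_pow (L + 1)
    push_cast at h5
    have : 1 / s4 (L + 1) ^ 3 ≤ 4 * (s4 (L + 1) - s4 L) := by
      rw [div_le_iff₀ (by positivity)]
      set a := s4 (L + 1)
      set b := s4 L
      have h3' : b ≤ a := h3
      have q1 : a ^ 2 * b ≤ a ^ 3 := by
        calc a ^ 2 * b ≤ a ^ 2 * a := by gcongr
          _ = _ := by ring
      have q2 : a * b ^ 2 ≤ a ^ 3 := by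
        calc a * b ^ 2 ≤ a * a ^ 2 := by gcongr
          _ = _ := by ring
      have q3 : b ^ 3 ≤ a ^ 3 := by gcongr
      have q : 1 = (a - b) * (a ^ 3 + a ^ 2 * b + a * b ^ 2 + b ^ 3) := by
        have : (a - b) * (a ^ 3 + a ^ 2 * b + a * b ^ 2 + b ^ 3) = a ^ 4 - b ^ 4 := by ring
        rw [this]; linarith
      calc 1 = _ := q
        _ ≤ (a - b) * (4 * a ^ 3) := mul_le_mul_of_nonneg_left (by linarith) (by linarith)
        _ = _ := by ring
    linarith

theorem path (V : ι → Measure E) (hV : ∀ i, IsProbabilityMeasure (V i)) (y : κ → E →+ ℝ)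
    (hy : ∀ k, Measurable (y k)) (c : κ → ℝ) (hκ : 1 ≤ Fintype.card κ) {p : ℝ} (hp : 0 < p)
    (hp1 : p ≤ 1 / 2) (L : ℕ) (hL : 0 < L) (hn : Fintype.card ι * (p / L) ≤ 1 / 2) :
    |((∏ i, Uc p (op (V i))) • ind _ (XX_meas hy c)).1 0 -
      (Ub (fun i => op (V i)) (p / L) ^ L • ind _ (XX_meas hy c)).1 0| ≤
    450632 * (Fintype.card κ : ℝ) ^ 2 * p + L * (2 * (Fintype.card ι : ℝ) ^ 2 * (p / L) ^ 2) := by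
  set g := ind _ (XX_meas hy c) with hg
  set v : ι → OA E := fun i => op (V i) with hv
  set η := p / L with hη
  have hL0 : (0 : ℝ) < L := by exact_mod_cast hL
  have hη0 : 0 < η := by positivity
  have hLη : L * η = p := by rw [hη]; field_simp
  set K := (Fintype.card κ : ℝ) with hK
  have prv : ∀ i, IsPr (v i) := fun i => isPr_op _
  have prU : IsPr (Ub v η) := isPr_Ub prv hη0.le (by linarith)
  have gabs : ∀ x, |g.1 x| ≤ 1 := fun x => abs_le.2
    ⟨by linarith [ind_nonneg (XX_meas hy c) x], ind_le_one (XX_meas hy c) x⟩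
  set P : ℕ → ℝ := fun l => ((Ub v η ^ l * ∏ i, Uc (p - l * η) (v i)) • g).1 0 with hP
  have hstep : ∀ l ∈ Finset.range L, |P (l + 1) - P l| ≤
      η * (112658 * K ^ 2 * (s4 L ^ 3 * (1 / s4 (l + 1) ^ 3))) +
        2 * (Fintype.card ι : ℝ) ^ 2 * η ^ 2 := by
    intro l hl
    have hl' : l + 1 ≤ L := Finset.mem_range.1 hl
    have hlL : (l : ℝ) + 1 ≤ L := by exact_mod_cast hl'
    set α := p - (l + 1) * η with hα
    have hα0 : 0 ≤ α := by
      have : (l + 1) * η ≤ L * η := by gcongr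
      linarith
    have hl0 : 0 < (l + 1) * η := by positivity
    have s1 := s4_pos l
    have s2 := s4_mono hl'
    have s3 := s4_pow (l + 1)
    have s4' := s4_pow L
    push_cast at s3
    let S : St E ι κ :=
      { V := V, hV := hV, η := η, hη := hη0, hη' := hn, l := l, α := α, hα0 := hα0
        hα1 := by linarith
        τ := s4 L / s4 (l + 1)
        hτ := by rw [le_div_iff₀ s1]; linarith
        hατ := by
          have : ((l : ℝ) + 1) * η * (s4 L / s4 (l + 1)) ^ 4 = p := by
            rw [div_pow, s3, s4', ← hLη]; field_simp
          rw [this]; linarith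
        y := y, hy := hy, c := c, hκ := hκ }
    have hcore := S.core
    have hst := step v prv hα0 hη0.le
      (by have := mul_nonneg (Nat.cast_nonneg (α := ℝ) l) hη0.le; linarith) (prU.pow l) g gabs
    have e1 : P (l + 1) = ((Ub v η ^ l * Ub v η * ∏ i, Uc α (v i)) • g).1 0 := by
      simp only [hP, pow_succ]; push_cast; rfl
    have e2 : P l = ((Ub v η ^ l * ∏ i, Uc (α + η) (v i)) • g).1 0 := by
      simp only [hP]
      rw [show p - l * η = α + η by rw [hα]; ring]
    rw [e1, e2]
    refine hst.trans (add_le_add (mul_le_mul_of_nonneg_left ?_ hη0.le) le_rfl)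
    refine (show _ ≤ _ from hcore).trans (le_of_eq ?_)
    show 112658 * K ^ 2 * (s4 L / s4 (l + 1)) ^ 3 = _
    rw [div_pow]; ring
  have e0 : P 0 = ((∏ i, Uc p (v i)) • g).1 0 := by simp [hP]
  have eL : P L = (Ub v η ^ L • g).1 0 := by
    have : ∀ i, Uc 0 (v i) = 1 := fun i => by rw [Uc_eq]; simp
    simp only [hP, hLη, sub_self, this, Finset.prod_const_one, mul_one]
  rw [← e0, ← eL, abs_sub_comm, ← Finset.sum_range_sub]
  refine (Finset.abs_sum_le_sum_abs _ _).trans ((Finset.sum_le_sum hstep).trans ?_)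
  rw [Finset.sum_add_distrib, Finset.sum_const, Finset.card_range, nsmul_eq_mul]
  refine add_le_add ?_ le_rfl
  rw [← Finset.mul_sum, ← Finset.mul_sum, ← Finset.mul_sum]
  have h1 := s4_sum L
  have h2 := s4_nonneg L
  calc η * (112658 * K ^ 2 * (s4 L ^ 3 * ∑ l ∈ Finset.range L, 1 / s4 (l + 1) ^ 3))
      ≤ η * (112658 * K ^ 2 * (s4 L ^ 3 * (4 * s4 L))) := by gcongr
    _ = 450632 * K ^ 2 * (s4 L ^ 4 * η) := by ring
    _ = _ := by rw [s4_pow, hLη]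

end path
end
end S4

namespace S4
noncomputable section
section poisson
variable {E : Type*} [AddCommGroup E] [MeasurableSpace E] [MeasurableAdd₂ E]

instance prob_convPow (μ : Measure E) [IsProbabilityMeasure μ] (k : ℕ) :
    IsProbabilityMeasure (convPow μ k) := by
  induction k with
  | zero => rw [convPow]; infer_instance
  | succ k ih => rw [convPow]; infer_instance

theorem op_convPow (μ : Measure E) [IsProbabilityMeasure μ] (k : ℕ) :
    op (convPow μ k) = op μ ^ k := by
  induction k with
  | zero => rw [pow_zero]; exact op_dirac
  | succ k ih => rw [pow_succ, ← ih]; exact op_mconv _ _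

theorem prob_convProd : ∀ {n : ℕ} (G : Fin n → Measure E) (_ : ∀ i, IsProbabilityMeasure (G i)),
    IsProbabilityMeasure (convProd G)
  | 0, _, _ => by rw [convProd]; infer_instance
  | n + 1, G, h => by
    rw [convProd]
    have := prob_convProd (fun i : Fin n => G i.castSucc) fun i => h _
    have := h (Fin.last n)
    infer_instance

theorem op_convProd : ∀ {n : ℕ} (G : Fin n → Measure E) (hG : ∀ i, IsProbabilityMeasure (G i))
    [IsProbabilityMeasure (convProd G)], op (convProd G) = ∏ i, op (G i)
  | 0, G, _, _ => by
    rw [Finset.univ_eq_empty, Finset.prod_empty]; exact op_dirac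
  | n + 1, G, h, _ => by
    rw [Fin.prod_univ_castSucc]
    have := prob_convProd (fun i : Fin n => G i.castSucc) fun i => h _
    have := h (Fin.last n)
    rw [← op_convProd (fun i : Fin n => G i.castSucc) fun i => h _]
    exact op_mconv _ _

/-- Poisson weights -/
def wP (k : ℕ) : ℝ := Real.exp (-1) * 1 ^ k / k.factorial
/-- binomial weights -/
def wB (L k : ℕ) : ℝ := (L.choose k : ℝ) * (1 / (L : ℝ)) ^ k * (1 - 1 / (L : ℝ)) ^ (L - k)

theorem wP_nonneg (k : ℕ) : 0 ≤ wP k := by unfold wP; positivity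

theorem wP_le (k : ℕ) : wP k ≤ 1 / k.factorial := by
  unfold wP
  rw [one_pow, mul_one]
  gcongr
  rw [Real.exp_le_one_iff]; norm_num

theorem summ_fact : Summable fun k : ℕ => (1 : ℝ) / k.factorial := by
  have := Real.summable_pow_div_factorial 1
  simpa using this

theorem hasSum_wP : HasSum wP 1 := by
  have h := NormedSpace.expSeries_div_hasSum_exp (𝔸 := ℝ) 1
  rw [← Real.exp_eq_exp_ℝ] at h
  have h2 := h.mul_left (Real.exp (-1))
  rw [← Real.exp_add, neg_add_cancel, Real.exp_zero] at h2
  refine h2.congr_fun ?_ 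
  intro k
  unfold wP
  ring

instance prob_cpois (μ : Measure E) [IsProbabilityMeasure μ] :
    IsProbabilityMeasure (cpois 1 μ) := ⟨by
  rw [cpois, Measure.sum_apply _ MeasurableSet.univ]
  simp only [Measure.smul_apply, measure_univ, smul_eq_mul, mul_one]
  have := ENNReal.ofReal_tsum_of_nonneg wP_nonneg hasSum_wP.summable
  rw [hasSum_wP.tsum_eq, ENNReal.ofReal_one] at this
  exact this.symm⟩

theorem cpois_apply (μ : Measure E) [IsProbabilityMeasure μ] (g : BM E) (x : E) :
    HasSum (fun k => wP k * (op μ ^ k • g).1 x) ((op (cpois 1 μ) • g).1 x) := by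
  have h : HasSum (fun k => ∫ y, g.1 (x + y) ∂((ENNReal.ofReal (wP k)) • convPow μ k))
      (∫ y, g.1 (x + y) ∂(cpois 1 μ)) := by
    refine hasSum_integral_measure ?_
    exact g.integrable (cpois 1 μ) x
  rw [op_apply]
  refine h.congr_fun ?_
  intro k
  rw [integral_smul_measure, ENNReal.toReal_ofReal (wP_nonneg k), smul_eq_mul, ← op_convPow,
    op_apply]

theorem wB_nonneg (L k : ℕ) : 0 ≤ wB L k := by
  unfold wB
  rcases Nat.eq_zero_or_pos L with rfl | h
  · simp; positivity
  · have : (1 : ℝ) ≤ L := by exact_mod_cast h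
    have : 1 / (L : ℝ) ≤ 1 := by rw [div_le_one (by linarith)]; exact this
    have : 0 ≤ 1 - 1 / (L : ℝ) := by linarith
    positivity

theorem wB_le {L : ℕ} (h : 0 < L) (k : ℕ) : wB L k ≤ 1 / k.factorial := by
  unfold wB
  have h1 : (1 : ℝ) ≤ L := by exact_mod_cast h
  have h2 : 1 / (L : ℝ) ≤ 1 := by rw [div_le_one (by linarith)]; exact h1
  have h2' : 0 ≤ 1 / (L : ℝ) := by positivity
  have h3 : (1 - 1 / (L : ℝ)) ^ (L - k) ≤ 1 := pow_le_one₀ (by linarith) (by linarith)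
  have h4 := Nat.choose_le_pow_div (α := ℝ) k L
  calc _ ≤ (L.choose k : ℝ) * (1 / (L : ℝ)) ^ k * 1 := by gcongr
    _ ≤ (L ^ k / k.factorial : ℝ) * (1 / (L : ℝ)) ^ k * 1 := by gcongr
    _ = (L : ℝ) ^ k * (1 / (L : ℝ)) ^ k / k.factorial := by ring
    _ = 1 / k.factorial := by
        rw [← mul_pow, mul_one_div_cancel (by positivity), one_pow]

/-- total variation error -/
def eps (L : ℕ) : ℝ := ∑' k, |wP k - wB L k|

theorem summ_eps {L : ℕ} (h : 0 < L) : Summable fun k => |wP k - wB L k| := by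
  refine Summable.of_nonneg_of_le (fun k => abs_nonneg _) (fun k => ?_) (summ_fact.add summ_fact)
  have h1 := wP_le k
  have h2 := wB_le h k
  have h3 := wP_nonneg k
  have h4 := wB_nonneg L k
  rw [abs_le]; constructor <;> linarith

theorem eps_tendsto : Filter.Tendsto eps Filter.atTop (nhds 0) := by
  have h := tendsto_tsum_of_dominated_convergence (𝓕 := Filter.atTop)
    (f := fun L k => |wP k - wB L k|) (g := fun _ => (0 : ℝ))
    (bound := fun k : ℕ => (1 : ℝ) / k.factorial + 1 / k.factorial) (summ_fact.add summ_fact)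
    (fun k => ?_) ?_
  · rw [tsum_zero] at h; exact h
  · have h1 : Filter.Tendsto (fun n : ℕ => (n : ℝ) * (1 / (n : ℝ))) Filter.atTop (nhds 1) := by
      refine tendsto_const_nhds.congr' ?_
      filter_upwards [Filter.eventually_gt_atTop 0] with n hn
      have : (n : ℝ) ≠ 0 := by exact_mod_cast hn.ne'
      field_simp
    have h2 := ProbabilityTheory.tendsto_choose_mul_pow_of_tendsto_mul_atTop k h1
    have h3 : Filter.Tendsto (fun L => |wP k - wB L k|) Filter.atTop (nhds |wP k - wP k|) :=
      (tendsto_const_nhds.sub h2).abs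
    simpa using h3
  · filter_upwards [Filter.eventually_gt_atTop 0] with L hL k
    have h1 := wP_le k
    have h2 := wB_le hL k
    have h3 := wP_nonneg k
    have h4 := wB_nonneg L k
    rw [Real.norm_eq_abs, abs_abs, abs_le]; constructor <;> linarith

theorem nb_cpois (μ : Measure E) [IsProbabilityMeasure μ] {L : ℕ} (hL : 0 < L) :
    NB (op (cpois 1 μ) - Uc (1 / (L : ℝ)) (op μ) ^ L) (eps L) := by
  intro g M hM x
  rw [sub_smul, BM.sub_apply]
  have h1 := cpois_apply μ g x
  have h2 : HasSum (fun k => wB L k * (op μ ^ k • g).1 x)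
      ((Uc (1 / (L : ℝ)) (op μ) ^ L • g).1 x) := by
    have e : Uc (1 / (L : ℝ)) (op μ) ^ L = ∑ k ∈ Finset.range (L + 1), wB L k • op μ ^ k := by
      rw [Uc, add_comm, add_pow]
      refine Finset.sum_congr rfl fun k _ => ?_
      unfold wB
      simp only [Algebra.smul_def, map_mul, map_pow, map_natCast, mul_one]
      ring
    rw [e, Finset.sum_smul, BM.sum_apply]
    have : ∀ k ∈ Finset.range (L + 1), ((wB L k • op μ ^ k) • g).1 x =
        wB L k * (op μ ^ k • g).1 x := fun k _ => by rw [smul_assoc, BM.smul_apply]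
    rw [Finset.sum_congr rfl this]
    refine hasSum_sum_of_ne_finset_zero fun k hk => ?_
    have : L < k := by simpa using hk
    simp [wB, Nat.choose_eq_zero_of_lt this]
  have h3 := h1.sub h2
  have hM0 : 0 ≤ M := (abs_nonneg _).trans (hM x)
  have hb : ∀ k, |wP k * (op μ ^ k • g).1 x - wB L k * (op μ ^ k • g).1 x| ≤
      |wP k - wB L k| * M := by
    intro k
    rw [← sub_mul, abs_mul]
    gcongr
    exact ((isPr_op μ).pow k).abs_le hM x
  have h4 := (summ_eps hL).mul_right M
  rw [← h3.tsum_eq, eps, ← tsum_mul_right, ← Real.norm_eq_abs]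
  exact tsum_of_norm_bounded h4.hasSum hb

end poisson
end
end S4

namespace S4
noncomputable section
section final
variable {E : Type*} [AddCommGroup E] [MeasurableSpace E] [MeasurableAdd₂ E]
variable {κ : Type*} [Fintype κ] [DecidableEq κ]

theorem prob_mix (V : Measure E) [IsProbabilityMeasure V] {a : ℝ} (h0 : 0 ≤ a) (h1 : a ≤ 1) :
    IsProbabilityMeasure (ENNReal.ofReal (1 - a) • Measure.dirac (0 : E) +
      ENNReal.ofReal a • V) := ⟨by
  simp only [Measure.add_apply, Measure.smul_apply, measure_univ, smul_eq_mul, mul_one]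
  rw [← ENNReal.ofReal_add (by linarith) h0]; simp⟩

theorem op_mix (V : Measure E) [IsProbabilityMeasure V] {a : ℝ} (h0 : 0 ≤ a) (h1 : a ≤ 1)
    [IsFiniteMeasure (ENNReal.ofReal (1 - a) • Measure.dirac (0 : E) + ENNReal.ofReal a • V)] :
    op (ENNReal.ofReal (1 - a) • Measure.dirac (0 : E) + ENNReal.ofReal a • V) =
      Uc a (op V) := by
  have i1 : IsFiniteMeasure (ENNReal.ofReal (1 - a) • Measure.dirac (0 : E)) :=
    (Measure.dirac (0 : E)).smul_finite ENNReal.ofReal_ne_top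
  have i2 : IsFiniteMeasure (ENNReal.ofReal a • V) := V.smul_finite ENNReal.ofReal_ne_top
  rw [op_add, op_smul _ (by linarith), op_smul _ h0, op_dirac, Uc]

theorem Uc_Uc (a b : ℝ) (v : OA E) : Uc a (Uc b v) = Uc (a * b) v := by
  rw [Uc_eq, Uc_eq, Uc_eq]
  simp only [Algebra.smul_def, map_mul]
  ring

theorem main_bd {n : ℕ} (V : Fin n → Measure E) (hV : ∀ i, IsProbabilityMeasure (V i))
    (p : Fin n → ℝ) {q : ℝ} (hq : 0 < q) (hq1 : q ≤ 1 / 2) (hp0 : ∀ i, 0 ≤ p i)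
    (hpq : ∀ i, p i ≤ q) (y : κ → E →+ ℝ) (hy : ∀ k, Measurable (y k)) (c : κ → ℝ)
    (hκ : 1 ≤ Fintype.card κ) :
    |(convProd (fun i => ENNReal.ofReal (1 - p i) • Measure.dirac (0 : E) +
        ENNReal.ofReal (p i) • V i)).real (XX y c) -
      (convProd (fun i => cpois 1 (ENNReal.ofReal (1 - p i) • Measure.dirac (0 : E) +
        ENNReal.ofReal (p i) • V i))).real (XX y c)| ≤
      450632 * (Fintype.card κ : ℝ) ^ 2 * q := by
  classical
  set G : Fin n → Measure E := fun i => ENNReal.ofReal (1 - p i) • Measure.dirac (0 : E) +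
        ENNReal.ofReal (p i) • V i with hG
  have hp1 : ∀ i, p i ≤ 1 := fun i => by linarith [hpq i]
  have iG : ∀ i, IsProbabilityMeasure (G i) := fun i => prob_mix (V i) (hp0 i) (hp1 i)
  have iC : ∀ i, IsProbabilityMeasure (cpois 1 (G i)) := fun i => inferInstance
  have iPG := prob_convProd G iG
  have iPC := prob_convProd (fun i => cpois 1 (G i)) iC
  have hr0 : ∀ i, 0 ≤ p i / q := fun i => div_nonneg (hp0 i) hq.le
  have hr1 : ∀ i, p i / q ≤ 1 := fun i => by rw [div_le_one hq]; exact hpq i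
  set V' : Fin n → Measure E := fun i => ENNReal.ofReal (1 - p i / q) • Measure.dirac (0 : E) +
        ENNReal.ofReal (p i / q) • V i with hV'
  have iV' : ∀ i, IsProbabilityMeasure (V' i) := fun i => prob_mix (V i) (hr0 i) (hr1 i)
  have eG : ∀ i, op (G i) = Uc q (op (V' i)) := by
    intro i
    have e1 : op (G i) = Uc (p i) (op (V i)) := op_mix (V i) (hp0 i) (hp1 i)
    have e2 : op (V' i) = Uc (p i / q) (op (V i)) := op_mix (V i) (hr0 i) (hr1 i)
    rw [e1, e2, Uc_Uc, mul_div_cancel₀ _ hq.ne']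
  set g := ind _ (XX_meas hy c) with hg
  have gabs : ∀ x, |g.1 x| ≤ 1 := fun x => abs_le.2
    ⟨by linarith [ind_nonneg (XX_meas hy c) x], ind_le_one (XX_meas hy c) x⟩
  have r1 : (convProd G).real (XX y c) = ((∏ i, Uc q (op (V' i))) • g).1 0 := by
    rw [← Rep.ind (u := op (convProd G)) (fun g x => rfl) (XX_meas hy c), op_convProd G iG]
    simp only [eG]
    rfl
  have r2 : (convProd (fun i => cpois 1 (G i))).real (XX y c) =
      ((∏ i, op (cpois 1 (G i))) • g).1 0 := by
    rw [← Rep.ind (u := op (convProd (fun i => cpois 1 (G i)))) (fun g x => rfl) (XX_meas hy c),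
      op_convProd (fun i => cpois 1 (G i)) iC]
  rw [r1, r2]
  have prv : ∀ i, IsPr (op (V' i)) := fun i => isPr_op _
  have key : ∀ L : ℕ, 0 < L → n * (q / L) ≤ 1 / 2 →
      |((∏ i, Uc q (op (V' i))) • g).1 0 - ((∏ i, op (cpois 1 (G i))) • g).1 0| ≤
      450632 * (Fintype.card κ : ℝ) ^ 2 * q + 4 * (n : ℝ) ^ 2 * q ^ 2 * (1 / L) + n * eps L := by
    intro L hL hn
    have hL0 : (1 : ℝ) ≤ L := by exact_mod_cast hL
    have hη0 : 0 ≤ q / L := by positivity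
    have hη1 : q / L ≤ 1 := by rw [div_le_one (by positivity)]; linarith
    have h1 := path V' iV' y hy c hκ hq hq1 L hL (by simpa using hn)
    have prUb : IsPr (Ub (fun i => op (V' i)) (q / L)) :=
      isPr_Ub prv hη0 (by simp; linarith)
    have prUc : ∀ i, IsPr (Uc (q / L) (op (V' i))) := fun i => isPr_Uc (prv i) hη0 hη1
    have e2 : ∀ i, Uc (1 / (L : ℝ)) (op (G i)) = Uc (q / L) (op (V' i)) := by
      intro i
      rw [eG, Uc_Uc, one_div_mul_eq_div]
    have h2 : NB (∏ i, op (cpois 1 (G i)) - (∏ i, Uc (q / L) (op (V' i))) ^ L) (n * eps L) := by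
      have := NB.prod_sub Finset.univ (fun i => op (cpois 1 (G i)))
        (fun i => Uc (q / L) (op (V' i)) ^ L) (eps L) (fun i _ => isPr_op _)
        (fun i _ => (prUc i).pow L) (fun i _ => by rw [← e2]; exact nb_cpois (G i) hL)
      rw [Finset.prod_pow] at this
      simpa using this
    have h3 : NB (∏ i, Uc (q / L) (op (V' i)) - Ub (fun i => op (V' i)) (q / L))
        (2 * (n : ℝ) ^ 2 * (q / L) ^ 2) := by
      have := err_nb Finset.univ (fun i => op (V' i)) prv (le_refl (0 : ℝ)) hη0 (by linarith)
      have u0 : ∀ i, Uc 0 (op (V' i)) = 1 := fun i => by rw [Uc_eq]; simp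
      simp only [u0, Finset.prod_const_one, mul_one, zero_add, Finset.card_univ,
        Fintype.card_fin] at this
      rw [Ub, ← sub_sub]
      exact this
    have h4 := h3.pow_sub (IsPr.prod _ _ fun i _ => prUc i) prUb L
    have h5 := (h2.add h4) g 1 gabs 0
    rw [sub_add_sub_cancel, sub_smul, BM.sub_apply, mul_one] at h5
    rw [Fintype.card_fin] at h1
    have e6 : (L : ℝ) * (2 * (n : ℝ) ^ 2 * (q / L) ^ 2) = 2 * (n : ℝ) ^ 2 * q ^ 2 * (1 / L) := by
      field_simp
    rw [e6] at h1 h5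
    rw [abs_le] at *
    constructor <;> linarith [h1.1, h1.2, h5.1, h5.2]
  have hlim : Filter.Tendsto (fun L : ℕ => 450632 * (Fintype.card κ : ℝ) ^ 2 * q +
      4 * (n : ℝ) ^ 2 * q ^ 2 * (1 / L) + n * eps L) Filter.atTop
      (nhds (450632 * (Fintype.card κ : ℝ) ^ 2 * q + 4 * (n : ℝ) ^ 2 * q ^ 2 * 0 + n * 0)) :=
    (tendsto_const_nhds.add (tendsto_const_nhds.mul tendsto_one_div_atTop_nhds_zero_nat)).add
      (tendsto_const_nhds.mul eps_tendsto)
  rw [mul_zero, mul_zero, add_zero, add_zero] at hlim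
  refine ge_of_tendsto hlim ?_
  filter_upwards [Filter.eventually_ge_atTop (n + 1)] with L hL
  refine key L (by omega) ?_
  have hL' : (n : ℝ) + 1 ≤ L := by exact_mod_cast hL
  have hn0 : (0 : ℝ) ≤ n := Nat.cast_nonneg n
  have hL0 : (0 : ℝ) < L := by linarith
  rw [← mul_div_assoc, div_le_iff₀ hL0]
  nlinarith

/-- upper half-spaces with extended thresholds -/
theorem half_up {d : ℕ} (t : Euc d) (b : EReal) : ∃ (y : Euc d →+ ℝ) (c : ℝ), Measurable y ∧
    ∀ x, ((⟪x, t⟫ : ℝ) : EReal) ≤ b ↔ y x ≤ c := by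
  induction b using EReal.rec with
  | bot => exact ⟨0, -1, measurable_const, fun x => by simp⟩
  | top => exact ⟨0, 0, measurable_const, fun x => by simp⟩
  | coe r =>
    refine ⟨⟨⟨fun x => ⟪x, t⟫, inner_zero_left _⟩, fun x x' => inner_add_left _ _ _⟩, r, ?_,
      fun x => ?_⟩
    · exact (continuous_id.inner continuous_const).measurable
    · exact EReal.coe_le_coe_iff

/-- lower half-spaces -/
theorem half_lo {d : ℕ} (t : Euc d) (a : EReal) : ∃ (y : Euc d →+ ℝ) (c : ℝ), Measurable y ∧
    ∀ x, a ≤ ((⟪x, t⟫ : ℝ) : EReal) ↔ y x ≤ c := by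
  obtain ⟨y, c, h1, h2⟩ := half_up (-t) (-a)
  refine ⟨y, c, h1, fun x => ?_⟩
  rw [← h2, inner_neg_right, EReal.coe_neg, EReal.neg_le_neg_iff]

theorem poly_XX {d m : ℕ} {X : Set (Euc d)} (hX : X ∈ polyhedra d m) :
    ∃ (y : Fin m × Bool → Euc d →+ ℝ) (c : Fin m × Bool → ℝ), (∀ k, Measurable (y k)) ∧
      X = XX y c := by
  obtain ⟨t, a, b, rfl⟩ := hX
  choose y1 c1 h1 h1' using fun j => half_lo (t j) (a j)
  choose y2 c2 h2 h2' using fun j => half_up (t j) (b j)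
  refine ⟨fun k => if k.2 then y1 k.1 else y2 k.1, fun k => if k.2 then c1 k.1 else c2 k.1, ?_, ?_⟩
  · rintro ⟨j, (_ | _)⟩
    · simpa using h2 j
    · simpa using h1 j
  · ext x
    simp only [XX, Set.mem_setOf_eq, Prod.forall, Bool.forall_bool, h1', h2']
    simp [and_comm]

theorem final {d m n : ℕ} (hm : 0 < m) (hn : 0 < n)
    (p : Fin n → ℝ) (V : Fin n → Measure (Euc d)) (hV : ∀ i, IsProbabilityMeasure (V i))
    (hp0 : ∀ i, 0 ≤ p i) (hp1 : ∀ i, p i ≤ 1) :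
    rhoPoly m
      (convProd (fun i => ENNReal.ofReal (1 - p i) • Measure.dirac (0 : Euc d) +
          ENNReal.ofReal (p i) • V i))
      (convProd (fun i => cpois 1 (ENNReal.ofReal (1 - p i) • Measure.dirac (0 : Euc d) +
          ENNReal.ofReal (p i) • V i))) ≤
      (450632 * (2 * m : ℝ) ^ 2 + 2) * (⨆ i, p i) := by
  have hs0 : 0 ≤ ⨆ i, p i := Real.iSup_nonneg hp0
  have hle : ∀ i, p i ≤ ⨆ i, p i := fun i => le_ciSup (Set.finite_range p).bddAbove i
  set s := ⨆ i, p i with hs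
  set C : ℝ := 450632 * (2 * m : ℝ) ^ 2 + 2 with hC
  have hC0 : 2 ≤ C := by rw [hC]; nlinarith [sq_nonneg (2 * m : ℝ)]
  have hCs : 0 ≤ C * s := mul_nonneg (by linarith) hs0
  have iG := fun i => prob_mix (V i) (hp0 i) (hp1 i)
  have iP1 := prob_convProd _ iG
  have iP2 := prob_convProd (fun i => cpois 1 (ENNReal.ofReal (1 - p i) •
    Measure.dirac (0 : Euc d) + ENNReal.ofReal (p i) • V i)) (fun i => inferInstance)
  rw [rhoPoly]
  refine Real.iSup_le (fun X => Real.iSup_le (fun hX => ?_) hCs) hCs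
  obtain ⟨y, c, hy, rfl⟩ := poly_XX hX
  rcases lt_or_ge s (1 / 2) with h | h
  · refine le_of_forall_pos_le_add fun ε hε => ?_
    set q := min (s + ε / C) (1 / 2) with hq
    have hCpos : 0 < C := by linarith
    have hε' : 0 < ε / C := by positivity
    have hqs : s ≤ q := le_min (by linarith) h.le
    have hq0 : 0 < q := lt_min (by linarith) (by norm_num)
    have hb := main_bd V hV p hq0 (min_le_right _ _) hp0 (fun i => (hle i).trans hqs) y hy c
      (by simp; omega)
    have hcard : (Fintype.card (Fin m × Bool) : ℝ) = 2 * m := by simp [mul_comm]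
    rw [hcard] at hb
    refine hb.trans ?_
    calc 450632 * (2 * m : ℝ) ^ 2 * q ≤ C * (s + ε / C) := by
          gcongr
          · linarith
          · exact min_le_left _ _
      _ = C * s + ε := by field_simp
  · refine le_trans (b := 1) ?_ (by nlinarith)
    rw [abs_le]
    constructor
    · have h1 := measureReal_nonneg (μ := convProd (fun i => ENNReal.ofReal (1 - p i) •
        Measure.dirac (0 : Euc d) + ENNReal.ofReal (p i) • V i)) (s := XX y c)
      have h2 := measureReal_le_one (μ := convProd (fun i => cpois 1 (ENNReal.ofReal (1 - p i) •
        Measure.dirac (0 : Euc d) + ENNReal.ofReal (p i) • V i))) (s := XX y c)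
      simp only [Measure.real] at h1 h2
      linarith
    · have h2 := measureReal_nonneg (μ := convProd (fun i => cpois 1 (ENNReal.ofReal (1 - p i) •
        Measure.dirac (0 : Euc d) + ENNReal.ofReal (p i) • V i))) (s := XX y c)
      have h1 := measureReal_le_one (μ := convProd (fun i => ENNReal.ofReal (1 - p i) •
        Measure.dirac (0 : Euc d) + ENNReal.ofReal (p i) • V i)) (s := XX y c)
      simp only [Measure.real] at h1 h2
      linarith

end final
end
end S4

theorem stmt4 :
    ∃ C : ℕ → ℝ, (∀ m, 0 < C m) ∧
      ∀ (d m n : ℕ), 0 < d → 0 < m → 0 < n →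
        ∀ (p : Fin n → ℝ) (V : Fin n → Measure (Euc d)),
          (∀ i, IsProbabilityMeasure (V i)) → (∀ i, 0 ≤ p i) → (∀ i, p i ≤ 1) →
          rhoPoly m
              (convProd (fun i =>
                ENNReal.ofReal (1 - p i) • Measure.dirac (0 : Euc d) +
                  ENNReal.ofReal (p i) • V i))
              (convProd (fun i => cpois 1
                (ENNReal.ofReal (1 - p i) • Measure.dirac (0 : Euc d) +
                  ENNReal.ofReal (p i) • V i))) ≤
            C m * (⨆ i, p i) := by
  refine ⟨fun m => 450632 * (2 * m : ℝ) ^ 2 + 2, fun m => by positivity, ?_⟩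
  intro d m n hd hm hn p V hV hp0 hp1
  exact S4.final hm hn p V hV hp0 hp1
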